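/- Let γ ≠ 0 be real and fix t ≠ 0. For every u₀ ∈ L²(𝕋) with u₀ ≠ 0, the flow-map of the periodic cubic Schrödinger equation is discontinuous at u₀ as a map from L²(𝕋) equipped with its weak topology into the space of distributions: there exists a sequence u_{0,n} converging weakly to u₀ in L²(𝕋) such that, denoting by u_n and u the solutions with data u_{0,n} and u₀ respectively, there is a smooth 2π-periodic function φ with ∫_𝕋 u_n(t) \bar{φ} dx not converging to ∫_𝕋 u(t) \bar{φ} dx. -/

import Mathlib

/-!
Adding `κ e^{inx}` to the initial data does not change its weak limit as `n → ∞`, but it does change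
the dynamics seen by the low frequencies. The perturbed solution behaves like `f + κ Eₙ`, where
`Eₙ` is a plane wave of frequency `n` with a slowly varying phase, and in the expansion of the cubic
term `|f + κEₙ|²(f + κEₙ)` the term `2κ²f` survives: the limit of the perturbed solutions solves the
equation with the additional linear term `2γκ²f`, whose solution is `e^{2iγκ²t} u(t)`. Choosing `κ`
with `2γκ²t = ±π` (`exists_amplitude`), the perturbed solutions at time `t` converge to `-u(t)` on
every Fourier coefficient, and `-u(t) ≠ u(t)` because solutions with nonzero data do not vanish
(`exists_fc_ne_zero`). A Fourier mode at which `u(t)` has a nonzero coefficient is the test function.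

The limit is justified in `comparison`. The remaining resonant term `κ(κ² + 2μ)Eₙ`, with `2πμ` the
mass of `f`, is absorbed into the phase of `Eₙ`. All other terms of the expansion
(`cubic_expansion`, `remainder`) oscillate off the dispersion curve, so their Duhamel integrals tend
to zero in `L⁴` (`remainder_small`). Since `f` is merely in `L⁴`, only the modes of the coefficient
up to a fixed frequency are treated by the Riemann–Lebesgue lemma (`nonresonant`), the rest being
small by the Strichartz estimate. The error `z = gₙ - f - κEₙ` then solves a linearised equation
with small forcing, and `stability` shows that it vanishes in `L⁴`, hence also on each
Fourier coefficient at the final time. `stability` rests on the retarded Strichartz estimate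
`L^{4/3} → L⁴` (`retarded_strichartz`), which comes from Zygmund's inequality (`zygmund`), duality
and a bisection argument, and on a continuity argument over short time intervals (`bootstrap`).

Distributional solutions enter through Duhamel's formula for each Fourier coefficient
(`duhSol_of_sol`), obtained by testing the equation with functions of the form
`ψ(t) e^{iωt} e^{-ikx}`. Backward times are reduced to forward ones by the sign `σ = ±1` in front of
the dispersion and the nonlinearity.
-/

noncomputable section

open MeasureTheory Filter Real Complex

/-- A `2π`-periodic function belonging to `L²(𝕋)` (via a representative on `(0, 2π]`). -/
def IsPeriodicL2 (v : ℝ → ℂ) : Prop :=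
  Function.Periodic v (2 * π) ∧
  AEStronglyMeasurable v (volume.restrict (Set.Ioc 0 (2 * π))) ∧
  IntegrableOn (fun x => ‖v x‖ ^ 2) (Set.Ioc 0 (2 * π))

/-- Weak convergence in `L²(𝕋)`: convergence of the pairings against every `φ ∈ L²(𝕋)`. -/
def WeakTendstoL2 (v : ℕ → ℝ → ℂ) (w : ℝ → ℂ) : Prop :=
  ∀ φ : ℝ → ℂ, IsPeriodicL2 φ →
    Tendsto (fun n => ∫ x in (0:ℝ)..(2 * π), v n x * (starRingEnd ℂ) (φ x)) atTop
      (nhds (∫ x in (0:ℝ)..(2 * π), w x * (starRingEnd ℂ) (φ x)))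

/-- Partial derivative in time. -/
def pt (φ : ℝ → ℝ → ℂ) (t x : ℝ) : ℂ := deriv (fun s => φ s x) t

/-- Second partial derivative in space. -/
def pxx (φ : ℝ → ℝ → ℂ) (t x : ℝ) : ℂ := deriv (deriv (φ t)) x

/-- A smooth test function on `ℝ × 𝕋` with compact support in time. -/
def IsTestFun (φ : ℝ → ℝ → ℂ) : Prop :=
  ContDiff ℝ (⊤ : ℕ∞) (fun p : ℝ × ℝ => φ p.1 p.2) ∧
  (∀ t, Function.Periodic (φ t) (2 * π)) ∧
  ∃ T > 0, ∀ t x : ℝ, T ≤ |t| → φ t x = 0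

/-- `u ∈ C(ℝ; L²(𝕋)) ∩ L⁴loc(ℝ×𝕋)` is a distributional solution of the periodic cubic
Schrödinger equation `i∂ₜu + ∂ₓₓu + γ|u|²u = 0` with initial data `u₀`. -/
def IsGlobalSolution (γ : ℝ) (u : ℝ → ℝ → ℂ) (u₀ : ℝ → ℂ) : Prop :=
  (∀ t, IsPeriodicL2 (u t)) ∧
  -- `u ∈ C(ℝ; L²(𝕋))`
  (∀ t : ℝ, Tendsto (fun s => ∫ x in (0:ℝ)..(2 * π), ‖u s x - u t x‖ ^ 2)
      (nhds t) (nhds 0)) ∧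
  -- `u ∈ L⁴loc(ℝ×𝕋)`
  (∀ T > (0:ℝ), AEStronglyMeasurable (fun p : ℝ × ℝ => u p.1 p.2)
      (volume.restrict (Set.Ioc (-T) T ×ˢ Set.Ioc 0 (2 * π))) ∧
    IntegrableOn (fun p : ℝ × ℝ => ‖u p.1 p.2‖ ^ 4) (Set.Ioc (-T) T ×ˢ Set.Ioc 0 (2 * π))) ∧
  -- initial data
  (∀ᵐ x ∂(volume.restrict (Set.Ioc (0:ℝ) (2 * π))), u 0 x = u₀ x) ∧
  -- the equation in the distributional sense
  (∀ φ : ℝ → ℝ → ℂ, IsTestFun φ →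
    (∫ t : ℝ, ∫ x in (0:ℝ)..(2 * π),
      (u t x * (-Complex.I * pt φ t x + pxx φ t x)
        + (γ : ℂ) * ((‖u t x‖ ^ 2 : ℝ) : ℂ) * u t x * φ t x)) = 0)

/-! ### Characters of the circle and the Zygmund `L⁴` estimate -/

/-- The character `r ↦ e^{ir}`. -/
def ee (r : ℝ) : ℂ := Complex.exp (r * Complex.I)

@[simp] lemma norm_ee (r : ℝ) : ‖ee r‖ = 1 := Complex.norm_exp_ofReal_mul_I r

@[simp] lemma ee_zero : ee 0 = 1 := by simp [ee]

lemma ee_add (a b : ℝ) : ee (a + b) = ee a * ee b := by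
  simp only [ee, ← Complex.exp_add]; congr 1; push_cast; ring

lemma ee_neg_mul (a : ℝ) : ee (-a) * ee a = 1 := by rw [← ee_add]; simp

lemma ee_mul_neg (a : ℝ) : ee a * ee (-a) = 1 := by rw [← ee_add]; simp

lemma ee_ne_zero (a : ℝ) : ee a ≠ 0 := Complex.exp_ne_zero _

lemma conj_ee (r : ℝ) : (starRingEnd ℂ) (ee r) = ee (-r) := by
  simp only [ee, ← Complex.exp_conj]; congr 1; simp

lemma continuous_ee : Continuous ee := by unfold ee; fun_prop

@[fun_prop] lemma Continuous.ee {X : Type*} [TopologicalSpace X] {f : X → ℝ} (hf : Continuous f) :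
    Continuous (fun x => ee (f x)) := continuous_ee.comp hf

lemma ee_int_mul_two_pi (j : ℤ) : ee (j * (2 * π)) = 1 := by
  unfold ee
  rw [Complex.exp_eq_one_iff]
  exact ⟨j, by push_cast; ring⟩

lemma hasDerivAt_ee_comp {f : ℝ → ℝ} {f' x : ℝ} (hf : HasDerivAt f f' x) :
    HasDerivAt (fun y => ee (f y)) (Complex.I * f' * ee (f x)) x := by
  unfold ee
  have h := (((hf.ofReal_comp).mul_const Complex.I)).cexp
  convert h using 1; ring

/-- The space-time rectangle `(a, b] × (0, 2π]`. -/
def strip (a b : ℝ) : Set (ℝ × ℝ) := Set.Ioc a b ×ˢ Set.Ioc 0 (2 * π)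

/-- Lebesgue measure on `(a, b] × (0, 2π]`. -/
def sm (a b : ℝ) : Measure (ℝ × ℝ) := volume.restrict (strip a b)

lemma measurableSet_strip (a b : ℝ) : MeasurableSet (strip a b) :=
  measurableSet_Ioc.prod measurableSet_Ioc

lemma sm_eq_prod (a b : ℝ) : sm a b =
    (volume.restrict (Set.Ioc a b)).prod (volume.restrict (Set.Ioc 0 (2 * π))) := by
  rw [Measure.prod_restrict]; rfl

instance (a b : ℝ) : IsFiniteMeasure (sm a b) := by
  rw [sm_eq_prod]; infer_instance

lemma strip_subset {a b c d : ℝ} (h1 : c ≤ a) (h2 : b ≤ d) : strip a b ⊆ strip c d :=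
  Set.prod_mono (Set.Ioc_subset_Ioc h1 h2) le_rfl

lemma sm_mono {a b c d : ℝ} (h1 : c ≤ a) (h2 : b ≤ d) : sm a b ≤ sm c d :=
  Measure.restrict_mono (strip_subset h1 h2) le_rfl

lemma sm_add {a b c : ℝ} (h1 : a ≤ b) (h2 : b ≤ c) : sm a c = sm a b + sm b c := by
  unfold sm
  rw [← Measure.restrict_union _ (measurableSet_strip b c)]
  · congr 1
    rw [strip, strip, strip, ← Set.union_prod, Set.Ioc_union_Ioc_eq_Ioc h1 h2]
  · rw [strip, strip, Set.disjoint_prod]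
    left
    exact Set.Ioc_disjoint_Ioc_of_le le_rfl

lemma integral_ee_mul (j : ℤ) (M : ℕ) :
    ∫ x in Set.Ioc (0:ℝ) (2 * π * M), ee (j * x) = if j = 0 then ((2 * π * M : ℝ) : ℂ) else 0 := by
  have hM : (0:ℝ) ≤ 2 * π * M := by positivity
  rw [← intervalIntegral.integral_of_le hM]
  split_ifs with h
  · simp [h]
  · have hc : ((j:ℂ) * Complex.I) ≠ 0 := mul_ne_zero (by exact_mod_cast h) Complex.I_ne_zero
    have : ∀ x : ℝ, ee (j * x) = Complex.exp (((j:ℂ) * Complex.I) * x) := by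
      intro x; unfold ee; congr 1; push_cast; ring
    simp only [this]
    rw [integral_exp_mul_complex hc]
    have h1 : Complex.exp (((j:ℂ) * Complex.I) * ((2 * π * M : ℝ):ℂ)) = 1 := by
      rw [Complex.exp_eq_one_iff]; exact ⟨j * M, by push_cast; ring⟩
    rw [h1]; simp

lemma integral_ee_two_pi (j : ℤ) :
    ∫ x in Set.Ioc (0:ℝ) (2 * π), ee (j * x) = if j = 0 then ((2 * π : ℝ) : ℂ) else 0 := by
  simpa using integral_ee_mul j 1

/-- Orthogonality of the space-time characters on `M` time periods. -/
lemma integral_ee_strip (m n : ℤ) (M : ℕ) :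
    ∫ p, ee (m * p.2 + n * p.1) ∂(sm 0 (2 * π * M)) =
      if m = 0 ∧ n = 0 then (((2 * π) ^ 2 * M : ℝ) : ℂ) else 0 := by
  rw [sm_eq_prod]
  have : ∀ p : ℝ × ℝ, ee (m * p.2 + n * p.1) = ee (n * p.1) * ee (m * p.2) := by
    intro p; rw [ee_add, mul_comm]
  simp only [this]
  rw [integral_prod_mul (fun t : ℝ => ee (n * t)) (fun x : ℝ => ee (m * x)),
    integral_ee_two_pi, integral_ee_mul]
  split_ifs <;> simp_all
  ring

lemma integrable_ee_strip (a b : ℝ) (m n : ℝ) :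
    Integrable (fun p : ℝ × ℝ => ee (m * p.2 + n * p.1)) (sm a b) :=
  Integrable.of_bound (C := 1) (by fun_prop) (by simp)

/-- The arithmetic of the resonances of the one-dimensional Schrödinger equation: two integers are
determined, up to order, by their sum and their sum of squares. -/
lemma resonance {k l k' l' : ℤ} (h1 : k - l + k' - l' = 0)
    (h2 : k ^ 2 - l ^ 2 + k' ^ 2 - l' ^ 2 = 0) : (k = l ∧ k' = l') ∨ (k = l' ∧ k' = l) := by
  have h3 : (k - l) * (k - l') = 0 := by
    have : k' = l + l' - k := by linarith
    subst this; nlinarith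
  rcases mul_eq_zero.mp h3 with h | h
  · left; constructor <;> linarith
  · right; constructor <;> linarith

/-- Zygmund's `L⁴` Strichartz estimate for the free Schrödinger group on the circle. -/
lemma zygmund {σ : ℝ} (hσ : σ = 1 ∨ σ = -1) (M : ℕ) (S : Finset ℤ) (a : ℤ → ℂ) :
    ∫ p, ‖∑ k ∈ S, a k * ee (k * p.2 - σ * k ^ 2 * p.1)‖ ^ 4 ∂(sm 0 (2 * π * M)) ≤
      2 * ((2 * π) ^ 2 * M) * (∑ k ∈ S, ‖a k‖ ^ 2) ^ 2 := by
  obtain ⟨τ, hτ, hτ1⟩ : ∃ τ : ℤ, σ = τ ∧ τ ≠ 0 := by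
    rcases hσ with h | h
    · exact ⟨1, by simp [h], by norm_num⟩
    · exact ⟨-1, by simp [h], by norm_num⟩
  subst hτ
  set c : ℤ → ℤ → ℤ → ℤ → ℂ := fun k l k' l' =>
    a k * (starRingEnd ℂ) (a l) * (a k' * (starRingEnd ℂ) (a l')) with hc
  have key : ∀ p : ℝ × ℝ, ((‖∑ k ∈ S, a k * ee (k * p.2 - τ * k ^ 2 * p.1)‖ ^ 4 : ℝ) : ℂ) =
      ∑ k ∈ S, ∑ l ∈ S, ∑ k' ∈ S, ∑ l' ∈ S, c k l k' l' *
        ee (((k - l + k' - l' : ℤ) : ℝ) * p.2 +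
          ((-τ * (k ^ 2 - l ^ 2 + k' ^ 2 - l' ^ 2) : ℤ) : ℝ) * p.1) := by
    intro p
    set f := ∑ k ∈ S, a k * ee (k * p.2 - τ * k ^ 2 * p.1) with hf
    have h1 : ((‖f‖ ^ 4 : ℝ) : ℂ) = (f * (starRingEnd ℂ) f) * (f * (starRingEnd ℂ) f) := by
      rw [Complex.mul_conj, Complex.normSq_eq_norm_sq]; push_cast; ring
    have h2 : f * (starRingEnd ℂ) f = ∑ k ∈ S, ∑ l ∈ S, a k * (starRingEnd ℂ) (a l) *
        ee ((k * p.2 - τ * k ^ 2 * p.1) + -(l * p.2 - τ * l ^ 2 * p.1)) := by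
      rw [hf, map_sum, Finset.sum_mul_sum]
      refine Finset.sum_congr rfl fun k _ => Finset.sum_congr rfl fun l _ => ?_
      rw [map_mul, conj_ee, ee_add]; ring
    rw [h1, h2, Finset.sum_mul]
    refine Finset.sum_congr rfl fun k _ => ?_
    rw [Finset.sum_mul]
    refine Finset.sum_congr rfl fun l _ => ?_
    rw [Finset.mul_sum]
    refine Finset.sum_congr rfl fun k' _ => ?_
    rw [Finset.mul_sum]
    refine Finset.sum_congr rfl fun l' _ => ?_
    rw [hc, mul_mul_mul_comm, ← ee_add]
    congr 2
    push_cast; ring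
  have hint : ((∫ p, ‖∑ k ∈ S, a k * ee (k * p.2 - τ * k ^ 2 * p.1)‖ ^ 4
      ∂(sm 0 (2 * π * M)) : ℝ) : ℂ) = ∑ k ∈ S, ∑ l ∈ S, ∑ k' ∈ S, ∑ l' ∈ S, c k l k' l' *
        (if k - l + k' - l' = 0 ∧ -τ * (k ^ 2 - l ^ 2 + k' ^ 2 - l' ^ 2) = 0
          then (((2 * π) ^ 2 * M : ℝ) : ℂ) else 0) := by
    rw [← integral_complex_ofReal]
    simp only [key]
    rw [integral_finsetSum]
    swap
    · intro k _
      refine integrable_finsetSum _ fun l _ => integrable_finsetSum _ fun k' _ =>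
        integrable_finsetSum _ fun l' _ => (integrable_ee_strip _ _ _ _).const_mul _
    refine Finset.sum_congr rfl fun k _ => ?_
    rw [integral_finsetSum]
    swap
    · intro l _
      refine integrable_finsetSum _ fun k' _ =>
        integrable_finsetSum _ fun l' _ => (integrable_ee_strip _ _ _ _).const_mul _
    refine Finset.sum_congr rfl fun l _ => ?_
    rw [integral_finsetSum]
    swap
    · intro k' _
      refine integrable_finsetSum _ fun l' _ => (integrable_ee_strip _ _ _ _).const_mul _
    refine Finset.sum_congr rfl fun k' _ => ?_
    rw [integral_finsetSum]
    swap
    · intro l' _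
      exact (integrable_ee_strip _ _ _ _).const_mul _
    refine Finset.sum_congr rfl fun l' _ => ?_
    rw [integral_const_mul, integral_ee_strip]
  set K : ℝ := (2 * π) ^ 2 * M with hK
  have hK0 : 0 ≤ K := by positivity
  set I := ∫ p, ‖∑ k ∈ S, a k * ee (k * p.2 - τ * k ^ 2 * p.1)‖ ^ 4 ∂(sm 0 (2 * π * M)) with hI
  have hI0 : 0 ≤ I := integral_nonneg fun p => by positivity
  have hIn : I = ‖(I : ℂ)‖ := by simp [abs_of_nonneg hI0]
  -- only the resonant quadruples survive, and they are of the two trivial types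
  have hterm : ∀ k l k' l' : ℤ, ‖c k l k' l' *
        (if k - l + k' - l' = 0 ∧ -τ * (k ^ 2 - l ^ 2 + k' ^ 2 - l' ^ 2) = 0
          then (K : ℂ) else 0)‖ ≤
      K * ((if k = l then (if k' = l' then ‖a k‖ ^ 2 * ‖a k'‖ ^ 2 else 0) else 0) +
        (if k = l' then (if k' = l then ‖a k‖ ^ 2 * ‖a k'‖ ^ 2 else 0) else 0)) := by
    intro k l k' l'
    have hpos1 : 0 ≤ (if k = l then (if k' = l' then ‖a k‖ ^ 2 * ‖a k'‖ ^ 2 else 0) else 0) := by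
      split_ifs <;> positivity
    have hpos2 : 0 ≤ (if k = l' then (if k' = l then ‖a k‖ ^ 2 * ‖a k'‖ ^ 2 else 0) else 0) := by
      split_ifs <;> positivity
    by_cases h : k - l + k' - l' = 0 ∧ -τ * (k ^ 2 - l ^ 2 + k' ^ 2 - l' ^ 2) = 0
    · rw [if_pos h]
      have h2 : k ^ 2 - l ^ 2 + k' ^ 2 - l' ^ 2 = 0 := by
        rcases mul_eq_zero.mp h.2 with h' | h'
        · exact absurd (neg_eq_zero.mp h') hτ1
        · exact h'
      have hn : ‖c k l k' l' * (K : ℂ)‖ = K * (‖a k‖ * ‖a l‖ * (‖a k'‖ * ‖a l'‖)) := by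
        simp [hc, abs_of_nonneg hK0]; ring
      rw [hn]
      refine mul_le_mul_of_nonneg_left ?_ hK0
      rcases resonance h.1 h2 with ⟨h3, h4⟩ | ⟨h3, h4⟩
      · subst h3; subst h4
        simp only [if_true] at *
        nlinarith
      · subst h3; subst h4
        simp only [if_true] at *
        nlinarith
    · rw [if_neg h, mul_zero, norm_zero]
      positivity
  calc I = ‖(I : ℂ)‖ := hIn
    _ ≤ ∑ k ∈ S, ∑ l ∈ S, ∑ k' ∈ S, ∑ l' ∈ S,
      K * ((if k = l then (if k' = l' then ‖a k‖ ^ 2 * ‖a k'‖ ^ 2 else 0) else 0) +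
        (if k = l' then (if k' = l then ‖a k‖ ^ 2 * ‖a k'‖ ^ 2 else 0) else 0)) := by
        rw [hint]
        refine norm_sum_le_of_le _ fun k _ => norm_sum_le_of_le _ fun l _ =>
          norm_sum_le_of_le _ fun k' _ => norm_sum_le_of_le _ fun l' _ => hterm k l k' l'
    _ = 2 * K * (∑ k ∈ S, ‖a k‖ ^ 2) ^ 2 := by
        simp only [← Finset.mul_sum, Finset.sum_add_distrib]
        have e1 : ∑ k ∈ S, ∑ l ∈ S, ∑ k' ∈ S, ∑ l' ∈ S,
            (if k = l then (if k' = l' then ‖a k‖ ^ 2 * ‖a k'‖ ^ 2 else 0) else 0) =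
            (∑ k ∈ S, ‖a k‖ ^ 2) ^ 2 := by
          rw [sq, Finset.sum_mul_sum]
          refine Finset.sum_congr rfl fun k hk => ?_
          rw [Finset.sum_eq_single k]
          · refine Finset.sum_congr rfl fun k' hk' => ?_
            simp [hk']
          · intro l _ hl; simp [Ne.symm hl]
          · intro h; exact absurd hk h
        have e2 : ∑ k ∈ S, ∑ l ∈ S, ∑ k' ∈ S, ∑ l' ∈ S,
            (if k = l' then (if k' = l then ‖a k‖ ^ 2 * ‖a k'‖ ^ 2 else 0) else 0) =
            (∑ k ∈ S, ‖a k‖ ^ 2) ^ 2 := by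
          rw [sq, Finset.sum_mul_sum]
          refine Finset.sum_congr rfl fun k hk => ?_
          refine Finset.sum_congr rfl fun l hl => ?_
          rw [Finset.sum_eq_single l]
          · simp [hk]
          · intro k' _ hk'; simp [hk']
          · intro h; exact absurd hl h
        rw [e1, e2]; ring

/-! ### Norms with the dual exponents `4` and `4/3` -/

/-- The exponent `4/3`, dual to `4`. -/
def q43 : ENNReal := ENNReal.ofReal (4 / 3)

lemma one_le_q43 : 1 ≤ q43 := by
  unfold q43; rw [ENNReal.one_le_ofReal]; norm_num

lemma q43_ne_zero : q43 ≠ 0 := (lt_of_lt_of_le one_pos one_le_q43).ne'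

lemma q43_ne_top : q43 ≠ ⊤ := ENNReal.ofReal_ne_top

lemma q43_toReal : q43.toReal = 4 / 3 := ENNReal.toReal_ofReal (by norm_num)

lemma ofReal_four : ENNReal.ofReal 4 = 4 := by simp

lemma q43_le_two : q43 ≤ 2 := by
  have : (2 : ENNReal) = ENNReal.ofReal 2 := by simp
  rw [this]; exact ENNReal.ofReal_le_ofReal (by norm_num)

instance holderTriple_four_four_two : ENNReal.HolderTriple 4 4 2 := by
  constructor
  have h4 : (4 : ENNReal)⁻¹ = ENNReal.ofReal (1 / 4) := by
    rw [← ofReal_four, ← ENNReal.ofReal_inv_of_pos (by norm_num)]; norm_num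
  have h2 : (2 : ENNReal)⁻¹ = ENNReal.ofReal (1 / 2) := by
    have : (2 : ENNReal) = ENNReal.ofReal 2 := by simp
    rw [this, ← ENNReal.ofReal_inv_of_pos (by norm_num)]; norm_num
  rw [h4, h2, ← ENNReal.ofReal_add (by norm_num) (by norm_num)]; norm_num

instance holderTriple_four_two_q43 : ENNReal.HolderTriple 2 4 q43 := by
  constructor
  have h4 : (4 : ENNReal)⁻¹ = ENNReal.ofReal (1 / 4) := by
    rw [← ofReal_four, ← ENNReal.ofReal_inv_of_pos (by norm_num)]; norm_num
  have h2 : (2 : ENNReal)⁻¹ = ENNReal.ofReal (1 / 2) := by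
    have : (2 : ENNReal) = ENNReal.ofReal 2 := by simp
    rw [this, ← ENNReal.ofReal_inv_of_pos (by norm_num)]; norm_num
  unfold q43
  rw [h4, h2, ← ENNReal.ofReal_add (by norm_num) (by norm_num),
    ← ENNReal.ofReal_inv_of_pos (by norm_num)]
  norm_num

section general
variable {α : Type*} [MeasurableSpace α] {μ ν : Measure α} {f g h : α → ℂ}

lemma lpNorm_mono_meas {p : ENNReal} (hf : MemLp f p ν) (hμ : μ ≤ ν) :
    lpNorm f p μ ≤ lpNorm f p ν := by
  rw [← toReal_eLpNorm hf.1, ← toReal_eLpNorm (hf.1.mono_measure hμ)]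
  exact ENNReal.toReal_mono hf.2.ne (eLpNorm_mono_measure f hμ)

lemma lpNorm_mono_ae' {β : Type*} [NormedAddCommGroup β] {G : α → β} {p : ENNReal}
    (hf : AEStronglyMeasurable f μ) (hG : MemLp G p μ)
    (hfG : ∀ᵐ x ∂μ, ‖f x‖ ≤ ‖G x‖) : lpNorm f p μ ≤ lpNorm G p μ := by
  rw [← toReal_eLpNorm hf, ← toReal_eLpNorm hG.1]
  exact ENNReal.toReal_mono hG.2.ne (eLpNorm_mono_ae hfG)

lemma lpNorm_four_pow (hf : MemLp f 4 μ) : lpNorm f 4 μ ^ 4 = ∫ x, ‖f x‖ ^ 4 ∂μ := by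
  rw [lpNorm_eq_integral_norm_rpow_toReal (by norm_num) (by norm_num) hf.1]
  have h0 : 0 ≤ ∫ x, ‖f x‖ ^ (4 : ENNReal).toReal ∂μ := integral_nonneg fun x => by positivity
  rw [← Real.rpow_natCast, ← Real.rpow_mul h0]
  simp only [ENNReal.toReal_ofNat]
  norm_num

lemma lpNorm_q43_rpow (hf : MemLp f q43 μ) :
    lpNorm f q43 μ ^ (4 / 3 : ℝ) = ∫ x, ‖f x‖ ^ (4 / 3 : ℝ) ∂μ := by
  rw [lpNorm_eq_integral_norm_rpow_toReal q43_ne_zero q43_ne_top hf.1]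
  have h0 : 0 ≤ ∫ x, ‖f x‖ ^ q43.toReal ∂μ := integral_nonneg fun x => by positivity
  rw [← Real.rpow_mul h0, q43_toReal]
  norm_num

lemma lpNorm_q43_pow_four (hf : MemLp f q43 μ) :
    lpNorm f q43 μ ^ 4 = (∫ x, ‖f x‖ ^ (4 / 3 : ℝ) ∂μ) ^ 3 := by
  rw [← lpNorm_q43_rpow hf, ← Real.rpow_natCast _ 3, ← Real.rpow_mul lpNorm_nonneg,
    ← Real.rpow_natCast]
  norm_num

lemma integrable_norm_four (hf : MemLp f 4 μ) : Integrable (fun x => ‖f x‖ ^ 4) μ := by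
  have := hf.integrable_norm_rpow (by norm_num) (by norm_num)
  refine this.congr (ae_of_all _ fun x => ?_)
  simp only [ENNReal.toReal_ofNat]
  exact_mod_cast Real.rpow_natCast ‖f x‖ 4

lemma memLp_four_iff (hf : AEStronglyMeasurable f μ) :
    MemLp f 4 μ ↔ Integrable (fun x => ‖f x‖ ^ 4) μ := by
  refine ⟨integrable_norm_four, fun h => ?_⟩
  rw [← integrable_norm_rpow_iff hf (by norm_num) (by norm_num)]
  refine h.congr (ae_of_all _ fun x => ?_)
  simp only [ENNReal.toReal_ofNat]
  exact_mod_cast (Real.rpow_natCast ‖f x‖ 4).symm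

lemma integrable_norm_q43 (hf : MemLp f q43 μ) :
    Integrable (fun x => ‖f x‖ ^ (4 / 3 : ℝ)) μ := by
  have := hf.integrable_norm_rpow q43_ne_zero q43_ne_top
  rwa [q43_toReal] at this

lemma holder_q43_four (hf : MemLp f q43 μ) (hg : MemLp g 4 μ) :
    ‖∫ x, f x * g x ∂μ‖ ≤ lpNorm f q43 μ * lpNorm g 4 μ := by
  have hpq : (4 / 3 : ℝ).HolderConjugate 4 := by
    rw [Real.holderConjugate_iff]; norm_num
  have h := integral_mul_norm_le_Lp_mul_Lq hpq hf (by rw [ofReal_four]; exact hg)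
  rw [lpNorm_eq_integral_norm_rpow_toReal q43_ne_zero q43_ne_top hf.1,
    lpNorm_eq_integral_norm_rpow_toReal (by norm_num) (by norm_num) hg.1, q43_toReal]
  refine (norm_integral_le_integral_norm _).trans ?_
  simp only [norm_mul]
  refine h.trans_eq ?_
  simp

lemma memLp_mul_two (hf : MemLp f 4 μ) (hg : MemLp g 4 μ) : MemLp (fun x => f x * g x) 2 μ :=
  hg.mul hf

lemma memLp_mul_three (hf : MemLp f 4 μ) (hg : MemLp g 4 μ) (hh : MemLp h 4 μ) :
    MemLp (fun x => f x * g x * h x) q43 μ :=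
  MemLp.mul (p := 2) (q := 4) hh (memLp_mul_two hf hg)

lemma lpNorm_mul_three (hf : MemLp f 4 μ) (hg : MemLp g 4 μ) (hh : MemLp h 4 μ) :
    lpNorm (fun x => f x * g x * h x) q43 μ ≤ lpNorm f 4 μ * lpNorm g 4 μ * lpNorm h 4 μ := by
  have h1 : eLpNorm (fun x => f x * g x) 2 μ ≤ eLpNorm f 4 μ * eLpNorm g 4 μ :=
    eLpNorm_smul_le_mul_eLpNorm (p := 4) (q := 4) (r := 2) (f := g) (φ := f) hg.1 hf.1
  have h2 : eLpNorm (fun x => f x * g x * h x) q43 μ ≤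
      eLpNorm (fun x => f x * g x) 2 μ * eLpNorm h 4 μ :=
    eLpNorm_smul_le_mul_eLpNorm (p := 2) (q := 4) (r := q43) (f := h) (φ := fun x => f x * g x)
      hh.1 (memLp_mul_two hf hg).1
  rw [← toReal_eLpNorm hf.1, ← toReal_eLpNorm hg.1, ← toReal_eLpNorm hh.1,
    ← toReal_eLpNorm (memLp_mul_three hf hg hh).1, ← ENNReal.toReal_mul, ← ENNReal.toReal_mul]
  refine ENNReal.toReal_mono ?_ (h2.trans (by gcongr))
  exact ENNReal.mul_ne_top (ENNReal.mul_ne_top hf.2.ne hg.2.ne) hh.2.ne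

lemma lpNorm_le_of_bound [IsFiniteMeasure μ] {C : ℝ}
    (hf : AEStronglyMeasurable f μ) (h : ∀ᵐ x ∂μ, ‖f x‖ ≤ C) :
    MemLp f 4 μ ∧ lpNorm f 4 μ ^ 4 ≤ μ.real Set.univ * C ^ 4 := by
  have hm : MemLp f 4 μ := MemLp.of_bound hf C h
  refine ⟨hm, ?_⟩
  rw [lpNorm_four_pow hm]
  calc ∫ x, ‖f x‖ ^ 4 ∂μ ≤ ∫ _, C ^ 4 ∂μ := by
        refine integral_mono_ae (integrable_norm_four hm) (integrable_const _) ?_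
        filter_upwards [h] with x hx
        exact pow_le_pow_left₀ (norm_nonneg _) hx 4
    _ = _ := by simp

lemma lpNorm_q43_le_two [IsFiniteMeasure μ] (hf : MemLp f 2 μ) :
    lpNorm f q43 μ ≤ (μ.real Set.univ) ^ (1 / 4 : ℝ) * lpNorm f 2 μ := by
  have h := eLpNorm_le_eLpNorm_mul_rpow_measure_univ q43_le_two hf.1
  rw [← toReal_eLpNorm hf.1, ← toReal_eLpNorm hf.1, mul_comm]
  have e : 1 / q43.toReal - 1 / (2 : ENNReal).toReal = 1 / 4 := by
    rw [q43_toReal]; norm_num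
  rw [e] at h
  have := ENNReal.toReal_mono (ENNReal.mul_ne_top hf.2.ne
    (ENNReal.rpow_ne_top_of_nonneg (by norm_num) (measure_ne_top _ _))) h
  rwa [ENNReal.toReal_mul, ← ENNReal.toReal_rpow] at this

/-- Subadditivity of the `L^{4/3}` norm over consecutive time intervals, used to bound it on a union
of two such intervals in the continuity argument. -/
lemma lpNorm_q43_add_measure (hf : MemLp f q43 (μ + ν)) :
    lpNorm f q43 (μ + ν) ≤ lpNorm f q43 μ + lpNorm f q43 ν := by
  have h1 : MemLp f q43 μ := hf.mono_measure (Measure.le_add_right le_rfl)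
  have h2 : MemLp f q43 ν := hf.mono_measure (Measure.le_add_left le_rfl)
  have h := Real.add_rpow_le_rpow_add (lpNorm_nonneg (f := f) (p := q43) (μ := μ))
    (lpNorm_nonneg (f := f) (p := q43) (μ := ν)) (p := 4 / 3) (by norm_num)
  rw [lpNorm_q43_rpow h1, lpNorm_q43_rpow h2,
    ← integral_add_measure (integrable_norm_q43 h1) (integrable_norm_q43 h2),
    ← lpNorm_q43_rpow hf] at h
  exact (Real.rpow_le_rpow_iff lpNorm_nonneg (add_nonneg lpNorm_nonneg lpNorm_nonneg)
    (by norm_num)).mp h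

end general

lemma continuousOn_integral_strip {E : Type*} [NormedAddCommGroup E] [NormedSpace ℝ E]
    {g : ℝ × ℝ → E} {a b : ℝ} (hg : Integrable g (sm a b)) :
    ContinuousOn (fun t => ∫ p, g p ∂(sm a t)) (Set.Icc a b) := by
  have h1 : Integrable (fun s => ∫ x, g (s, x) ∂(volume.restrict (Set.Ioc 0 (2 * π))))
      (volume.restrict (Set.Ioc a b)) := by
    rw [sm_eq_prod] at hg; exact hg.integral_prod_left
  have h2 : IntegrableOn (fun s => ∫ x, g (s, x) ∂(volume.restrict (Set.Ioc 0 (2 * π))))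
      (Set.Icc a b) := by rw [integrableOn_Icc_iff_integrableOn_Ioc]; exact h1
  refine (intervalIntegral.continuousOn_primitive h2).congr fun t ht => ?_
  have hgt := hg.mono_measure (sm_mono le_rfl ht.2)
  rw [sm_eq_prod] at hgt ⊢
  exact integral_prod _ hgt

lemma integral_sm_add {E : Type*} [NormedAddCommGroup E] [NormedSpace ℝ E]
    {g : ℝ × ℝ → E} {a b c : ℝ} (h1 : a ≤ b) (h2 : b ≤ c) (hg : Integrable g (sm a c)) :
    ∫ p, g p ∂(sm a c) = ∫ p, g p ∂(sm a b) + ∫ p, g p ∂(sm b c) := by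
  have i1 := hg.mono_measure (sm_mono le_rfl h2)
  have i2 := hg.mono_measure (sm_mono h1 le_rfl)
  rw [sm_add h1 h2, integral_add_measure i1 i2]

/-! ### Retarded Strichartz estimates -/

/-- The interaction-picture coefficient `∫_a^t e^{iσk²s} F̂_k(s) ds`, as a space-time integral. -/
def co (σ : ℝ) (k : ℤ) (F : ℝ × ℝ → ℂ) (a t : ℝ) : ℂ :=
  ∫ p, F p * ee (σ * k ^ 2 * p.1 - k * p.2) ∂(sm a t)

/-- `2π` times the retarded Duhamel integral `∫_a^t e^{iσ(t-s)∂ₓₓ} F(s) ds`, truncated to the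
frequencies in `S`. -/
def Ret (σ : ℝ) (S : Finset ℤ) (F : ℝ × ℝ → ℂ) (a : ℝ) (p : ℝ × ℝ) : ℂ :=
  ∑ k ∈ S, co σ k F a p.1 * ee (k * p.2 - σ * k ^ 2 * p.1)

lemma integrable_mul_ee {F : ℝ × ℝ → ℂ} {a b : ℝ} (hF : Integrable F (sm a b)) (σ : ℝ) (k : ℤ) :
    Integrable (fun p : ℝ × ℝ => F p * ee (σ * k ^ 2 * p.1 - k * p.2)) (sm a b) :=
  hF.mul_bdd (c := 1) (by fun_prop) (ae_of_all _ fun p => by simp)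

lemma integrable_of_q43 {F : ℝ × ℝ → ℂ} {a b : ℝ} (hF : MemLp F q43 (sm a b)) :
    Integrable F (sm a b) := hF.integrable one_le_q43

lemma co_add {σ : ℝ} {k : ℤ} {F : ℝ × ℝ → ℂ} {a b c : ℝ} (h1 : a ≤ b) (h2 : b ≤ c)
    (hF : Integrable F (sm a c)) : co σ k F a c = co σ k F a b + co σ k F b c :=
  integral_sm_add h1 h2 (integrable_mul_ee hF σ k)

lemma memLp_free (σ : ℝ) (S : Finset ℤ) (a : ℤ → ℂ) (b c : ℝ) :
    MemLp (fun p : ℝ × ℝ => ∑ k ∈ S, a k * ee (k * p.2 - σ * k ^ 2 * p.1)) 4 (sm b c) := by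
  refine MemLp.of_bound (C := ∑ k ∈ S, ‖a k‖) (by fun_prop) (ae_of_all _ fun p => ?_)
  exact norm_sum_le_of_le _ fun k _ => by simp

/-- Strichartz estimate on an arbitrary bounded time interval. -/
lemma strichartz (T : ℝ) : ∃ C : ℝ, 0 ≤ C ∧ ∀ σ : ℝ, (σ = 1 ∨ σ = -1) → ∀ (S : Finset ℤ)
    (a : ℤ → ℂ), lpNorm (fun p : ℝ × ℝ => ∑ k ∈ S, a k * ee (k * p.2 - σ * k ^ 2 * p.1)) 4
      (sm 0 T) ≤ C * √(∑ k ∈ S, ‖a k‖ ^ 2) := by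
  obtain ⟨M, hM⟩ := exists_nat_ge (T / (2 * π))
  have hT : T ≤ 2 * π * M := by rwa [div_le_iff₀' (by positivity)] at hM
  set K : ℝ := 2 * ((2 * π) ^ 2 * M) with hK
  have hK0 : 0 ≤ K := by positivity
  refine ⟨K ^ (1 / 4 : ℝ), by positivity, fun σ hσ S a => ?_⟩
  refine (lpNorm_mono_meas (memLp_free σ S a _ _) (sm_mono le_rfl hT)).trans ?_
  have h := zygmund hσ M S a
  rw [← lpNorm_four_pow (memLp_free σ S a _ _)] at h
  refine le_of_pow_le_pow_left₀ (n := 4) (by norm_num) (by positivity) (h.trans_eq ?_)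
  have hs : 0 ≤ ∑ k ∈ S, ‖a k‖ ^ 2 := Finset.sum_nonneg fun k _ => by positivity
  rw [mul_pow (K ^ (1 / 4 : ℝ)), ← Real.rpow_natCast (K ^ (1 / 4 : ℝ)), ← Real.rpow_mul hK0,
    show √(∑ k ∈ S, ‖a k‖ ^ 2) ^ 4 = (√(∑ k ∈ S, ‖a k‖ ^ 2) ^ 2) ^ 2 by ring, Real.sq_sqrt hs]
  norm_num
  exact Or.inl hK.symm

/-- The dual Strichartz estimate `‖∫_b^c e^{-iσs∂ₓₓ}F(s)ds‖_{L²} ≲ ‖F‖_{L^{4/3}}`. -/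
lemma dual_strichartz {σ : ℝ} {T C : ℝ} (hC : 0 ≤ C) (hS : ∀ (S : Finset ℤ)
    (a : ℤ → ℂ), lpNorm (fun p : ℝ × ℝ => ∑ k ∈ S, a k * ee (k * p.2 - σ * k ^ 2 * p.1)) 4
      (sm 0 T) ≤ C * √(∑ k ∈ S, ‖a k‖ ^ 2))
    {F : ℝ × ℝ → ℂ} {b c : ℝ} (hb : 0 ≤ b) (hc : c ≤ T) (hF : MemLp F q43 (sm b c))
    (S : Finset ℤ) :
    √(∑ k ∈ S, ‖co σ k F b c‖ ^ 2) ≤ C * lpNorm F q43 (sm b c) := by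
  set A : ℤ → ℂ := fun k => co σ k F b c with hA
  set g : ℝ × ℝ → ℂ := fun p => ∑ k ∈ S, (starRingEnd ℂ) (A k) * ee (σ * k ^ 2 * p.1 - k * p.2)
    with hg
  have hs : 0 ≤ ∑ k ∈ S, ‖A k‖ ^ 2 := Finset.sum_nonneg fun k _ => by positivity
  have hgm : MemLp g 4 (sm b c) := by
    refine MemLp.of_bound (C := ∑ k ∈ S, ‖A k‖) (by fun_prop) (ae_of_all _ fun p => ?_)
    exact norm_sum_le_of_le _ fun k _ => by simp
  have hgn : lpNorm g 4 (sm b c) ≤ C * √(∑ k ∈ S, ‖A k‖ ^ 2) := by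
    have h1 := (lpNorm_mono_meas (memLp_free σ S A 0 T) (sm_mono hb hc)).trans (hS S A)
    refine le_trans (lpNorm_mono_ae' hgm.1 (memLp_free σ S A b c) (ae_of_all _ fun p => ?_)) h1
    have : g p = (starRingEnd ℂ) (∑ k ∈ S, A k * ee (k * p.2 - σ * k ^ 2 * p.1)) := by
      rw [map_sum, hg]
      refine Finset.sum_congr rfl fun k _ => ?_
      rw [map_mul, conj_ee, neg_sub]
    rw [this, RCLike.norm_conj]
  have hint : ((∑ k ∈ S, ‖A k‖ ^ 2 : ℝ) : ℂ) = ∫ p, F p * g p ∂(sm b c) := by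
    have h1 : ∀ p, F p * g p = ∑ k ∈ S, (starRingEnd ℂ) (A k) *
        (F p * ee (σ * k ^ 2 * p.1 - k * p.2)) := by
      intro p; rw [hg, Finset.mul_sum]
      exact Finset.sum_congr rfl fun k _ => by ring
    simp only [h1]
    rw [integral_finsetSum _ fun k _ =>
      (integrable_mul_ee (integrable_of_q43 hF) σ k).const_mul _]
    push_cast
    refine Finset.sum_congr rfl fun k _ => ?_
    rw [integral_const_mul]
    change _ = (starRingEnd ℂ) (A k) * A k
    rw [mul_comm, Complex.mul_conj, Complex.normSq_eq_norm_sq]; push_cast; rfl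
  have hfin : √(∑ k ∈ S, ‖A k‖ ^ 2) * √(∑ k ∈ S, ‖A k‖ ^ 2) ≤
      C * lpNorm F q43 (sm b c) * √(∑ k ∈ S, ‖A k‖ ^ 2) := by
    rw [Real.mul_self_sqrt hs]
    have h2 := holder_q43_four hF hgm
    rw [← hint] at h2
    calc ∑ k ∈ S, ‖A k‖ ^ 2 = ‖((∑ k ∈ S, ‖A k‖ ^ 2 : ℝ) : ℂ)‖ := by
          rw [Complex.norm_real, Real.norm_of_nonneg hs]
      _ ≤ _ := h2
      _ ≤ lpNorm F q43 (sm b c) * (C * √(∑ k ∈ S, ‖A k‖ ^ 2)) :=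
          mul_le_mul_of_nonneg_left hgn lpNorm_nonneg
      _ = _ := by ring
  rcases eq_or_lt_of_le (Real.sqrt_nonneg (∑ k ∈ S, ‖A k‖ ^ 2)) with h0 | h0
  · rw [← h0]; exact mul_nonneg hC lpNorm_nonneg
  · exact le_of_mul_le_mul_right hfin h0

lemma continuousOn_co {F : ℝ × ℝ → ℂ} {a b : ℝ} (hF : Integrable F (sm a b)) (σ : ℝ) (k : ℤ) :
    ContinuousOn (fun t => co σ k F a t) (Set.Icc a b) :=
  continuousOn_integral_strip (integrable_mul_ee hF σ k)

lemma aesm_Ret {F : ℝ × ℝ → ℂ} {a b : ℝ} (hF : Integrable F (sm a b)) (σ : ℝ) (S : Finset ℤ) :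
    AEStronglyMeasurable (Ret σ S F a) (sm a b) := by
  refine ContinuousOn.aestronglyMeasurable ?_ (measurableSet_strip a b)
  refine continuousOn_finsetSum _ fun k _ => ContinuousOn.mul ?_ (by fun_prop)
  exact (continuousOn_co hF σ k).comp continuousOn_fst fun p hp => ⟨hp.1.1.le, hp.1.2⟩

lemma ae_sm_mem (a b : ℝ) : ∀ᵐ p ∂(sm a b), p ∈ strip a b :=
  ae_restrict_mem (measurableSet_strip a b)

lemma sm_real_univ_le {a b T : ℝ} (ha : 0 ≤ a) (hb : b ≤ T) :
    (sm a b).real Set.univ ≤ (sm 0 T).real Set.univ := by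
  refine ENNReal.toReal_mono (measure_ne_top _ _) ?_
  exact sm_mono ha hb _

/-- Retarded Strichartz estimate, uniformly in the frequency truncation. This is the Christ–Kiselev
argument: halving the interval so that both halves carry the same `L^{4/3}` mass of `F` improves any
admissible constant `A` to `3/4 (A + C²)`, so that the constant `3C²` is admissible. -/
lemma retarded {σ : ℝ} {T C : ℝ} (hC : 0 ≤ C) (hS : ∀ (S : Finset ℤ)
    (a : ℤ → ℂ), lpNorm (fun p : ℝ × ℝ => ∑ k ∈ S, a k * ee (k * p.2 - σ * k ^ 2 * p.1)) 4
      (sm 0 T) ≤ C * √(∑ k ∈ S, ‖a k‖ ^ 2))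
    {F : ℝ × ℝ → ℂ} (hF : MemLp F q43 (sm 0 T)) (S : Finset ℤ) {a b : ℝ} (ha : 0 ≤ a)
    (hab : a ≤ b) (hb : b ≤ T) :
    MemLp (Ret σ S F a) 4 (sm a b) ∧
      lpNorm (Ret σ S F a) 4 (sm a b) ≤ 3 * C ^ 2 * lpNorm F q43 (sm a b) := by
  have mF : ∀ a b, 0 ≤ a → b ≤ T → MemLp F q43 (sm a b) := fun a b ha hb =>
    hF.mono_measure (sm_mono ha hb)
  have mono43 : ∀ a b c d, 0 ≤ c → c ≤ a → b ≤ d → d ≤ T →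
      lpNorm F q43 (sm a b) ≤ lpNorm F q43 (sm c d) := fun a b c d h1 h2 h3 h4 =>
    lpNorm_mono_meas (mF c d h1 h4) (sm_mono h2 h3)
  have hco : ∀ a b, 0 ≤ a → b ≤ T → ∀ k ∈ S, ‖co σ k F a b‖ ≤ C * lpNorm F q43 (sm a b) := by
    intro a b ha hb k hk
    refine le_trans ?_ (dual_strichartz hC hS ha hb (mF a b ha hb) S)
    refine Real.le_sqrt_of_sq_le ?_
    exact Finset.single_le_sum (f := fun k => ‖co σ k F a b‖ ^ 2)
      (fun i _ => by positivity) hk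
  have hbd : ∀ a b, 0 ≤ a → b ≤ T → ∀ᵐ p ∂(sm a b),
      ‖Ret σ S F a p‖ ≤ S.card * (C * lpNorm F q43 (sm a b)) := by
    intro a b ha hb
    filter_upwards [ae_sm_mem a b] with p hp
    unfold Ret
    rw [← nsmul_eq_mul, ← Finset.sum_const]
    refine norm_sum_le_of_le _ fun k hk => ?_
    rw [norm_mul, norm_ee, mul_one]
    refine (hco a p.1 ha (hp.1.2.trans hb) k hk).trans ?_
    exact mul_le_mul_of_nonneg_left (mono43 _ _ _ _ ha le_rfl hp.1.2 hb) hC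
  have hmem : ∀ a b, 0 ≤ a → b ≤ T → MemLp (Ret σ S F a) 4 (sm a b) := fun a b ha hb =>
    (lpNorm_le_of_bound (aesm_Ret (integrable_of_q43 (mF a b ha hb)) σ S) (hbd a b ha hb)).1
  refine ⟨hmem a b ha hb, ?_⟩
  set P : ℝ → Prop := fun A => ∀ a b, 0 ≤ a → a ≤ b → b ≤ T →
    lpNorm (Ret σ S F a) 4 (sm a b) ≤ A * lpNorm F q43 (sm a b) with hP
  -- a crude admissible constant, depending on the truncation
  obtain ⟨A₀, hA₀, hPA₀⟩ : ∃ A₀, 0 ≤ A₀ ∧ P A₀ := by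
    set V := (sm 0 T).real Set.univ with hV
    have hV0 : 0 ≤ V := measureReal_nonneg
    refine ⟨V ^ (1 / 4 : ℝ) * (S.card * C), by positivity, fun a b ha hab hb => ?_⟩
    have h := (lpNorm_le_of_bound (aesm_Ret (integrable_of_q43 (mF a b ha hb)) σ S)
      (hbd a b ha hb)).2
    have hN : 0 ≤ lpNorm F q43 (sm a b) := lpNorm_nonneg
    refine le_of_pow_le_pow_left₀ (n := 4) (by norm_num) (by positivity) (h.trans ?_)
    rw [mul_assoc (V ^ (1 / 4 : ℝ)), mul_pow (V ^ (1 / 4 : ℝ)),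
      ← Real.rpow_natCast (V ^ (1 / 4 : ℝ)), ← Real.rpow_mul hV0, mul_assoc (S.card : ℝ)]
    norm_num
    exact mul_le_mul_of_nonneg_right (sm_real_univ_le ha hb) (by positivity)
  -- the bisection step
  have step : ∀ A, 0 ≤ A → P A → P (3 / 4 * (A + C ^ 2)) := by
    intro A hA hPA a b ha hab hb
    have mab := mF a b ha hb
    have gi := integrable_norm_q43 mab
    set M := ∫ p, ‖F p‖ ^ (4 / 3 : ℝ) ∂(sm a b) with hM
    have hM0 : 0 ≤ M := integral_nonneg fun p => by positivity
    obtain ⟨c, hc, hcM⟩ : ∃ c ∈ Set.Icc a b, ∫ p, ‖F p‖ ^ (4 / 3 : ℝ) ∂(sm a c) = M / 2 := by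
      have hcont := continuousOn_integral_strip gi
      refine intermediate_value_Icc hab hcont ⟨?_, ?_⟩
      · have : sm a a = 0 := by simp [sm, strip]
        simp only [this, integral_zero_measure]; positivity
      · change M / 2 ≤ M; linarith
    have mac := mF a c ha (hc.2.trans hb)
    have mcb := mF c b (ha.trans hc.1) hb
    have hcM' : ∫ p, ‖F p‖ ^ (4 / 3 : ℝ) ∂(sm c b) = M / 2 := by
      have := integral_sm_add hc.1 hc.2 gi
      rw [hcM] at this; linarith
    set m := lpNorm F q43 (sm a c) with hm
    have hm0 : 0 ≤ m := lpNorm_nonneg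
    have hm4 : m ^ 4 = (M / 2) ^ 3 := by rw [hm, lpNorm_q43_pow_four mac, hcM]
    have hm' : lpNorm F q43 (sm c b) = m := by
      refine (pow_left_inj₀ lpNorm_nonneg hm0 (n := 4) (by norm_num)).mp ?_
      rw [lpNorm_q43_pow_four mcb, hcM', hm4]
    have hN4 : lpNorm F q43 (sm a b) ^ 4 = 8 * m ^ 4 := by
      rw [lpNorm_q43_pow_four mab, hm4]; ring
    have rab := hmem a b ha hb
    have rac := hmem a c ha (hc.2.trans hb)
    have rcb : MemLp (Ret σ S F a) 4 (sm c b) := rab.mono_measure (sm_mono hc.1 le_rfl)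
    have b1 : lpNorm (Ret σ S F a) 4 (sm a c) ≤ (A + C ^ 2) * m := by
      refine (hPA a c ha hc.1 (hc.2.trans hb)).trans ?_
      exact mul_le_mul_of_nonneg_right (by nlinarith) hm0
    have b2 : lpNorm (Ret σ S F a) 4 (sm c b) ≤ (A + C ^ 2) * m := by
      set Q : ℝ × ℝ → ℂ := fun p => ∑ k ∈ S, co σ k F a c * ee (k * p.2 - σ * k ^ 2 * p.1)
      have hQ : lpNorm Q 4 (sm c b) ≤ C ^ 2 * m := by
        refine (lpNorm_mono_meas (memLp_free σ S _ 0 T)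
          (sm_mono (ha.trans hc.1) hb)).trans ?_
        refine (hS S _).trans ?_
        rw [sq, mul_assoc]
        exact mul_le_mul_of_nonneg_left
          (dual_strichartz hC hS ha (hc.2.trans hb) mac S) hC
      have hQm : MemLp Q 4 (sm c b) := memLp_free σ S _ c b
      have hRm := hmem c b (ha.trans hc.1) hb
      have hsum : lpNorm (Ret σ S F a) 4 (sm c b) ≤ lpNorm (Q + Ret σ S F c) 4 (sm c b) := by
        refine lpNorm_mono_ae' rcb.1 (hQm.add hRm) ?_
        filter_upwards [ae_sm_mem c b] with p hp
        refine le_of_eq (congrArg _ ?_)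
        simp only [Pi.add_apply, Ret, Q, ← Finset.sum_add_distrib, ← add_mul]
        refine Finset.sum_congr rfl fun k _ => ?_
        rw [co_add hc.1 hp.1.1.le
          (integrable_of_q43 (mF a p.1 ha (hp.1.2.trans hb)))]
      refine hsum.trans ((lpNorm_add_le hQm (by norm_num)).trans ?_)
      have := hPA c b (ha.trans hc.1) hc.2 hb
      rw [hm'] at this
      linarith
    have hsplit : lpNorm (Ret σ S F a) 4 (sm a b) ^ 4 =
        lpNorm (Ret σ S F a) 4 (sm a c) ^ 4 + lpNorm (Ret σ S F a) 4 (sm c b) ^ 4 := by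
      rw [lpNorm_four_pow rab, lpNorm_four_pow rac, lpNorm_four_pow rcb]
      exact integral_sm_add hc.1 hc.2 (integrable_norm_four rab)
    have hN0 : 0 ≤ lpNorm F q43 (sm a b) := lpNorm_nonneg
    refine le_of_pow_le_pow_left₀ (n := 4) (by norm_num) (by positivity) ?_
    rw [hsplit, mul_pow, hN4]
    have p1 := pow_le_pow_left₀ lpNorm_nonneg b1 4
    have p2 := pow_le_pow_left₀ lpNorm_nonneg b2 4
    have : 0 ≤ ((A + C ^ 2) * m) ^ 4 := by positivity
    -- `(3/4)⁴ · 8 = 81/32 ≥ 2`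
    have e : (3 / 4 * (A + C ^ 2)) ^ 4 * (8 * m ^ 4) = 81 / 32 * ((A + C ^ 2) * m) ^ 4 := by ring
    rw [e]; linarith
  have iter : ∀ j : ℕ, P (3 * C ^ 2 + (3 / 4) ^ j * A₀) := by
    intro j
    induction j with
    | zero =>
      intro a b ha hab hb
      refine (hPA₀ a b ha hab hb).trans (mul_le_mul_of_nonneg_right ?_ lpNorm_nonneg)
      simp; positivity
    | succ j ih =>
      have := step _ (by positivity) ih
      convert this using 1
      ring
  have hlim : Tendsto (fun j : ℕ => (3 * C ^ 2 + (3 / 4 : ℝ) ^ j * A₀) * lpNorm F q43 (sm a b))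
      atTop (nhds ((3 * C ^ 2 + 0 * A₀) * lpNorm F q43 (sm a b))) :=
    ((tendsto_const_nhds.add ((tendsto_pow_atTop_nhds_zero_of_lt_one (by norm_num)
      (by norm_num)).mul_const A₀)).mul_const _)
  rw [zero_mul, add_zero] at hlim
  exact ge_of_tendsto' hlim fun j => iter j a b ha hab hb

/-- The retarded Strichartz estimate with a constant depending only on the length of time. -/
lemma retarded_strichartz (T : ℝ) : ∃ A : ℝ, 0 ≤ A ∧ ∀ σ : ℝ, (σ = 1 ∨ σ = -1) →
    ∀ (F : ℝ × ℝ → ℂ), MemLp F q43 (sm 0 T) → ∀ (S : Finset ℤ) (t : ℝ), 0 ≤ t → t ≤ T →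
      MemLp (Ret σ S F 0) 4 (sm 0 t) ∧
        lpNorm (Ret σ S F 0) 4 (sm 0 t) ≤ A * lpNorm F q43 (sm 0 t) := by
  obtain ⟨C, hC, h⟩ := strichartz T
  exact ⟨3 * C ^ 2, by positivity, fun σ hσ F hF S t ht htT =>
    retarded hC (h σ hσ) hF S le_rfl ht htT⟩

/-! ### Fourier coefficients and Fourier truncation on the circle -/

/-- Lebesgue measure on `(0, 2π]`. -/
def mx : Measure ℝ := volume.restrict (Set.Ioc 0 (2 * π))

instance : IsFiniteMeasure mx := by unfold mx; infer_instance

/-- The unnormalised Fourier coefficient `∫ g(x) e^{-ikx} dx` over one period. -/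
def fc (k : ℤ) (g : ℝ → ℂ) : ℂ := ∫ x, g x * ee (-(k * x)) ∂mx

/-- Fourier truncation to the frequencies `|k| ≤ N` in one variable. -/
def P1 (N : ℕ) (g : ℝ → ℂ) (x : ℝ) : ℂ :=
  ((2 * π : ℝ) : ℂ)⁻¹ * ∑ k ∈ Finset.Icc (-N : ℤ) N, fc k g * ee (k * x)

/-- Spatial Fourier truncation of a space-time function. -/
def PN (N : ℕ) (h : ℝ × ℝ → ℂ) (p : ℝ × ℝ) : ℂ := P1 N (fun x => h (p.1, x)) p.2

lemma integrable_mx_mul_ee {g : ℝ → ℂ} (hg : Integrable g mx) {φ : ℝ → ℝ} (hφ : Continuous φ) :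
    Integrable (fun x => g x * ee (φ x)) mx :=
  hg.mul_bdd (c := 1) (by fun_prop) (ae_of_all _ fun p => by simp)

lemma fc_congr {g h : ℝ → ℂ} (k : ℤ) (hgh : g =ᵐ[mx] h) : fc k g = fc k h := by
  refine integral_congr_ae ?_
  filter_upwards [hgh] with x hx; rw [hx]

lemma fc_add {g h : ℝ → ℂ} (k : ℤ) (hg : Integrable g mx) (hh : Integrable h mx) :
    fc k (fun x => g x + h x) = fc k g + fc k h := by
  unfold fc
  simp only [add_mul]
  exact integral_add (integrable_mx_mul_ee hg (by fun_prop)) (integrable_mx_mul_ee hh (by fun_prop))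

lemma fc_sub {g h : ℝ → ℂ} (k : ℤ) (hg : Integrable g mx) (hh : Integrable h mx) :
    fc k (fun x => g x - h x) = fc k g - fc k h := by
  unfold fc
  simp only [sub_mul]
  exact integral_sub (integrable_mx_mul_ee hg (by fun_prop)) (integrable_mx_mul_ee hh (by fun_prop))

lemma fc_const_mul {g : ℝ → ℂ} (k : ℤ) (c : ℂ) : fc k (fun x => c * g x) = c * fc k g := by
  unfold fc
  simp only [mul_assoc]
  exact integral_const_mul _ _

lemma fc_mul_const {g : ℝ → ℂ} (k : ℤ) (c : ℂ) : fc k (fun x => g x * c) = fc k g * c := by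
  simp only [mul_comm _ c, fc_const_mul]

lemma norm_fc_le {g : ℝ → ℂ} (k : ℤ) : ‖fc k g‖ ≤ ∫ x, ‖g x‖ ∂mx := by
  refine (norm_integral_le_integral_norm _).trans_eq ?_
  simp

lemma fc_eq_fourierCoeffOn (k : ℤ) (g : ℝ → ℂ) :
    fc k g = ((2 * π : ℝ) : ℂ) * fourierCoeffOn (two_pi_pos) g k := by
  rw [fourierCoeffOn_eq_integral, sub_zero, Complex.real_smul, ← mul_assoc]
  have : ((2 * π : ℝ) : ℂ) * ((1 / (2 * π) : ℝ) : ℂ) = 1 := by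
    rw [← Complex.ofReal_mul, mul_one_div_cancel (by positivity)]; simp
  rw [this, one_mul, intervalIntegral.integral_of_le two_pi_pos.le]
  refine integral_congr_ae (ae_of_all _ fun x => ?_)
  simp only [smul_eq_mul]
  rw [mul_comm, fourier_coe_apply, ee]
  congr 2
  have : (π : ℂ) ≠ 0 := by exact_mod_cast pi_ne_zero
  push_cast
  field_simp

lemma hasSum_fc {g : ℝ → ℂ} (hg : MemLp g 2 mx) :
    HasSum (fun k : ℤ => (2 * π)⁻¹ * ‖fc k g‖ ^ 2) (∫ x, ‖g x‖ ^ 2 ∂mx) := by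
  have h := (hasSum_sq_fourierCoeffOn two_pi_pos hg).mul_left (2 * π)
  rw [sub_zero, smul_eq_mul, ← mul_assoc, mul_inv_cancel₀ (by positivity), one_mul,
    intervalIntegral.integral_of_le two_pi_pos.le] at h
  have e : (fun k : ℤ => (2 * π)⁻¹ * ‖fc k g‖ ^ 2) =
      fun k => 2 * π * ‖fourierCoeffOn two_pi_pos g k‖ ^ 2 := by
    funext k
    rw [fc_eq_fourierCoeffOn, norm_mul, Complex.norm_real, Real.norm_of_nonneg two_pi_pos.le]
    field_simp
  rw [e]; exact h

lemma ae_eq_zero_of_fc {g : ℝ → ℂ} (hg : MemLp g 2 mx) (h : ∀ k, fc k g = 0) : g =ᵐ[mx] 0 := by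
  have h1 := hasSum_fc hg
  simp only [h, norm_zero, ne_eq, OfNat.ofNat_ne_zero, not_false_eq_true, zero_pow, mul_zero] at h1
  have h2 := h1.unique hasSum_zero
  rw [integral_eq_zero_iff_of_nonneg (fun x => by positivity)
    ((memLp_two_iff_integrable_sq_norm hg.1).1 hg)] at h2
  filter_upwards [h2] with x hx
  simpa using hx

lemma memLp_P1 (N : ℕ) (g : ℝ → ℂ) (q : ENNReal) : MemLp (P1 N g) q mx := by
  refine MemLp.of_bound (C := (2 * π)⁻¹ * ∑ k ∈ Finset.Icc (-N : ℤ) N, ‖fc k g‖)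
    (Continuous.aestronglyMeasurable (by unfold P1; fun_prop)) (ae_of_all _ fun x => ?_)
  unfold P1
  rw [norm_mul, norm_inv, Complex.norm_real, Real.norm_of_nonneg two_pi_pos.le]
  refine mul_le_mul_of_nonneg_left ?_ (by positivity)
  exact norm_sum_le_of_le _ fun k _ => by simp

/-- Pythagoras: the squared `L²` distance to the Fourier truncation. -/
lemma integral_sub_P1 (N : ℕ) {g : ℝ → ℂ} (hg : MemLp g 2 mx) :
    ∫ x, ‖g x - P1 N g x‖ ^ 2 ∂mx = ∫ x, ‖g x‖ ^ 2 ∂mx -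
      ∑ k ∈ Finset.Icc (-N : ℤ) N, (2 * π)⁻¹ * ‖fc k g‖ ^ 2 := by
  set S := Finset.Icc (-N : ℤ) N
  have hgi : Integrable g mx := hg.integrable (by norm_num)
  have hpi : (((2 * π : ℝ) : ℂ)) ≠ 0 := by exact_mod_cast two_pi_pos.ne'
  have hP := memLp_P1 N g 2
  have hPc : Continuous (P1 N g) := by unfold P1; fun_prop
  have hd := hg.sub hP
  have hPb : Integrable (fun x => g x * (starRingEnd ℂ) (P1 N g x)) mx :=
    MemLp.integrable_mul (p := 2) (q := 2) hg hP.star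
  -- `∫ h · conj (P_N g)` for integrable `h`
  have key : ∀ h : ℝ → ℂ, Integrable h mx → ∫ x, h x * (starRingEnd ℂ) (P1 N g x) ∂mx =
      ((2 * π : ℝ) : ℂ)⁻¹ * ∑ k ∈ S, (starRingEnd ℂ) (fc k g) * fc k h := by
    intro h hh
    have : ∀ x, h x * (starRingEnd ℂ) (P1 N g x) = ((2 * π : ℝ) : ℂ)⁻¹ *
        ∑ k ∈ S, (starRingEnd ℂ) (fc k g) * (h x * ee (-(k * x))) := by
      intro x
      simp only [P1, map_mul, map_sum, map_inv₀, Complex.conj_ofReal, conj_ee]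
      rw [← mul_assoc, mul_comm (h x), mul_assoc, Finset.mul_sum]
      congr 1
      exact Finset.sum_congr rfl fun k _ => by ring
    simp only [this]
    rw [integral_const_mul, integral_finsetSum _ fun k _ =>
      (integrable_mx_mul_ee hh (by fun_prop)).const_mul _]
    congr 1
    exact Finset.sum_congr rfl fun k _ => integral_const_mul _ _
  have hfcP : ∀ k ∈ S, fc k (P1 N g) = fc k g := by
    intro k hk
    unfold P1
    rw [fc_const_mul]
    have : ∀ x, (∑ l ∈ S, fc l g * ee (l * x)) * ee (-(k * x)) =
        ∑ l ∈ S, fc l g * ee (((l - k : ℤ) : ℝ) * x) := by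
      intro x
      rw [Finset.sum_mul]
      refine Finset.sum_congr rfl fun l _ => ?_
      rw [mul_assoc, ← ee_add]; congr 2; push_cast; ring
    rw [fc]
    simp only [S] at this ⊢
    simp only [this]
    rw [integral_finsetSum _ fun l _ => ?_]
    · simp only [integral_const_mul, mx, integral_ee_two_pi, sub_eq_zero]
      rw [Finset.sum_eq_single k]
      · simp only [if_true]; field_simp
      · intro l _ hl; simp [hl]
      · intro h; exact absurd hk h
    · have : Integrable (fun x => fc l g * ee (((l - k : ℤ) : ℝ) * x)) mx := by
        have := (integrable_mx_mul_ee (integrable_const (fc l g))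
          (φ := fun x => ((l - k : ℤ) : ℝ) * x) (by fun_prop))
        exact this
      exact this
  have e1 := key g hgi
  have e2 : ∫ x, P1 N g x * (starRingEnd ℂ) (P1 N g x) ∂mx =
      ((2 * π : ℝ) : ℂ)⁻¹ * ∑ k ∈ S, (starRingEnd ℂ) (fc k g) * fc k g := by
    rw [key _ (hP.integrable (by norm_num))]
    congr 1
    exact Finset.sum_congr rfl fun k hk => by rw [hfcP k hk]
  have hPP : Integrable (fun x => P1 N g x * (starRingEnd ℂ) (P1 N g x)) mx :=
    MemLp.integrable_mul (p := 2) (q := 2) hP hP.star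
  have hgg : Integrable (fun x => ‖g x‖ ^ 2) mx := (memLp_two_iff_integrable_sq_norm hg.1).1 hg
  have hz : ∫ x, (g x - P1 N g x) * (starRingEnd ℂ) (P1 N g x) ∂mx = 0 := by
    simp only [sub_mul]
    rw [integral_sub hPb hPP, e1, e2, sub_self]
  -- Pythagoras
  have hpt : ∀ x, ‖g x‖ ^ 2 = ‖g x - P1 N g x‖ ^ 2 + (P1 N g x * (starRingEnd ℂ) (P1 N g x)).re +
      2 * ((g x - P1 N g x) * (starRingEnd ℂ) (P1 N g x)).re := by
    intro x
    generalize P1 N g x = b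
    rw [show g x = (g x - b) + b by ring, ← Complex.normSq_eq_norm_sq, Complex.normSq_add,
      ← Complex.normSq_eq_norm_sq, Complex.mul_conj b]
    simp
  have hdi : Integrable (fun x => ‖g x - P1 N g x‖ ^ 2) mx :=
    (memLp_two_iff_integrable_sq_norm hd.1).1 hd
  have hzi : Integrable (fun x => (g x - P1 N g x) * (starRingEnd ℂ) (P1 N g x)) mx :=
    MemLp.integrable_mul (p := 2) (q := 2) hd hP.star
  have hPPr : Integrable (fun x => (P1 N g x * (starRingEnd ℂ) (P1 N g x)).re) mx := hPP.re
  have hzr : Integrable (fun x =>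
    2 * ((g x - P1 N g x) * (starRingEnd ℂ) (P1 N g x)).re) mx := hzi.re.const_mul 2
  have hsi : Integrable (fun x => ‖g x - P1 N g x‖ ^ 2 +
    (P1 N g x * (starRingEnd ℂ) (P1 N g x)).re) mx := hdi.add hPPr
  have hre : ∀ f : ℝ → ℂ, Integrable f mx → ∫ x, (f x).re ∂mx = (∫ x, f x ∂mx).re :=
    fun f hf => integral_re hf
  have : ∫ x, ‖g x‖ ^ 2 ∂mx = ∫ x, ‖g x - P1 N g x‖ ^ 2 ∂mx +
      ∑ k ∈ S, (2 * π)⁻¹ * ‖fc k g‖ ^ 2 := by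
    simp only [hpt]
    rw [integral_add hsi hzr, integral_add hdi hPPr,
      integral_const_mul, hre _ hPP, hre _ hzi, hz, e2]
    simp only [Complex.zero_re, mul_zero, add_zero]
    congr 1
    rw [← Complex.ofReal_inv, Complex.re_ofReal_mul, Complex.re_sum, Finset.mul_sum]
    refine Finset.sum_congr rfl fun k _ => ?_
    rw [mul_comm ((starRingEnd ℂ) _), Complex.mul_conj, Complex.ofReal_re,
      Complex.normSq_eq_norm_sq]
  linarith

lemma integral_sub_P1_le (N : ℕ) {g : ℝ → ℂ} (hg : MemLp g 2 mx) :
    ∫ x, ‖g x - P1 N g x‖ ^ 2 ∂mx ≤ ∫ x, ‖g x‖ ^ 2 ∂mx := by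
  rw [integral_sub_P1 N hg, sub_le_self_iff]
  exact Finset.sum_nonneg fun k _ => by positivity

lemma tendsto_integral_sub_P1 {g : ℝ → ℂ} (hg : MemLp g 2 mx) :
    Tendsto (fun N : ℕ => ∫ x, ‖g x - P1 N g x‖ ^ 2 ∂mx) atTop (nhds 0) := by
  simp only [integral_sub_P1 _ hg]
  have h := (hasSum_fc hg).comp (Finset.tendsto_Icc_neg (R := ℤ))
  have h2 := (tendsto_const_nhds (x := ∫ x, ‖g x‖ ^ 2 ∂mx)).sub h
  rw [sub_self] at h2
  exact h2

/-! ### Fourier truncation in space-time and the Riemann–Lebesgue lemma -/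

lemma sm_prod (a b : ℝ) : sm a b = (volume.restrict (Set.Ioc a b)).prod mx := sm_eq_prod a b

lemma ae_slice_memLp {h : ℝ × ℝ → ℂ} {a b : ℝ} (hh : MemLp h 2 (sm a b)) :
    ∀ᵐ t ∂(volume.restrict (Set.Ioc a b)), MemLp (fun x => h (t, x)) 2 mx := by
  have h1 := (memLp_two_iff_integrable_sq_norm hh.1).1 hh
  have h2 := hh.1
  rw [sm_prod] at h1 h2
  filter_upwards [h1.prod_right_ae, h2.prodMk_left] with t ht ht'
  exact (memLp_two_iff_integrable_sq_norm ht').2 ht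

lemma aesm_fc {h : ℝ × ℝ → ℂ} {a b : ℝ} (hh : AEStronglyMeasurable h (sm a b)) (k : ℤ) :
    AEStronglyMeasurable (fun t => fc k (fun x => h (t, x))) (volume.restrict (Set.Ioc a b)) := by
  rw [sm_prod] at hh
  exact (hh.mul (Continuous.aestronglyMeasurable
    (f := fun p : ℝ × ℝ => ee (-(k * p.2))) (by fun_prop))).integral_prod_right'

lemma aesm_PN {h : ℝ × ℝ → ℂ} {a b : ℝ} (hh : AEStronglyMeasurable h (sm a b)) (N : ℕ) :
    AEStronglyMeasurable (PN N h) (sm a b) := by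
  have : PN N h = fun p => ((2 * π : ℝ) : ℂ)⁻¹ * ∑ k ∈ Finset.Icc (-N : ℤ) N,
      fc k (fun x => h (p.1, x)) * ee (k * p.2) := rfl
  rw [this]
  refine AEStronglyMeasurable.const_mul ?_ _
  refine Finset.aestronglyMeasurable_fun_sum _ fun k _ => ?_
  refine AEStronglyMeasurable.mul ?_ (Continuous.aestronglyMeasurable (by fun_prop))
  rw [sm_prod]
  exact (aesm_fc hh k).comp_fst

lemma integrable_sub_P1_sq {g : ℝ → ℂ} (hg : MemLp g 2 mx) (N : ℕ) :
    Integrable (fun x => ‖g x - P1 N g x‖ ^ 2) mx := by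
  have h : MemLp (fun x => g x - P1 N g x) 2 mx := hg.sub (memLp_P1 N g 2)
  exact (memLp_two_iff_integrable_sq_norm h.1).1 h

lemma PN_sub_memLp {h : ℝ × ℝ → ℂ} {a b : ℝ} (hh : MemLp h 2 (sm a b)) (N : ℕ) :
    MemLp (fun p => h p - PN N h p) 2 (sm a b) := by
  have hm : AEStronglyMeasurable (fun p => h p - PN N h p) (sm a b) :=
    hh.1.sub (aesm_PN hh.1 N)
  rw [memLp_two_iff_integrable_sq_norm hm]
  have hm2 : AEStronglyMeasurable (fun p => ‖h p - PN N h p‖ ^ 2) (sm a b) := hm.norm.pow 2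
  have h1 := (memLp_two_iff_integrable_sq_norm hh.1).1 hh
  rw [sm_prod] at hm2 h1 ⊢
  rw [integrable_prod_iff hm2]
  constructor
  · filter_upwards [ae_slice_memLp hh] with t ht
    exact integrable_sub_P1_sq ht N
  · have h1' := h1.integral_prod_left
    refine h1'.mono' hm2.norm.integral_prod_right' ?_
    filter_upwards [ae_slice_memLp hh] with t ht
    rw [Real.norm_of_nonneg (integral_nonneg fun x => norm_nonneg _)]
    simp only [Real.norm_of_nonneg (sq_nonneg _)]
    exact integral_sub_P1_le N ht

lemma PN_memLp {h : ℝ × ℝ → ℂ} {a b : ℝ} (hh : MemLp h 2 (sm a b)) (N : ℕ) :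
    MemLp (PN N h) 2 (sm a b) := by
  have := hh.sub (PN_sub_memLp hh N)
  convert this using 1
  funext p; simp

lemma lpNorm_two_sq {α : Type*} [MeasurableSpace α] {μ : Measure α} {f : α → ℂ}
    (hf : MemLp f 2 μ) : lpNorm f 2 μ ^ 2 = ∫ x, ‖f x‖ ^ 2 ∂μ := by
  rw [lpNorm_eq_integral_norm_rpow_toReal (by norm_num) (by norm_num) hf.1]
  have h0 : 0 ≤ ∫ x, ‖f x‖ ^ (2 : ENNReal).toReal ∂μ := integral_nonneg fun x => by positivity
  rw [← Real.rpow_natCast, ← Real.rpow_mul h0]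
  simp only [ENNReal.toReal_ofNat]
  norm_num

/-- Spatial Fourier truncations converge in `L²` of space-time. -/
lemma PN_tendsto {h : ℝ × ℝ → ℂ} {a b : ℝ} (hh : MemLp h 2 (sm a b)) :
    Tendsto (fun N => lpNorm (fun p => h p - PN N h p) 2 (sm a b)) atTop (nhds 0) := by
  have hsq : Tendsto (fun N => ∫ p, ‖h p - PN N h p‖ ^ 2 ∂(sm a b)) atTop (nhds 0) := by
    have hi : ∀ N, Integrable (fun p => ‖h p - PN N h p‖ ^ 2) (sm a b) := fun N =>
      (memLp_two_iff_integrable_sq_norm (PN_sub_memLp hh N).1).1 (PN_sub_memLp hh N)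
    have h1 := (memLp_two_iff_integrable_sq_norm hh.1).1 hh
    have hsl := ae_slice_memLp hh
    rw [sm_prod] at hi h1 ⊢
    simp only [integral_prod _ (hi _)]
    have := tendsto_integral_of_dominated_convergence (F := fun (N : ℕ) t =>
      ∫ y, ‖h (t, y) - PN N h (t, y)‖ ^ 2 ∂mx) (f := fun _ => (0:ℝ))
      (fun t => ∫ x, ‖h (t, x)‖ ^ 2 ∂mx) (μ := volume.restrict (Set.Ioc a b))
      (fun N => (hi N).integral_prod_left.1) h1.integral_prod_left
      (fun N => by
        filter_upwards [hsl] with t ht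
        rw [Real.norm_of_nonneg (integral_nonneg fun x => by positivity)]
        exact integral_sub_P1_le N ht)
      (by
        filter_upwards [hsl] with t ht
        exact tendsto_integral_sub_P1 ht)
    simpa using this
  have := hsq.sqrt
  rw [Real.sqrt_zero] at this
  refine this.congr fun N => ?_
  rw [← lpNorm_two_sq (PN_sub_memLp hh N), Real.sqrt_sq lpNorm_nonneg]

/-- A uniform `L⁴` bound on the Fourier truncations passes to the limit. -/
lemma lpNorm_four_le_of_PN {z : ℝ × ℝ → ℂ} {t B : ℝ} (hz : MemLp z 4 (sm 0 t)) (hB : 0 ≤ B)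
    (h : ∀ N, MemLp (PN N z) 4 (sm 0 t) ∧ lpNorm (PN N z) 4 (sm 0 t) ≤ B) :
    lpNorm z 4 (sm 0 t) ≤ B := by
  have hz2 : MemLp z 2 (sm 0 t) := hz.mono_exponent (by norm_num)
  have hm : TendstoInMeasure (sm 0 t) (fun N => PN N z) atTop z := by
    refine tendstoInMeasure_of_tendsto_eLpNorm (p := 2) (by norm_num) (fun N => (h N).1.1) hz.1 ?_
    have h1 := PN_tendsto hz2
    have h2 := ENNReal.tendsto_ofReal h1
    rw [ENNReal.ofReal_zero] at h2
    refine h2.congr fun N => ?_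
    rw [← toReal_eLpNorm (PN_sub_memLp hz2 N).1, ENNReal.ofReal_toReal (PN_sub_memLp hz2 N).2.ne,
      ← eLpNorm_neg]
    congr 1; funext p; simp
  obtain ⟨ns, -, hns⟩ := hm.exists_seq_tendsto_ae
  have := Lp.eLpNorm_le_of_ae_tendsto (p := 4) (C := ENNReal.ofReal B)
    (Eventually.of_forall fun n => ?_) (fun n => (h (ns n)).1.1) hns
  · rw [← toReal_eLpNorm hz.1]
    exact ENNReal.toReal_le_of_le_ofReal hB this
  · have h3 := (h (ns n)).2
    rw [← toReal_eLpNorm (h (ns n)).1.1] at h3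
    rw [← ENNReal.ofReal_toReal (h (ns n)).1.2.ne]
    exact ENNReal.ofReal_le_ofReal h3

/-- Riemann–Lebesgue lemma along a sequence of frequencies tending to infinity. -/
lemma riemann_lebesgue {s : Set ℝ} (hs : MeasurableSet s) (α : ℝ → ℂ) {l : ℕ → ℝ}
    (hl : Tendsto (fun n => |l n|) atTop atTop) :
    Tendsto (fun n => ∫ x in s, α x * ee (l n * x)) atTop (nhds 0) := by
  have h1 := Real.tendsto_integral_exp_smul_cocompact (s.indicator α)
  have h2 : Tendsto (fun n => -(l n) / (2 * π)) atTop (cocompact ℝ) := by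
    rw [← Metric.cobounded_eq_cocompact, ← tendsto_norm_atTop_iff_cobounded]
    simp only [norm_div, norm_neg, Real.norm_eq_abs]
    exact hl.atTop_div_const (by positivity)
  refine (h1.comp h2).congr fun n => ?_
  simp only [Function.comp]
  rw [← integral_indicator hs]
  refine integral_congr_ae (ae_of_all _ fun x => ?_)
  by_cases hx : x ∈ s
  · simp only [hx, Set.indicator_of_mem]
    rw [Circle.smul_def, Real.fourierChar_apply, smul_eq_mul, mul_comm, ee]
    congr 3
    field_simp
  · simp [hx]

/-! ### Nonresonant forcing -/

lemma Ret_sum {ι : Type*} (M : Finset ι) {F : ι → ℝ × ℝ → ℂ} {a b : ℝ}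
    (hF : ∀ i ∈ M, Integrable (F i) (sm a b)) (σ : ℝ) (S : Finset ℤ) {p : ℝ × ℝ} (hp : p.1 ≤ b) :
    Ret σ S (fun p => ∑ i ∈ M, F i p) a p = ∑ i ∈ M, Ret σ S (F i) a p := by
  unfold Ret
  rw [Finset.sum_comm]
  refine Finset.sum_congr rfl fun k _ => ?_
  rw [← Finset.sum_mul]
  congr 1
  unfold co
  simp only [Finset.sum_mul]
  exact integral_finsetSum _ fun i hi =>
    integrable_mul_ee ((hF i hi).mono_measure (sm_mono le_rfl hp)) σ k

lemma Ret_add {F G : ℝ × ℝ → ℂ} {a b : ℝ} (hF : Integrable F (sm a b))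
    (hG : Integrable G (sm a b)) (σ : ℝ) (S : Finset ℤ) {p : ℝ × ℝ} (hp : p.1 ≤ b) :
    Ret σ S (fun p => F p + G p) a p = Ret σ S F a p + Ret σ S G a p := by
  unfold Ret
  rw [← Finset.sum_add_distrib]
  refine Finset.sum_congr rfl fun k _ => ?_
  rw [← add_mul]
  congr 1
  unfold co
  simp only [add_mul]
  exact integral_add (integrable_mul_ee (hF.mono_measure (sm_mono le_rfl hp)) σ k)
    (integrable_mul_ee (hG.mono_measure (sm_mono le_rfl hp)) σ k)

/-- A single spatial mode `α(s) e^{imx}` modulated by `e^{i(Px - σQs)}` excites only the frequency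
`m + P`, with temporal phase `σ((m + P)² - Q)s`. -/
lemma co_mode (σ : ℝ) (k m P Q : ℤ) (α : ℝ → ℂ) (a t : ℝ) :
    co σ k (fun p => α p.1 * ee (m * p.2) * ee (P * p.2 - σ * Q * p.1)) a t =
      if k = m + P then ((2 * π : ℝ) : ℂ) *
        ∫ s in Set.Ioc a t, α s * ee ((σ * ((m + P) ^ 2 - Q)) * s) else 0 := by
  have h : ∀ p : ℝ × ℝ, α p.1 * ee (m * p.2) * ee (P * p.2 - σ * Q * p.1) *
      ee (σ * k ^ 2 * p.1 - k * p.2) =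
      (α p.1 * ee ((σ * (k ^ 2 - Q)) * p.1)) * ee (((m + P - k : ℤ) : ℝ) * p.2) := by
    intro p
    simp only [mul_assoc, ← ee_add]
    congr 2; push_cast; ring
  unfold co
  simp only [h]
  rw [sm_eq_prod, integral_prod_mul (fun s => α s * ee ((σ * (k ^ 2 - Q)) * s))
    (fun x => ee (((m + P - k : ℤ) : ℝ) * x)), integral_ee_two_pi]
  by_cases hk : k = m + P
  · rw [if_pos hk, if_pos (by omega), mul_comm]
    subst hk; push_cast; rfl
  · rw [if_neg hk, if_neg (by omega), mul_zero]

lemma norm_Ret_mode_le (σ : ℝ) (S : Finset ℤ) (m P Q : ℤ) (α : ℝ → ℂ) (p : ℝ × ℝ) :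
    ‖Ret σ S (fun p => α p.1 * ee (m * p.2) * ee (P * p.2 - σ * Q * p.1)) 0 p‖ ≤
      2 * π * ‖∫ s in Set.Ioc 0 p.1, α s * ee ((σ * ((m + P) ^ 2 - Q)) * s)‖ := by
  unfold Ret
  simp only [co_mode, ite_mul, zero_mul]
  rw [Finset.sum_ite_eq']
  split_ifs
  · rw [norm_mul, norm_mul, norm_ee, mul_one, Complex.norm_real, Real.norm_of_nonneg two_pi_pos.le]
  · rw [norm_zero]; positivity

/-- A single spatial mode modulated at a frequency off the dispersion curve produces a vanishing
Duhamel integral. -/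
lemma mode_small {σ : ℝ} (hσ : σ = 1 ∨ σ = -1) {T : ℝ} {α : ℝ → ℂ}
    (hα : IntegrableOn α (Set.Ioc 0 T)) (m : ℤ) {P Q : ℕ → ℤ}
    (h : (∀ᵐ t ∂(volume.restrict (Set.Ioc 0 T)), α t = 0) ∨
      Tendsto (fun n => |((m : ℝ) + P n) ^ 2 - Q n|) atTop atTop) {ε : ℝ} (hε : 0 < ε) :
    ∀ᶠ n in atTop, ∀ S : Finset ℤ,
      lpNorm (Ret σ S (fun p => α p.1 * ee (m * p.2) * ee (P n * p.2 - σ * Q n * p.1)) 0) 4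
        (sm 0 T) ≤ ε := by
  set I : ℕ → ℝ → ℂ := fun n t => ∫ s in Set.Ioc 0 t, α s * ee ((σ * ((m + P n) ^ 2 - Q n)) * s)
    with hI
  set D := ∫ s in Set.Ioc 0 T, ‖α s‖ with hD
  have hαe : ∀ c : ℝ, IntegrableOn (fun s => α s * ee (c * s)) (Set.Ioc 0 T) := fun c =>
    hα.mul_bdd (c := 1) (by fun_prop) (ae_of_all _ fun p => by simp)
  have hIc : ∀ n, ContinuousOn (I n) (Set.Icc 0 T) := by
    intro n
    have := intervalIntegral.continuousOn_primitive (μ := volume) (a := 0) (b := T)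
      (f := fun s => α s * ee ((σ * ((m + P n) ^ 2 - Q n)) * s)) ?_
    · exact this
    · rw [integrableOn_Icc_iff_integrableOn_Ioc]; exact hαe _
  have hIm : ∀ n, AEStronglyMeasurable (fun p : ℝ × ℝ => I n p.1) (sm 0 T) := fun n =>
    ((hIc n).comp continuousOn_fst fun p hp => ⟨hp.1.1.le, hp.1.2⟩).aestronglyMeasurable
      (measurableSet_strip 0 T)
  have hIb : ∀ n, ∀ t ≤ T, ‖I n t‖ ≤ D := by
    intro n t ht
    refine (norm_integral_le_integral_norm _).trans ?_
    simp only [norm_mul, norm_ee, mul_one]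
    exact setIntegral_mono_set hα.norm (ae_of_all _ fun x => norm_nonneg _)
      (Set.Ioc_subset_Ioc_right ht).eventuallyLE
  have hI0 : ∀ t ≤ T, Tendsto (fun n => I n t) atTop (nhds 0) := by
    intro t ht
    rcases h with h | h
    · have : ∀ n, I n t = 0 := by
        intro n
        refine integral_eq_zero_of_ae ?_
        filter_upwards [ae_restrict_of_ae_restrict_of_subset (Set.Ioc_subset_Ioc_right ht) h]
          with s hs
        simp [hs]
      simp [this]
    · refine riemann_lebesgue measurableSet_Ioc α (h.congr fun n => ?_)
      rcases hσ with rfl | rfl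
      · simp
      · rw [abs_mul]; simp
  have hIp : ∀ n, MemLp (fun p : ℝ × ℝ => ((2 * π : ℝ) : ℂ) * I n p.1) 4 (sm 0 T) := by
    intro n
    refine MemLp.const_mul (MemLp.of_bound (hIm n) D ?_) _
    filter_upwards [ae_sm_mem 0 T] with p hp
    exact hIb n _ hp.1.2
  have hlim : Tendsto (fun n => ∫ p, ‖((2 * π : ℝ) : ℂ) * I n p.1‖ ^ 4 ∂(sm 0 T)) atTop
      (nhds 0) := by
    have := tendsto_integral_of_dominated_convergence (μ := sm 0 T)
      (F := fun n (p : ℝ × ℝ) => ‖((2 * π : ℝ) : ℂ) * I n p.1‖ ^ 4) (f := fun _ => (0:ℝ))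
      (fun _ => (2 * π * D) ^ 4) (fun n => (integrable_norm_four (hIp n)).1) (integrable_const _)
      (fun n => by
        filter_upwards [ae_sm_mem 0 T] with p hp
        rw [Real.norm_of_nonneg (by positivity), norm_mul, Complex.norm_real,
          Real.norm_of_nonneg two_pi_pos.le]
        have := hIb n _ hp.1.2
        gcongr)
      (by
        filter_upwards [ae_sm_mem 0 T] with p hp
        have := (((hI0 p.1 hp.1.2).const_mul ((2 * π : ℝ) : ℂ)).norm).pow 4
        simpa using this)
    simpa using this
  filter_upwards [hlim.eventually_le_const (show (0:ℝ) < ε ^ 4 by positivity)] with n hn S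
  rw [← lpNorm_four_pow (hIp n)] at hn
  refine le_trans ?_ (le_of_pow_le_pow_left₀ (by norm_num) hε.le hn)
  have hF : Integrable (fun p : ℝ × ℝ => α p.1 * ee (m * p.2) * ee (P n * p.2 - σ * Q n * p.1))
      (sm 0 T) := by
    rw [sm_eq_prod]
    refine ((hα.comp_fst _).mul_bdd (c := 1) ?_ ?_).mul_bdd (c := 1) ?_ ?_
    · exact Continuous.aestronglyMeasurable (by fun_prop)
    · exact ae_of_all _ fun p => by simp
    · exact Continuous.aestronglyMeasurable (by fun_prop)
    · exact ae_of_all _ fun p => by simp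
  refine lpNorm_mono_ae' (aesm_Ret hF σ S) (hIp n) (ae_of_all _ fun p => ?_)
  refine (norm_Ret_mode_le σ S m (P n) (Q n) α p).trans_eq ?_
  rw [norm_mul, Complex.norm_real, Real.norm_of_nonneg two_pi_pos.le]

lemma memLp_mul_ee {F : ℝ × ℝ → ℂ} {q : ENNReal} {μ : Measure (ℝ × ℝ)} (hF : MemLp F q μ)
    {φ : ℝ × ℝ → ℝ} (hφ : Continuous φ) : MemLp (fun p => F p * ee (φ p)) q μ := by
  refine hF.mono (hF.1.mul (Continuous.aestronglyMeasurable (by fun_prop)))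
    (ae_of_all _ fun p => ?_)
  simp

lemma memLp_q43_of_two {F : ℝ × ℝ → ℂ} {a b : ℝ} (hF : MemLp F 2 (sm a b)) :
    MemLp F q43 (sm a b) := hF.mono_exponent q43_le_two

/-- Nonresonant forcing: if each Fourier mode of `h` either vanishes or is modulated off the
dispersion curve, then the Duhamel integral of the modulated function vanishes in `L⁴`, uniformly in
the frequency truncation. -/
lemma nonresonant {σ : ℝ} (hσ : σ = 1 ∨ σ = -1) {T : ℝ} (hT : 0 ≤ T) {h : ℝ × ℝ → ℂ}
    (hh : MemLp h 2 (sm 0 T)) {P Q : ℕ → ℤ}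
    (hm : ∀ m : ℤ, (∀ᵐ t ∂(volume.restrict (Set.Ioc 0 T)), fc m (fun x => h (t, x)) = 0) ∨
      Tendsto (fun n => |((m : ℝ) + P n) ^ 2 - Q n|) atTop atTop) {ε : ℝ} (hε : 0 < ε) :
    ∀ᶠ n in atTop, ∀ S : Finset ℤ,
      lpNorm (Ret σ S (fun p => h p * ee (P n * p.2 - σ * Q n * p.1)) 0) 4 (sm 0 T) ≤ ε := by
  obtain ⟨A, hA, hR⟩ := retarded_strichartz T
  set V := (sm 0 T).real Set.univ ^ (1 / 4 : ℝ) with hV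
  have hV0 : 0 ≤ V := Real.rpow_nonneg measureReal_nonneg _
  obtain ⟨M, hM⟩ : ∃ M : ℕ, A * (V * lpNorm (fun p => h p - PN M h p) 2 (sm 0 T)) ≤ ε / 2 := by
    have h1 := ((PN_tendsto hh).const_mul V).const_mul A
    rw [mul_zero, mul_zero] at h1
    exact (h1.eventually_le_const (half_pos hε)).exists
  set J := Finset.Icc (-M : ℤ) M with hJ
  set α : ℤ → ℝ → ℂ := fun m t => ((2 * π : ℝ) : ℂ)⁻¹ * fc m (fun x => h (t, x)) with hα
  have hαi : ∀ m, IntegrableOn (α m) (Set.Ioc 0 T) := by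
    intro m
    refine Integrable.const_mul ?_ _
    have hi : Integrable h (sm 0 T) := hh.integrable (by norm_num)
    have h2 := hi.norm
    rw [sm_prod] at h2
    refine h2.integral_prod_left.mono' (aesm_fc hh.1 m) (ae_of_all _ fun t => norm_fc_le m)
  set δ : ℝ := ε / (2 * (J.card + 1)) with hδ
  have hδ0 : 0 < δ := by positivity
  have hev : ∀ᶠ n in atTop, ∀ m ∈ J, ∀ S : Finset ℤ,
      lpNorm (Ret σ S (fun p => α m p.1 * ee (m * p.2) * ee (P n * p.2 - σ * Q n * p.1)) 0) 4
        (sm 0 T) ≤ δ := by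
    refine (Filter.eventually_all_finset J).2 fun m _ => mode_small hσ (hαi m) m ?_ hδ0
    refine (hm m).imp (fun h => ?_) id
    filter_upwards [h] with t ht
    simp [hα, ht]
  filter_upwards [hev] with n hn S
  set e : ℝ × ℝ → ℂ := fun p => ee (P n * p.2 - σ * Q n * p.1) with he
  have hd := PN_sub_memLp hh M
  have hde : MemLp (fun p => (h p - PN M h p) * e p) 2 (sm 0 T) := memLp_mul_ee hd (by fun_prop)
  have hF1 := memLp_q43_of_two hde
  have hmi : ∀ m ∈ J, Integrable (fun p : ℝ × ℝ => α m p.1 * ee (m * p.2) * e p) (sm 0 T) := by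
    intro m _
    rw [sm_eq_prod]
    refine (((hαi m).comp_fst _).mul_bdd (c := 1) ?_ ?_).mul_bdd (c := 1) ?_ ?_
    · exact Continuous.aestronglyMeasurable (by fun_prop)
    · exact ae_of_all _ fun p => by simp
    · exact Continuous.aestronglyMeasurable (by fun_prop)
    · exact ae_of_all _ fun p => by simp [he]
  have hsplit : (fun p => h p * e p) = fun p => (h p - PN M h p) * e p +
      ∑ m ∈ J, α m p.1 * ee (m * p.2) * e p := by
    funext p
    rw [← Finset.sum_mul, ← add_mul]
    congr 1
    have : PN M h p = ∑ m ∈ J, α m p.1 * ee (m * p.2) := by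
      simp only [PN, P1, hα, Finset.mul_sum, mul_assoc, hJ]
    rw [← this]; ring
  have hb1 := (hR σ hσ _ hF1 S T hT le_rfl)
  have hbm : ∀ m ∈ J, MemLp (Ret σ S (fun p => α m p.1 * ee (m * p.2) * e p) 0) 4 (sm 0 T) := by
    intro m hmJ
    refine MemLp.of_bound (aesm_Ret (hmi m hmJ) σ S) (2 * π * ∫ s in Set.Ioc 0 T, ‖α m s‖) ?_
    filter_upwards [ae_sm_mem 0 T] with p hp
    refine (norm_Ret_mode_le σ S m (P n) (Q n) (α m) p).trans ?_
    refine mul_le_mul_of_nonneg_left ((norm_integral_le_integral_norm _).trans ?_) two_pi_pos.le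
    simp only [norm_mul, norm_ee, mul_one]
    exact setIntegral_mono_set (hαi m).norm (ae_of_all _ fun x => norm_nonneg _)
      (Set.Ioc_subset_Ioc_right hp.1.2).eventuallyLE
  have hwhole : lpNorm (Ret σ S (fun p => h p * e p) 0) 4 (sm 0 T) ≤
      lpNorm (Ret σ S (fun p => (h p - PN M h p) * e p) 0 +
        ∑ m ∈ J, Ret σ S (fun p => α m p.1 * ee (m * p.2) * e p) 0) 4 (sm 0 T) := by
    have hFi : Integrable (fun p => h p * e p) (sm 0 T) :=
      (memLp_mul_ee hh (by fun_prop)).integrable (by norm_num)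
    refine lpNorm_mono_ae' (aesm_Ret hFi σ S) (hb1.1.add (memLp_finsetSum' _ hbm)) ?_
    filter_upwards [ae_sm_mem 0 T] with p hp
    refine le_of_eq (congrArg _ ?_)
    rw [hsplit, Ret_add (hde.integrable (by norm_num)) (integrable_finsetSum _ hmi) σ S hp.1.2,
      Ret_sum J hmi σ S hp.1.2]
    simp
  refine hwhole.trans ((lpNorm_add_le hb1.1 (by norm_num)).trans ?_)
  have hs : lpNorm (∑ m ∈ J, Ret σ S (fun p => α m p.1 * ee (m * p.2) * e p) 0) 4 (sm 0 T) ≤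
      J.card * δ := by
    refine (lpNorm_sum_le hbm (by norm_num)).trans ?_
    rw [← nsmul_eq_mul]
    exact Finset.sum_le_card_nsmul _ _ _ fun m hmJ => hn m hmJ S
  have h1 : lpNorm (Ret σ S (fun p => (h p - PN M h p) * e p) 0) 4 (sm 0 T) ≤ ε / 2 := by
    refine hb1.2.trans (le_trans (mul_le_mul_of_nonneg_left ?_ hA) hM)
    refine (lpNorm_q43_le_two hde).trans (mul_le_mul_of_nonneg_left ?_ hV0)
    exact lpNorm_mono_ae' hde.1 hd (ae_of_all _ fun p => by simp [he])
  have h2 : J.card * δ ≤ ε / 2 := by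
    rw [hδ, mul_div_assoc', div_le_div_iff₀ (by positivity) (by norm_num)]
    nlinarith
  linarith

/-- For a fixed mode, modulation at spatial frequencies tending to infinity kills the Duhamel
integral pointwise in time. -/
lemma co_tendsto_zero {σ : ℝ} {T : ℝ} {h : ℝ × ℝ → ℂ} (hh : MemLp h 2 (sm 0 T)) {P Q : ℕ → ℤ}
    (hP : Tendsto (fun n => |(P n : ℝ)|) atTop atTop) (k : ℤ) :
    Tendsto (fun n => co σ k (fun p => h p * ee (P n * p.2 - σ * Q n * p.1)) 0 T) atTop
      (nhds 0) := by
  have hi : Integrable h (sm 0 T) := hh.integrable (by norm_num)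
  have hi2 := hi.norm
  rw [sm_prod] at hi2
  have hfi : ∀ j, IntegrableOn (fun t => ‖fc j (fun x => h (t, x))‖) (Set.Ioc 0 T) := fun j =>
    (Integrable.mono' hi2.integral_prod_left (aesm_fc hh.1 j)
      (ae_of_all _ fun t => norm_fc_le j)).norm
  have hb : ∀ n, ‖co σ k (fun p => h p * ee (P n * p.2 - σ * Q n * p.1)) 0 T‖ ≤
      ∫ t in Set.Ioc 0 T, ‖fc (k - P n) (fun x => h (t, x))‖ := by
    intro n
    have hii := integrable_mul_ee (σ := σ) (k := k)
      ((memLp_mul_ee hh (φ := fun p => P n * p.2 - σ * Q n * p.1) (by fun_prop)).integrable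
        (by norm_num))
    unfold co
    rw [sm_prod] at hii ⊢
    rw [integral_prod _ hii]
    refine (norm_integral_le_integral_norm _).trans_eq ?_
    refine integral_congr_ae (ae_of_all _ fun t => ?_)
    have : ∀ x, h (t, x) * ee (P n * x - σ * Q n * t) * ee (σ * k ^ 2 * t - k * x) =
        ee (σ * (k ^ 2 - Q n) * t) * (h (t, x) * ee (-((k - P n : ℤ) * x))) := by
      intro x
      rw [mul_assoc (h (t, x)), ← ee_add, mul_left_comm (ee _) (h (t, x)), ← ee_add]
      congr 2; push_cast; ring
    simp only [this]
    rw [integral_const_mul, norm_mul, norm_ee, one_mul]; rfl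
  refine squeeze_zero_norm hb ?_
  have := tendsto_integral_of_dominated_convergence (μ := volume.restrict (Set.Ioc 0 T))
    (F := fun (n : ℕ) t => ‖fc (k - P n) (fun x => h (t, x))‖) (f := fun _ => (0:ℝ))
    (fun t => ∫ x, ‖h (t, x)‖ ∂mx) (fun n => (hfi _).1) hi2.integral_prod_left
    (fun n => ae_of_all _ fun t => by rw [norm_norm]; exact norm_fc_le _)
    (ae_of_all _ fun t => ?_)
  · simpa using this
  · have hl : Tendsto (fun n => |-((k : ℝ) - P n)|) atTop atTop := by
      refine tendsto_atTop_mono (fun n => ?_) (tendsto_atTop_add_const_right _ (-|(k:ℝ)|) hP)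
      rw [neg_sub]
      have := abs_sub_abs_le_abs_sub (P n : ℝ) k
      linarith
    have h1 := (riemann_lebesgue (s := Set.Ioc 0 (2 * π)) measurableSet_Ioc
      (fun x => h (t, x)) hl).norm
    rw [norm_zero] at h1
    refine h1.congr fun n => ?_
    simp only [fc, mx]
    congr 3; funext x
    push_cast
    congr 2; ring

/-! ### The continuity argument in `L⁴` -/

lemma sm_self (a : ℝ) : sm a a = 0 := by simp [sm, strip]

/-- Hölder's inequality for the difference of two cubic nonlinearities. -/
lemma lpNorm_cubic_le {α : Type*} [MeasurableSpace α] {μ : Measure α} {z w G : α → ℂ}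
    (hz : MemLp z 4 μ) (hw : MemLp w 4 μ) (hG : MemLp G q43 μ)
    (hb : ∀ p, ‖G p‖ ≤ 5 * (‖w p‖ ^ 2 * ‖z p‖ + ‖z p‖ ^ 3)) :
    lpNorm G q43 μ ≤ 5 * (lpNorm w 4 μ ^ 2 * lpNorm z 4 μ + lpNorm z 4 μ ^ 3) := by
  have m1 : MemLp (fun p => ‖w p * w p * z p‖) q43 μ := (memLp_mul_three hw hw hz).norm
  have m2 : MemLp (fun p => ‖z p * z p * z p‖) q43 μ := (memLp_mul_three hz hz hz).norm
  have h1 : lpNorm (fun p => ‖w p * w p * z p‖) q43 μ ≤ lpNorm w 4 μ ^ 2 * lpNorm z 4 μ := by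
    rw [lpNorm_norm (memLp_mul_three hw hw hz).1, sq]
    exact lpNorm_mul_three hw hw hz
  have h2 : lpNorm (fun p => ‖z p * z p * z p‖) q43 μ ≤ lpNorm z 4 μ ^ 3 := by
    rw [lpNorm_norm (memLp_mul_three hz hz hz).1, pow_succ, sq]
    exact lpNorm_mul_three hz hz hz
  have m3 := (m1.add m2).const_smul (5 : ℝ)
  refine (lpNorm_mono_ae' hG.1 m3 (ae_of_all _ fun p => ?_)).trans ?_
  · refine (hb p).trans (le_trans (le_of_eq ?_) (le_abs_self _))
    simp only [Pi.smul_apply, Pi.add_apply, smul_eq_mul, norm_mul]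
    ring
  · rw [lpNorm_const_smul]
    have := lpNorm_add_le m1 one_le_q43 (g := fun p => ‖z p * z p * z p‖)
    have e : ((‖(5:ℝ)‖₊ : NNReal) : ℝ) = 5 := by simp
    rw [e]
    exact mul_le_mul_of_nonneg_left (this.trans (add_le_add h1 h2)) (by norm_num)

/-- Continuity argument. If the `L⁴` norm of `z n` up to time `t` is controlled, up to a vanishing
error, by the cubic difference `G n`, whose background `w n` has uniformly equicontinuous `L⁴` mass
in time, then `z n → 0` in `L⁴`. -/
lemma bootstrap {T : ℝ} (hT : 0 ≤ T) {z w G : ℕ → ℝ × ℝ → ℂ} (hz : ∀ n, MemLp (z n) 4 (sm 0 T))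
    (hw : ∀ n, MemLp (w n) 4 (sm 0 T)) (hG : ∀ n, MemLp (G n) q43 (sm 0 T))
    (hGb : ∀ n p, ‖G n p‖ ≤ 5 * (‖w n p‖ ^ 2 * ‖z n p‖ + ‖z n p‖ ^ 3)) {W : ℝ → ℝ}
    (hW : ContinuousOn W (Set.Icc 0 T))
    (hWw : ∀ n a b, 0 ≤ a → a ≤ b → b ≤ T → ∫ p, ‖w n p‖ ^ 4 ∂(sm a b) ≤ W b - W a)
    {B : ℝ} (hB : 0 ≤ B)
    (H : ∀ ε > 0, ∀ᶠ n in atTop, ∀ t ∈ Set.Icc 0 T,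
      lpNorm (z n) 4 (sm 0 t) ≤ ε + B * lpNorm (G n) q43 (sm 0 t)) :
    Tendsto (fun n => lpNorm (z n) 4 (sm 0 T)) atTop (nhds 0) := by
  obtain ⟨δ, hδ, hδB⟩ : ∃ δ > 0, 5 * B * δ ^ 2 ≤ 1 / 4 := by
    refine ⟨1 / (20 * (B + 1)), by positivity, ?_⟩
    rw [div_pow, ← mul_div_assoc, div_le_div_iff₀ (by positivity) (by norm_num)]
    nlinarith
  obtain ⟨D, hD, hDW⟩ : ∃ D ≥ 0, W T - W 0 ≤ D ^ 4 := by
    refine ⟨1 + |W T - W 0|, by positivity, ?_⟩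
    have h1 := abs_nonneg (W T - W 0)
    have h2 := le_abs_self (W T - W 0)
    have h3 : 1 + |W T - W 0| ≤ (1 + |W T - W 0|) ^ 4 := le_self_pow₀ (by linarith) (by norm_num)
    linarith
  have huc := isCompact_Icc.uniformContinuousOn_of_continuous hW
  rw [Metric.uniformContinuousOn_iff] at huc
  obtain ⟨η, hη, hηW⟩ := huc (δ ^ 4) (by positivity)
  have mz : ∀ n a b, 0 ≤ a → b ≤ T → MemLp (z n) 4 (sm a b) := fun n a b ha hb =>
    (hz n).mono_measure (sm_mono ha hb)
  have mw : ∀ n a b, 0 ≤ a → b ≤ T → MemLp (w n) 4 (sm a b) := fun n a b ha hb =>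
    (hw n).mono_measure (sm_mono ha hb)
  have mG : ∀ n a b, 0 ≤ a → b ≤ T → MemLp (G n) q43 (sm a b) := fun n a b ha hb =>
    (hG n).mono_measure (sm_mono ha hb)
  have cub : ∀ n a b, 0 ≤ a → b ≤ T → lpNorm (G n) q43 (sm a b) ≤
      5 * (lpNorm (w n) 4 (sm a b) ^ 2 * lpNorm (z n) 4 (sm a b) + lpNorm (z n) 4 (sm a b) ^ 3) :=
    fun n a b ha hb => lpNorm_cubic_le (mz n a b ha hb) (mw n a b ha hb) (mG n a b ha hb) (hGb n)
  have wD : ∀ n, ∀ a, 0 ≤ a → a ≤ T → lpNorm (w n) 4 (sm 0 a) ≤ D := by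
    intro n a ha haT
    refine le_of_pow_le_pow_left₀ (n := 4) (by norm_num) hD (le_trans ?_ hDW)
    refine (pow_le_pow_left₀ lpNorm_nonneg
      (lpNorm_mono_meas (hw n) (sm_mono le_rfl haT)) 4).trans ?_
    rw [lpNorm_four_pow (hw n)]
    exact hWw n 0 T le_rfl hT le_rfl
  -- one time step of length less than `η`
  have step : ∀ a b, 0 ≤ a → a ≤ b → b ≤ T → b - a < η →
      (∀ ε > 0, ∀ᶠ n in atTop, lpNorm (z n) 4 (sm 0 a) ≤ ε) →
      ∀ ε > 0, ∀ᶠ n in atTop, lpNorm (z n) 4 (sm 0 b) ≤ ε := by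
    intro a b ha hab hbT hba hsmall ε hε
    set τ := min ε (δ / 2) with hτ
    have hτ0 : 0 < τ := lt_min hε (by positivity)
    have hτε : τ ≤ ε := min_le_left _ _
    have hτδ : τ < δ := lt_of_le_of_lt (min_le_right _ _) (by linarith)
    set e₀ := min 1 (τ / (20 * ((B + 1) * (D ^ 2 + 1)))) with he₀
    have he0 : 0 < e₀ := lt_min one_pos (by positivity)
    have he1 : e₀ ≤ 1 := min_le_left _ _
    have he2 : 5 * B * (D ^ 2 * e₀ + e₀ ^ 3) ≤ τ / 4 := by
      have h1 : e₀ * (20 * ((B + 1) * (D ^ 2 + 1))) ≤ τ := by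
        rw [← le_div_iff₀ (by positivity)]; exact min_le_right _ _
      have h2 : e₀ ^ 3 ≤ e₀ := by
        calc e₀ ^ 3 ≤ e₀ ^ 1 := pow_le_pow_of_le_one he0.le he1 (by norm_num)
          _ = e₀ := pow_one _
      have h3 : 5 * B * (D ^ 2 * e₀ + e₀ ^ 3) ≤ 5 * B * (D ^ 2 * e₀ + e₀) := by gcongr
      have h4 : 0 ≤ e₀ * (D ^ 2 + 1) := by positivity
      nlinarith
    filter_upwards [hsmall e₀ he0, H (τ / 4) (by positivity)] with n hn hH
    set y : ℝ → ℝ := fun t => lpNorm (z n) 4 (sm a t) with hy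
    have y0 : ∀ t, 0 ≤ y t := fun t => lpNorm_nonneg
    have base : ∀ t ∈ Set.Icc a b,
        lpNorm (z n) 4 (sm 0 t) ≤ τ / 2 + y t / 4 + 5 * B * y t ^ 3 := by
      intro t ht
      have htT := ht.2.trans hbT
      have h1 := hH t ⟨ha.trans ht.1, htT⟩
      have h2 : lpNorm (G n) q43 (sm 0 t) ≤
          lpNorm (G n) q43 (sm 0 a) + lpNorm (G n) q43 (sm a t) := by
        have := mG n 0 t le_rfl htT
        rw [sm_add ha ht.1] at this ⊢
        exact lpNorm_q43_add_measure this
      have h3 : lpNorm (G n) q43 (sm 0 a) ≤ 5 * (D ^ 2 * e₀ + e₀ ^ 3) := by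
        refine (cub n 0 a le_rfl (hab.trans hbT)).trans ?_
        have := wD n a ha (hab.trans hbT)
        have q1 : 0 ≤ lpNorm (w n) 4 (sm 0 a) := lpNorm_nonneg
        have q2 : 0 ≤ lpNorm (z n) 4 (sm 0 a) := lpNorm_nonneg
        gcongr
      have h4 : lpNorm (G n) q43 (sm a t) ≤ 5 * (δ ^ 2 * y t + y t ^ 3) := by
        refine (cub n a t ha htT).trans ?_
        have q1 : 0 ≤ lpNorm (w n) 4 (sm a t) := lpNorm_nonneg
        have : lpNorm (w n) 4 (sm a t) ≤ δ := by
          refine le_of_pow_le_pow_left₀ (n := 4) (by norm_num) hδ.le ?_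
          rw [lpNorm_four_pow (mw n a t ha htT)]
          refine (hWw n a t ha ht.1 htT).trans ((le_abs_self _).trans ?_)
          refine (hηW t ⟨ha.trans ht.1, htT⟩ a ⟨ha, hab.trans hbT⟩ ?_).le
          rw [Real.dist_eq, abs_of_nonneg (by linarith [ht.1])]
          linarith [ht.2]
        have := y0 t
        gcongr
      have h5 : B * lpNorm (G n) q43 (sm 0 t) ≤
          B * (5 * (D ^ 2 * e₀ + e₀ ^ 3) + 5 * (δ ^ 2 * y t + y t ^ 3)) :=
        mul_le_mul_of_nonneg_left (by linarith) hB
      have h6 : 5 * B * δ ^ 2 * y t ≤ 1 / 4 * y t := mul_le_mul_of_nonneg_right hδB (y0 t)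
      nlinarith
    have ymono : ∀ t ∈ Set.Icc a b, y t ≤ lpNorm (z n) 4 (sm 0 t) := fun t ht =>
      lpNorm_mono_meas (mz n 0 t le_rfl (ht.2.trans hbT)) (sm_mono ha le_rfl)
    have gap : ∀ t ∈ Set.Icc a b, y t ≤ δ → lpNorm (z n) 4 (sm 0 t) ≤ τ := by
      intro t ht hyt
      have h1 := base t ht
      have h2 := ymono t ht
      have h3 : 5 * B * y t ^ 3 ≤ 1 / 4 * y t := by
        have : y t ^ 2 ≤ δ ^ 2 := pow_le_pow_left₀ (y0 t) hyt 2
        have h4 : 5 * B * y t ^ 2 ≤ 1 / 4 := le_trans (by gcongr) hδB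
        calc 5 * B * y t ^ 3 = 5 * B * y t ^ 2 * y t := by ring
          _ ≤ _ := mul_le_mul_of_nonneg_right h4 (y0 t)
      linarith
    have hyb : y b ≤ δ := by
      by_contra hcon
      push Not at hcon
      have hcont := continuousOn_integral_strip (integrable_norm_four (mz n a b ha hbT))
      obtain ⟨t, ht, hty⟩ : ∃ t ∈ Set.Icc a b, ∫ p, ‖z n p‖ ^ 4 ∂(sm a t) = δ ^ 4 := by
        refine intermediate_value_Icc hab hcont ⟨?_, ?_⟩
        · simp only [sm_self, integral_zero_measure]; positivity
        · rw [← lpNorm_four_pow (mz n a b ha hbT)]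
          exact pow_le_pow_left₀ hδ.le hcon.le 4
      rw [← lpNorm_four_pow (mz n a t ha (ht.2.trans hbT))] at hty
      have hyt : y t = δ := (pow_left_inj₀ lpNorm_nonneg hδ.le (n := 4) (by norm_num)).mp hty
      have := gap t ht hyt.le
      have := ymono t ht
      linarith
    exact (gap b ⟨hab, le_rfl⟩ hyb).trans hτε
  have iter : ∀ j : ℕ, ∀ ε > 0, ∀ᶠ n in atTop, lpNorm (z n) 4 (sm 0 (min (j * (η / 2)) T)) ≤ ε := by
    intro j
    induction j with
    | zero =>
      intro ε hε
      refine Eventually.of_forall fun n => ?_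
      simp only [Nat.cast_zero, zero_mul, min_eq_left hT, sm_self]
      simpa using hε.le
    | succ j ih =>
      refine step _ _ (le_min (by positivity) hT) (min_le_min_right _ ?_) (min_le_right _ _) ?_ ih
      · push_cast; nlinarith
      · push_cast
        rcases le_total ((j : ℝ) * (η / 2)) T with h | h
        · rw [min_eq_left h]
          have := min_le_left (((j : ℝ) + 1) * (η / 2)) T
          linarith
        · rw [min_eq_right h]
          have := min_le_right (((j : ℝ) + 1) * (η / 2)) T
          linarith
  obtain ⟨j, hj⟩ := exists_nat_ge (T / (η / 2))
  rw [div_le_iff₀ (by positivity)] at hj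
  have := iter j
  rw [min_eq_right hj] at this
  rw [Metric.tendsto_nhds]
  intro ε hε
  filter_upwards [this (ε / 2) (by positivity)] with n hn
  rw [Real.dist_eq, sub_zero, abs_of_nonneg lpNorm_nonneg]
  linarith

/-! ### The fundamental theorem of calculus in the sense of distributions -/

lemma smoothTransition_deriv_eq_zero {r : ℝ} (hr : r ∉ Set.Icc (0:ℝ) 1) :
    deriv Real.smoothTransition r = 0 := by
  rw [Set.mem_Icc, not_and_or, not_le, not_le] at hr
  rcases hr with hr | hr
  · have : Real.smoothTransition =ᶠ[nhds r] fun _ => 0 := by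
      filter_upwards [eventually_lt_nhds hr] with y hy
      exact Real.smoothTransition.zero_of_nonpos hy.le
    rw [this.deriv_eq, deriv_const]
  · have : Real.smoothTransition =ᶠ[nhds r] fun _ => 1 := by
      filter_upwards [eventually_gt_nhds hr] with y hy
      exact Real.smoothTransition.one_of_one_le hy.le
    rw [this.deriv_eq, deriv_const]

lemma continuous_deriv_smoothTransition : Continuous (deriv Real.smoothTransition) :=
  (Real.smoothTransition.contDiff (n := 1)).continuous_deriv le_rfl

/-- Averages of a continuous function against the approximate identity `ε⁻¹ h'((· - s)/ε)`, with
`h` the smooth transition function and `ε = 1/(n+1)`. -/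
lemma tendsto_average {a : ℝ → ℂ} (ha : Continuous a) (s : ℝ) :
    Tendsto (fun n : ℕ => ∫ τ, (((n + 1 : ℝ) * deriv Real.smoothTransition ((n + 1 : ℝ) * (τ - s)) :
      ℝ) : ℂ) * a τ) atTop (nhds (a s)) := by
  have hd := continuous_deriv_smoothTransition
  have hrw : ∀ n : ℕ, ∫ τ, (((n + 1 : ℝ) * deriv Real.smoothTransition ((n + 1 : ℝ) * (τ - s)) :
      ℝ) : ℂ) * a τ = ∫ r in Set.Icc (0:ℝ) 1, ((deriv Real.smoothTransition r : ℝ) : ℂ) *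
        a (s + (n + 1 : ℝ)⁻¹ * r) := by
    intro n
    have hn : (n + 1 : ℝ) ≠ 0 := by positivity
    rw [setIntegral_eq_integral_of_forall_compl_eq_zero fun r hr => by
      rw [smoothTransition_deriv_eq_zero hr]; simp]
    have e1 := integral_sub_right_eq_self (μ := volume) (fun r =>
      (((n + 1 : ℝ) * deriv Real.smoothTransition ((n + 1 : ℝ) * r) : ℝ) : ℂ) * a (s + r)) s
    have e2 := Measure.integral_comp_mul_left (fun r =>
      ((deriv Real.smoothTransition r : ℝ) : ℂ) * a (s + (n + 1 : ℝ)⁻¹ * r)) (n + 1 : ℝ)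
    simp only [add_sub_cancel] at e1
    rw [e1]
    simp only [← mul_assoc, inv_mul_cancel₀ hn, one_mul] at e2
    push_cast
    simp only [mul_assoc]
    rw [integral_const_mul, e2, abs_of_pos (by positivity), Complex.real_smul, ← mul_assoc]
    push_cast
    rw [mul_inv_cancel₀ (by exact_mod_cast hn), one_mul]
  simp only [hrw]
  have hone : ∫ r in Set.Icc (0:ℝ) 1, ((deriv Real.smoothTransition r : ℝ) : ℂ) * a s = a s := by
    rw [integral_mul_const, integral_Icc_eq_integral_Ioc, ← intervalIntegral.integral_of_le
      zero_le_one, intervalIntegral.integral_ofReal, intervalIntegral.integral_deriv_eq_sub]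
    · simp [Real.smoothTransition.zero_of_nonpos, Real.smoothTransition.one_of_one_le]
    · exact fun x _ => (Real.smoothTransition.contDiff (n := 1)).differentiable
        (by norm_num) |>.differentiableAt
    · exact hd.intervalIntegrable _ _
  rw [← hone]
  obtain ⟨C, hC⟩ := (isCompact_Icc (a := s) (b := s + 1)).exists_bound_of_continuousOn
    ha.continuousOn
  refine tendsto_integral_of_dominated_convergence
    (fun r => |deriv Real.smoothTransition r| * C) (fun n => ?_) ?_ (fun n => ?_) ?_
  · exact Continuous.aestronglyMeasurable (by fun_prop)
  · exact (Continuous.integrableOn_Icc (by fun_prop))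
  · filter_upwards [ae_restrict_mem measurableSet_Icc] with r hr
    rw [norm_mul, Complex.norm_real, Real.norm_eq_abs]
    refine mul_le_mul_of_nonneg_left (hC _ ⟨?_, ?_⟩) (abs_nonneg _)
    · have : 0 ≤ (n + 1 : ℝ)⁻¹ * r := mul_nonneg (by positivity) hr.1
      linarith
    · have : (n + 1 : ℝ)⁻¹ * r ≤ 1 := mul_le_one₀ (inv_le_one_of_one_le₀ (by linarith [n.cast_nonneg (α := ℝ)])) hr.1 hr.2
      linarith
  · refine ae_of_all _ fun r => ?_
    refine Tendsto.const_mul _ ((ha.tendsto s).comp ?_)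
    have : Tendsto (fun n : ℕ => s + (n + 1 : ℝ)⁻¹ * r) atTop (nhds (s + 0 * r)) := by
      have h := tendsto_one_div_add_atTop_nhds_zero_nat (𝕜 := ℝ)
      simp only [one_div] at h
      exact (h.mul_const r).const_add s
    simpa using this

/-- If `b = -i a'` in the sense of distributions with `a` continuous and `b` locally integrable,
then the fundamental theorem of calculus holds. -/
lemma weak_ftc {a b : ℝ → ℂ} (ha : Continuous a) (hb : ∀ c d, IntegrableOn b (Set.Ioc c d))
    (h : ∀ ψ : ℝ → ℝ, ContDiff ℝ (⊤ : ℕ∞) ψ → (∃ T > 0, ∀ τ, T ≤ |τ| → ψ τ = 0) →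
      ∫ τ, ((ψ τ : ℂ) * b τ - Complex.I * ((deriv ψ τ : ℝ) : ℂ) * a τ) = 0)
    {s t : ℝ} (hst : s ≤ t) : a t - a s = Complex.I * ∫ τ in Set.Ioc s t, b τ := by
  set H := Real.smoothTransition with hH
  have hHc : ContDiff ℝ (⊤ : ℕ∞) H := Real.smoothTransition.contDiff
  have hHd : ∀ x, DifferentiableAt ℝ H x := fun x =>
    (hHc.differentiable (by simp)).differentiableAt
  set ψ : ℕ → ℝ → ℝ := fun n τ => H ((n + 1 : ℝ) * (τ - s)) - H ((n + 1 : ℝ) * (τ - t)) with hψ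
  have hψc : ∀ n, ContDiff ℝ (⊤ : ℕ∞) (ψ n) := fun n =>
    (hHc.comp (by fun_prop)).sub (hHc.comp (by fun_prop))
  have hψd : ∀ n τ, deriv (ψ n) τ = (n + 1 : ℝ) * deriv H ((n + 1 : ℝ) * (τ - s)) -
      (n + 1 : ℝ) * deriv H ((n + 1 : ℝ) * (τ - t)) := by
    intro n τ
    have key : ∀ c, HasDerivAt (fun τ => H ((n + 1 : ℝ) * (τ - c)))
        ((n + 1 : ℝ) * deriv H ((n + 1 : ℝ) * (τ - c))) τ := by
      intro c
      have h1 : HasDerivAt (fun τ : ℝ => (n + 1 : ℝ) * (τ - c)) (n + 1 : ℝ) τ := by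
        simpa using ((hasDerivAt_id τ).sub_const c).const_mul (n + 1 : ℝ)
      have := (hHd ((n + 1 : ℝ) * (τ - c))).hasDerivAt.comp τ h1
      rwa [mul_comm] at this
    exact ((key s).sub (key t)).deriv
  have h01 : ∀ x, 0 ≤ H x ∧ H x ≤ 1 := fun x =>
    ⟨Real.smoothTransition.nonneg x, Real.smoothTransition.le_one x⟩
  -- the cutoffs are supported in `(s, t + 1]`
  have hψ0 : ∀ n τ, τ ∉ Set.Ioc s (t + 1) → ψ n τ = 0 := by
    intro n τ hτ
    rw [Set.mem_Ioc, not_and_or, not_lt, not_le] at hτ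
    have hn : (1:ℝ) ≤ n + 1 := by linarith [n.cast_nonneg (α := ℝ)]
    simp only [hψ]
    rcases hτ with hτ | hτ
    · rw [hH, Real.smoothTransition.zero_of_nonpos, Real.smoothTransition.zero_of_nonpos, sub_zero]
      · exact mul_nonpos_of_nonneg_of_nonpos (by linarith) (by linarith)
      · exact mul_nonpos_of_nonneg_of_nonpos (by linarith) (by linarith)
    · rw [hH, Real.smoothTransition.one_of_one_le, Real.smoothTransition.one_of_one_le, sub_self]
      · nlinarith
      · nlinarith
  have hψb : ∀ n τ, |ψ n τ| ≤ 1 := by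
    intro n τ
    rw [abs_le]
    have h1 := h01 ((n + 1 : ℝ) * (τ - s))
    have h2 := h01 ((n + 1 : ℝ) * (τ - t))
    constructor <;> simp only [hψ] <;> linarith [h1.1, h1.2, h2.1, h2.2]
  have hψm : ∀ n, Continuous fun τ => ((ψ n τ : ℝ) : ℂ) := fun n =>
    Complex.continuous_ofReal.comp (hψc n).continuous
  have hib : ∀ n, Integrable (fun τ => ((ψ n τ : ℝ) : ℂ) * b τ) := by
    intro n
    rw [← integrableOn_iff_integrable_of_support_subset (s := Set.Ioc s (t + 1))]
    · exact (hb s (t + 1)).bdd_mul (c := 1) (hψm n).aestronglyMeasurable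
        (ae_of_all _ fun τ => by simpa using hψb n τ)
    · intro τ hτ
      by_contra hc
      exact hτ (by simp [hψ0 n τ hc])
  have hid : ∀ (n : ℕ) (c : ℝ), Integrable (fun τ => (((n + 1 : ℝ) *
      deriv H ((n + 1 : ℝ) * (τ - c)) : ℝ) : ℂ) * a τ) := by
    intro n c
    have hd := continuous_deriv_smoothTransition
    have hn : (1:ℝ) ≤ n + 1 := by linarith [n.cast_nonneg (α := ℝ)]
    refine Continuous.integrable_of_hasCompactSupport (by fun_prop) ?_
    refine HasCompactSupport.of_support_subset_isCompact (isCompact_Icc (a := c) (b := c + 1)) ?_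
    intro τ hτ
    by_contra hc
    refine hτ ?_
    have : (n + 1 : ℝ) * (τ - c) ∉ Set.Icc (0:ℝ) 1 := by
      rw [Set.mem_Icc, not_and_or, not_le, not_le] at hc ⊢
      rcases hc with hc | hc
      · left; nlinarith
      · right; nlinarith
    simp [hH, smoothTransition_deriv_eq_zero this]
  have hid2 : ∀ n, Integrable (fun τ => Complex.I * ((deriv (ψ n) τ : ℝ) : ℂ) * a τ) := by
    intro n
    have := ((hid n s).sub (hid n t)).const_mul Complex.I
    refine this.congr (ae_of_all _ fun τ => ?_)
    simp only [hψd, Pi.sub_apply]; push_cast; ring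
  have heq : ∀ n, ∫ τ, ((ψ n τ : ℝ) : ℂ) * b τ = Complex.I *
      ((∫ τ, (((n + 1 : ℝ) * deriv H ((n + 1 : ℝ) * (τ - s)) : ℝ) : ℂ) * a τ) -
      ∫ τ, (((n + 1 : ℝ) * deriv H ((n + 1 : ℝ) * (τ - t)) : ℝ) : ℂ) * a τ) := by
    intro n
    have h1 := h (ψ n) (hψc n) ⟨|s| + |t| + 2, by positivity, fun τ hτ => hψ0 n τ ?_⟩
    · rw [integral_sub (hib n) (hid2 n), sub_eq_zero] at h1
      rw [h1, ← integral_sub (hid n s) (hid n t), ← integral_const_mul]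
      refine integral_congr_ae (ae_of_all _ fun τ => ?_)
      simp only [hψd]; push_cast; ring
    · rintro ⟨h3, h4⟩
      have : |τ| ≤ |s| + |t| + 1 := by
        rw [abs_le]
        have := neg_abs_le s
        have := le_abs_self t
        have := abs_nonneg s
        have := abs_nonneg t
        constructor <;> linarith
      linarith
  have hL : Tendsto (fun n => ∫ τ, ((ψ n τ : ℝ) : ℂ) * b τ) atTop
      (nhds (∫ τ in Set.Ioc s t, b τ)) := by
    have hset : ∀ n, ∫ τ, ((ψ n τ : ℝ) : ℂ) * b τ =
        ∫ τ in Set.Ioc s (t + 1), ((ψ n τ : ℝ) : ℂ) * b τ := by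
      intro n
      rw [setIntegral_eq_integral_of_forall_compl_eq_zero fun τ hτ => by simp [hψ0 n τ hτ]]
    have hlim : ∫ τ in Set.Ioc s t, b τ =
        ∫ τ in Set.Ioc s (t + 1), (Set.Ioc s t).indicator b τ := by
      rw [setIntegral_indicator measurableSet_Ioc, Set.inter_eq_right.2
        (Set.Ioc_subset_Ioc_right (by linarith))]
    rw [hlim]
    simp only [hset]
    refine tendsto_integral_of_dominated_convergence (fun τ => ‖b τ‖)
      (fun n => (hib n).1.restrict) (hb s (t + 1)).norm (fun n => ae_of_all _ fun τ => ?_) ?_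
    · rw [norm_mul]
      refine mul_le_of_le_one_left (norm_nonneg _) ?_
      simpa using hψb n τ
    · have hbig : ∀ c : ℝ, 0 < c → ∀ᶠ n : ℕ in atTop, 1 ≤ (n + 1 : ℝ) * c := by
        intro c hc
        obtain ⟨N, hN⟩ := exists_nat_ge (1 / c)
        filter_upwards [eventually_ge_atTop N] with n hn
        rw [div_le_iff₀ hc] at hN
        have : (N : ℝ) ≤ n := by exact_mod_cast hn
        nlinarith
      filter_upwards [ae_restrict_mem measurableSet_Ioc] with τ hτ
      refine tendsto_const_nhds.congr' ?_
      by_cases ht : τ ≤ t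
      · rw [Set.indicator_of_mem (show τ ∈ Set.Ioc s t from ⟨hτ.1, ht⟩)]
        filter_upwards [hbig (τ - s) (by linarith [hτ.1])] with n hn
        simp only [hψ, hH]
        rw [Real.smoothTransition.one_of_one_le hn, Real.smoothTransition.zero_of_nonpos
          (mul_nonpos_of_nonneg_of_nonpos (by positivity) (by linarith))]
        simp
      · rw [Set.indicator_of_notMem (fun h => ht h.2)]
        push Not at ht
        filter_upwards [hbig (τ - s) (by linarith [hτ.1]), hbig (τ - t) (by linarith)] with n h1 h2
        simp only [hψ, hH]
        rw [Real.smoothTransition.one_of_one_le h1, Real.smoothTransition.one_of_one_le h2]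
        simp
  have hR := ((tendsto_average ha s).sub (tendsto_average ha t)).const_mul Complex.I
  have := tendsto_nhds_unique (hL.congr heq) hR
  rw [this, ← mul_assoc, Complex.I_mul_I]
  ring

/-! ### Duhamel formula for distributional solutions -/

/-- The gauged cubic nonlinearity `θ z + γ |z|² z`. -/
def nl (γ θ : ℝ) (z : ℂ) : ℂ := (θ : ℂ) * z + (γ : ℂ) * ((‖z‖ ^ 2 : ℝ) : ℂ) * z

lemma nl_ee_mul (γ θ r : ℝ) (z : ℂ) : nl γ θ (ee r * z) = ee r * nl γ θ z := by
  unfold nl; rw [norm_mul, norm_ee, one_mul]; ring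

lemma memLp_cubic {α : Type*} [MeasurableSpace α] {μ : Measure α} {f : α → ℂ}
    (hf : MemLp f 4 μ) : MemLp (fun p => ((‖f p‖ ^ 2 : ℝ) : ℂ) * f p) q43 μ := by
  have h := memLp_mul_three hf hf.star hf
  convert h using 2 with p
  rw [Pi.star_apply, RCLike.star_def, Complex.mul_conj, Complex.normSq_eq_norm_sq]

lemma memLp_nl {f : ℝ × ℝ → ℂ} {a b : ℝ} (γ θ : ℝ) (hf : MemLp f 4 (sm a b)) :
    MemLp (fun p => nl γ θ (f p)) q43 (sm a b) := by
  have h1 : MemLp f q43 (sm a b) :=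
    hf.mono_exponent (q43_le_two.trans (by norm_num))
  have h := (h1.const_mul (θ : ℂ)).add ((memLp_cubic hf).const_mul (γ : ℂ))
  refine h.ae_eq (ae_of_all _ fun p => ?_)
  simp only [Pi.add_apply, nl]; ring

lemma norm_fc_sq_le {g : ℝ → ℂ} (hg : MemLp g 2 mx) (k : ℤ) :
    ‖fc k g‖ ^ 2 ≤ 2 * π * ∫ x, ‖g x‖ ^ 2 ∂mx := by
  have h := le_hasSum (hasSum_fc hg) k (fun j _ => by positivity)
  have hp := two_pi_pos
  calc ‖fc k g‖ ^ 2 = 2 * π * ((2 * π)⁻¹ * ‖fc k g‖ ^ 2) := by field_simp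
    _ ≤ _ := by gcongr

section Solution

variable {γ : ℝ} {u : ℝ → ℝ → ℂ} {u0 : ℝ → ℂ}

lemma memLp_of_periodicL2 {v : ℝ → ℂ} (hv : IsPeriodicL2 v) : MemLp v 2 mx :=
  (memLp_two_iff_integrable_sq_norm hv.2.1).2 hv.2.2

lemma sol_slice (hu : IsGlobalSolution γ u u0) (τ : ℝ) : MemLp (u τ) 2 mx :=
  memLp_of_periodicL2 (hu.1 τ)

lemma sol_memLp (hu : IsGlobalSolution γ u u0) (a b : ℝ) :
    MemLp (fun p : ℝ × ℝ => u p.1 p.2) 4 (sm a b) := by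
  have h := hu.2.2.1 (|a| + |b| + 1) (by positivity)
  have h4 : MemLp (fun p : ℝ × ℝ => u p.1 p.2) 4 (sm (-(|a| + |b| + 1)) (|a| + |b| + 1)) :=
    (memLp_four_iff h.1).2 h.2
  refine h4.mono_measure (sm_mono ?_ ?_)
  · linarith [neg_abs_le a, abs_nonneg b]
  · linarith [le_abs_self b, abs_nonneg a]

lemma sol_tendsto (hu : IsGlobalSolution γ u u0) (t : ℝ) :
    Tendsto (fun s => ∫ x, ‖u s x - u t x‖ ^ 2 ∂mx) (nhds t) (nhds 0) := by
  have h := hu.2.1 t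
  simp only [intervalIntegral.integral_of_le two_pi_pos.le] at h
  exact h

lemma sol_cont_fc (hu : IsGlobalSolution γ u u0) (k : ℤ) : Continuous fun τ => fc k (u τ) := by
  rw [continuous_iff_continuousAt]
  intro t
  rw [ContinuousAt, tendsto_iff_norm_sub_tendsto_zero]
  have h1 : Tendsto (fun s => √(2 * π * ∫ x, ‖u s x - u t x‖ ^ 2 ∂mx)) (nhds t) (nhds 0) := by
    have := ((sol_tendsto hu t).const_mul (2 * π)).sqrt
    simpa using this
  refine squeeze_zero (fun s => norm_nonneg _) (fun s => ?_) h1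
  refine Real.le_sqrt_of_sq_le ?_
  rw [← fc_sub k ((sol_slice hu s).integrable (by norm_num))
    ((sol_slice hu t).integrable (by norm_num))]
  exact norm_fc_sq_le ((sol_slice hu s).sub (sol_slice hu t)) k

lemma sol_cont_mass (hu : IsGlobalSolution γ u u0) :
    Continuous fun τ => ∫ x, ‖u τ x‖ ^ 2 ∂mx := by
  simp only [← lpNorm_two_sq (sol_slice hu _)]
  refine Continuous.pow ?_ 2
  rw [continuous_iff_continuousAt]
  intro t
  rw [ContinuousAt, tendsto_iff_norm_sub_tendsto_zero]
  have h1 : Tendsto (fun s => √(∫ x, ‖u s x - u t x‖ ^ 2 ∂mx)) (nhds t) (nhds 0) := by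
    have := (sol_tendsto hu t).sqrt
    simpa using this
  refine squeeze_zero (fun s => norm_nonneg _) (fun s => ?_) h1
  have hm : MemLp (u s - u t) 2 mx := (sol_slice hu s).sub (sol_slice hu t)
  refine Real.le_sqrt_of_sq_le ?_
  have e : ∫ x, ‖u s x - u t x‖ ^ 2 ∂mx = lpNorm (u s - u t) 2 mx ^ 2 := (lpNorm_two_sq hm).symm
  rw [e, Real.norm_eq_abs]
  refine pow_le_pow_left₀ (abs_nonneg _) ?_ 2
  rw [abs_le]
  have a1 := lpNorm_add_le' (f := u s - u t) (sol_slice hu t) one_le_two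
  have a2 := lpNorm_add_le' (f := u t - u s) (sol_slice hu s) one_le_two
  rw [sub_add_cancel] at a1 a2
  rw [lpNorm_sub_comm] at a2
  constructor <;> linarith

/-- The nonlinearity is integrable in space, hence has Fourier coefficients, at almost every time:
by Fubini `u(τ) ∈ L⁴(𝕋)` for almost every `τ`. -/
lemma ae_integrable_nl (hu : IsGlobalSolution γ u u0) (θ : ℝ) :
    ∀ᵐ τ, Integrable (fun x => nl γ θ (u τ x)) mx := by
  have h : ∀ n : ℕ, ∀ᵐ τ, τ ∈ Set.Ioc (-n : ℝ) n → Integrable (fun x => nl γ θ (u τ x)) mx := by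
    intro n
    rw [← ae_restrict_iff' measurableSet_Ioc]
    have h1 := integrable_of_q43 (memLp_nl γ θ (sol_memLp hu (-n) n))
    rw [sm_prod] at h1
    exact h1.prod_right_ae
  rw [← ae_all_iff] at h
  filter_upwards [h] with τ hτ
  obtain ⟨n, hn⟩ := exists_nat_gt |τ|
  refine hτ n ⟨?_, ?_⟩ <;> linarith [abs_lt.1 hn]

lemma testFun_aux {ψ : ℝ → ℝ} (hψ : ContDiff ℝ (⊤ : ℕ∞) ψ) (hT : ∃ T > 0, ∀ τ, T ≤ |τ| → ψ τ = 0)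
    (ω : ℝ) (k : ℤ) :
    IsTestFun (fun τ x => (ψ τ : ℂ) * ee (ω * τ) * ee (-(k * x))) := by
  refine ⟨?_, ?_, ?_⟩
  · unfold ee
    have h1 : ContDiff ℝ (⊤ : ℕ∞) fun p : ℝ × ℝ => (ψ p.1 : ℂ) :=
      Complex.ofRealCLM.contDiff.comp (hψ.comp contDiff_fst)
    have h2 : ContDiff ℝ (⊤ : ℕ∞) fun p : ℝ × ℝ => ((ω * p.1 : ℝ) : ℂ) :=
      Complex.ofRealCLM.contDiff.comp (contDiff_const.mul contDiff_fst)
    have h3 : ContDiff ℝ (⊤ : ℕ∞) fun p : ℝ × ℝ => ((-((k : ℝ) * p.2) : ℝ) : ℂ) :=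
      Complex.ofRealCLM.contDiff.comp (contDiff_const.mul contDiff_snd).neg
    exact (h1.mul (h2.mul contDiff_const).cexp).mul (h3.mul contDiff_const).cexp
  · intro τ x
    have : -((k : ℝ) * (x + 2 * π)) = -(k * x) + ((-k : ℤ) : ℝ) * (2 * π) := by push_cast; ring
    simp only [this, ee_add, ee_int_mul_two_pi, mul_one]
  · obtain ⟨T, h0, h⟩ := hT
    exact ⟨T, h0, fun τ x hx => by simp [h τ hx]⟩

lemma pt_aux {ψ : ℝ → ℝ} (hψ : ContDiff ℝ (⊤ : ℕ∞) ψ) (ω : ℝ) (k : ℤ) (τ x : ℝ) :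
    pt (fun τ x => (ψ τ : ℂ) * ee (ω * τ) * ee (-(k * x))) τ x =
      (((deriv ψ τ : ℝ) : ℂ) + Complex.I * ω * ψ τ) * ee (ω * τ) * ee (-(k * x)) := by
  unfold pt
  have h1 : HasDerivAt (fun s => (ψ s : ℂ)) ((deriv ψ τ : ℝ) : ℂ) τ :=
    ((hψ.differentiable (by simp)).differentiableAt.hasDerivAt).ofReal_comp
  have h2 : HasDerivAt (fun s => ee (ω * s)) (Complex.I * ω * ee (ω * τ)) τ :=
    hasDerivAt_ee_comp (by simpa using (hasDerivAt_id τ).const_mul ω)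
  refine (((h1.mul h2).mul_const (ee (-(k * x)))).deriv).trans ?_
  ring

lemma pxx_aux (c : ℝ → ℂ) (k : ℤ) (τ x : ℝ) :
    pxx (fun τ x => c τ * ee (-(k * x))) τ x = -(k : ℂ) ^ 2 * (c τ * ee (-(k * x))) := by
  unfold pxx
  have h (y : ℝ) : HasDerivAt (fun x : ℝ => ee (-(k * x)))
      (Complex.I * ((-(k : ℝ) : ℝ) : ℂ) * ee (-(k * y))) y :=
    by
    refine hasDerivAt_ee_comp (f := fun x => -(k * x)) ?_
    have := (hasDerivAt_id y).const_mul (-(k : ℝ))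
    simpa [neg_mul] using this
  have h1 : deriv (fun x : ℝ => c τ * ee (-(k * x))) =
      fun y => c τ * (Complex.I * ((-(k : ℝ) : ℝ) : ℂ) * ee (-(k * y))) := by
    funext y; exact ((h y).const_mul _).deriv
  rw [h1, (((h x).const_mul _).const_mul _).deriv]
  push_cast
  linear_combination (c τ * (k : ℂ) ^ 2 * ee (-(k * x))) * Complex.I_sq

/-- Duhamel's formula for a single Fourier mode of a distributional solution, in the rotating frame
`e^{i(k²+θ)τ}`; obtained by testing the equation with `ψ(τ) e^{i(k²+θ)τ} e^{-ikx}`. -/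
lemma sol_duhamel (hu : IsGlobalSolution γ u u0) (θ : ℝ) (k : ℤ) (s t : ℝ) :
    ee ((k ^ 2 + θ) * t) * fc k (u t) - ee ((k ^ 2 + θ) * s) * fc k (u s) =
      Complex.I * ∫ τ in s..t, ee ((k ^ 2 + θ) * τ) * fc k (fun x => nl γ θ (u τ x)) := by
  set ω : ℝ := k ^ 2 + θ with hω
  have key : ∀ s t, s ≤ t → ee (ω * t) * fc k (u t) - ee (ω * s) * fc k (u s) =
      Complex.I * ∫ τ in Set.Ioc s t, ee (ω * τ) * fc k (fun x => nl γ θ (u τ x)) := by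
    intro s t hst
    refine weak_ftc (a := fun τ => ee (ω * τ) * fc k (u τ)) ?_ ?_ ?_ hst
    · exact Continuous.mul (by fun_prop) (sol_cont_fc hu k)
    · intro c d
      have h1 := integrable_of_q43 (memLp_nl γ θ (sol_memLp hu c d))
      have h2 : Integrable (fun p : ℝ × ℝ => nl γ θ (u p.1 p.2) * ee (-(k * p.2))) (sm c d) :=
        h1.mul_bdd (c := 1) (by fun_prop) (ae_of_all _ fun p => by simp)
      rw [sm_prod] at h2
      exact h2.integral_prod_left.bdd_mul (c := 1) (by fun_prop) (ae_of_all _ fun p => by simp)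
    · intro ψ hψ hT
      have h := hu.2.2.2.2 _ (testFun_aux hψ hT ω k)
      rw [← h]
      refine integral_congr_ae ?_
      filter_upwards [ae_integrable_nl hu θ] with τ hτ
      have hi : Integrable (u τ) mx := (sol_slice hu τ).integrable (by norm_num)
      rw [intervalIntegral.integral_of_le two_pi_pos.le]
      have e : ∀ x, u τ x * (-Complex.I *
            pt (fun τ x => (ψ τ : ℂ) * ee (ω * τ) * ee (-(k * x))) τ x +
            pxx (fun τ x => (ψ τ : ℂ) * ee (ω * τ) * ee (-(k * x))) τ x) +
          (γ : ℂ) * ((‖u τ x‖ ^ 2 : ℝ) : ℂ) * u τ x * ((ψ τ : ℂ) * ee (ω * τ) * ee (-(k * x))) =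
          ((ψ τ : ℂ) * ee (ω * τ)) * (nl γ θ (u τ x) * ee (-(k * x))) -
          (Complex.I * ((deriv ψ τ : ℝ) : ℂ) * ee (ω * τ)) * (u τ x * ee (-(k * x))) := by
        intro x
        rw [pt_aux hψ, pxx_aux (fun τ => (ψ τ : ℂ) * ee (ω * τ))]
        simp only [nl, hω]
        push_cast
        linear_combination (-(u τ x) * ((k : ℂ) ^ 2 + θ) * ψ τ * ee (((k : ℝ) ^ 2 + θ) * τ) *
          ee (-(k * x))) * Complex.I_sq
      simp only [e]
      have i1 := (integrable_mx_mul_ee hτ (φ := fun x => -(k * x)) (by fun_prop)).const_mul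
        ((ψ τ : ℂ) * ee (ω * τ))
      have i2 := (integrable_mx_mul_ee hi (φ := fun x => -(k * x)) (by fun_prop)).const_mul
        (Complex.I * ((deriv ψ τ : ℝ) : ℂ) * ee (ω * τ))
      have := integral_sub i1 i2
      rw [integral_const_mul, integral_const_mul] at this
      refine Eq.trans ?_ this.symm
      simp only [fc]
      ring
  rcases le_total s t with hst | hst
  · rw [intervalIntegral.integral_of_le hst, key s t hst]
  · rw [intervalIntegral.integral_of_ge hst, mul_neg, ← key t s hst]; ring

/-- Fubini: `co` is the time integral of the Fourier coefficients in the interaction picture. -/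
lemma co_eq {F : ℝ × ℝ → ℂ} {s : ℝ} (hF : Integrable F (sm 0 s)) (σ : ℝ) (k : ℤ) :
    co σ k F 0 s = ∫ r in Set.Ioc 0 s, ee (σ * k ^ 2 * r) * fc k (fun x => F (r, x)) := by
  have h := integrable_mul_ee hF σ k
  unfold co
  rw [sm_prod] at h ⊢
  rw [integral_prod _ h]
  refine integral_congr_ae (ae_of_all _ fun r => ?_)
  simp only [fc]
  rw [← integral_const_mul]
  refine integral_congr_ae (ae_of_all _ fun x => ?_)
  simp only [sub_eq_add_neg, ee_add]
  ring

end Solution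

/-- `f` is a mild solution on `[0, T]` of the cubic equation with time direction `σ = ±1` and gauge
frequency `θ`: it lies in `L⁴`, has square-integrable time slices with continuous mass, and each of
its Fourier modes obeys Duhamel's formula. -/
structure DuhSol (σ γ θ T : ℝ) (f : ℝ × ℝ → ℂ) : Prop where
  memLp : MemLp f 4 (sm 0 T)
  slice : ∀ s, MemLp (fun x => f (s, x)) 2 mx
  mass : Continuous fun s => ∫ x, ‖f (s, x)‖ ^ 2 ∂mx
  duh : ∀ k : ℤ, ∀ t ∈ Set.Icc 0 T, ee (σ * k ^ 2 * t) * fc k (fun x => f (t, x)) =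
    fc k (fun x => f (0, x)) + Complex.I * σ * co σ k (fun p => nl γ θ (f p)) 0 t

lemma measurePreserving_time {σ : ℝ} (hσ : σ = 1 ∨ σ = -1) (t0 : ℝ) :
    MeasurePreserving (fun p : ℝ × ℝ => (t0 + σ * p.1, p.2)) volume volume := by
  have h : MeasurePreserving (fun s : ℝ => t0 + σ * s) volume volume := by
    rcases hσ with rfl | rfl
    · simpa using measurePreserving_add_left volume t0
    · have := Measure.measurePreserving_sub_left (volume : Measure ℝ) t0
      simpa [sub_eq_add_neg] using this
  exact h.prod (MeasurePreserving.id (volume : Measure ℝ))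

/-- Solutions shifted, possibly reversed in time, and rotated by the phase `e^{iθσs}` satisfy the
gauged Duhamel formula. -/
lemma duhSol_of_sol {γ : ℝ} {u : ℝ → ℝ → ℂ} {u0 : ℝ → ℂ} (hu : IsGlobalSolution γ u u0)
    {σ : ℝ} (hσ : σ = 1 ∨ σ = -1) (θ t0 T : ℝ) :
    DuhSol σ γ θ T (fun p => ee (θ * σ * p.1) * u (t0 + σ * p.1) p.2) := by
  have hσ1 : |σ| = 1 := by rcases hσ with rfl | rfl <;> simp
  have hσ2 : σ * σ = 1 := by rcases hσ with rfl | rfl <;> simp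
  have hmem : MemLp (fun p : ℝ × ℝ => ee (θ * σ * p.1) * u (t0 + σ * p.1) p.2) 4 (sm 0 T) := by
    set R := |t0| + |T| + 1 with hR
    have h1 := (measurePreserving_time hσ t0).restrict_preimage (measurableSet_strip (-R) R)
    have h2 := (sol_memLp hu (-R) R).comp_measurePreserving h1
    have h3 : MemLp (fun p : ℝ × ℝ => u (t0 + σ * p.1) p.2) 4 (sm 0 T) := by
      refine h2.mono_measure (Measure.restrict_mono ?_ le_rfl)
      rintro ⟨s, x⟩ ⟨hs, hx⟩
      refine ⟨?_, hx⟩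
      have hb : |t0 + σ * s| ≤ |t0| + |T| := by
        refine (abs_add_le _ _).trans ?_
        rw [abs_mul, hσ1, one_mul, abs_of_pos hs.1]
        have := le_abs_self T
        have := hs.2
        dsimp only at this
        linarith
      have := abs_le.1 hb
      exact ⟨by dsimp only; linarith [this.1], by dsimp only; linarith [this.2]⟩
    have h4 := memLp_mul_ee h3 (φ := fun p => θ * σ * p.1) (by fun_prop)
    simpa only [mul_comm] using h4
  refine ⟨hmem, fun s => (sol_slice hu (t0 + σ * s)).const_mul (ee (θ * σ * s)), ?_, ?_⟩
  · simp only [norm_mul, norm_ee, one_mul]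
    exact (sol_cont_mass hu).comp (by fun_prop : Continuous fun s => t0 + σ * s)
  · intro k t ht
    have hi : Integrable (fun p : ℝ × ℝ => nl γ θ (ee (θ * σ * p.1) * u (t0 + σ * p.1) p.2))
        (sm 0 t) :=
      (integrable_of_q43 (memLp_nl γ θ hmem)).mono_measure (sm_mono le_rfl ht.2)
    rw [co_eq hi]
    have h := sol_duhamel hu θ k t0 (t0 + σ * t)
    have hsub := intervalIntegral.smul_integral_comp_add_mul (a := 0) (b := t)
      (fun τ => ee ((k ^ 2 + θ) * τ) * fc k (fun x => nl γ θ (u τ x))) σ t0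
    rw [mul_zero, add_zero] at hsub
    rw [← hsub, intervalIntegral.integral_of_le ht.1, Complex.real_smul] at h
    have e1 : ∀ r : ℝ, ee (σ * k ^ 2 * r) *
        fc k (fun x => nl γ θ (ee (θ * σ * r) * u (t0 + σ * r) x)) =
        ee (-((k ^ 2 + θ) * t0)) * (ee ((k ^ 2 + θ) * (t0 + σ * r)) *
          fc k (fun x => nl γ θ (u (t0 + σ * r) x))) := by
      intro r
      simp only [nl_ee_mul, fc_const_mul]
      rw [← mul_assoc, ← mul_assoc, ← ee_add, ← ee_add]
      congr 2; ring
    simp only [e1, fc_const_mul, mul_zero, ee_zero, one_mul, add_zero]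
    rw [integral_const_mul]
    have e2 : ee (σ * k ^ 2 * t) * (ee (θ * σ * t) * fc k (fun x => u (t0 + σ * t) x)) =
        ee (-((k ^ 2 + θ) * t0)) * (ee ((k ^ 2 + θ) * (t0 + σ * t)) * fc k (u (t0 + σ * t))) := by
      rw [← mul_assoc, ← mul_assoc, ← ee_add, ← ee_add]
      congr 2; ring
    have e3 : fc k (fun x => u t0 x) =
        ee (-((k ^ 2 + θ) * t0)) * (ee ((k ^ 2 + θ) * t0) * fc k (u t0)) := by
      rw [← mul_assoc, ← ee_add, neg_add_cancel, ee_zero, one_mul]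
    rw [e2, e3]
    linear_combination ee (-((k ^ 2 + θ) * t0)) * h

/-! ### Stability and uniqueness of mild solutions -/

/-- Truncating in frequency turns Duhamel's formula, mode by mode, into an identity with the
truncated retarded integral. -/
lemma PN_of_duhamel {σ γ T : ℝ} {z F : ℝ × ℝ → ℂ}
    (hd : ∀ k : ℤ, ∀ t ∈ Set.Icc 0 T, ee (σ * k ^ 2 * t) * fc k (fun x => z (t, x)) =
      Complex.I * σ * γ * co σ k F 0 t) (N : ℕ) {p : ℝ × ℝ} (hp : p.1 ∈ Set.Icc 0 T) :
    PN N z p = ((2 * π : ℝ) : ℂ)⁻¹ * (Complex.I * σ * γ) *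
      Ret σ (Finset.Icc (-N : ℤ) N) F 0 p := by
  simp only [PN, P1, Ret]
  rw [mul_assoc]
  congr 1
  rw [Finset.mul_sum]
  refine Finset.sum_congr rfl fun k _ => ?_
  have h : fc k (fun x => z (p.1, x)) =
      ee (-(σ * k ^ 2 * p.1)) * (Complex.I * σ * γ * co σ k F 0 p.1) := by
    rw [← hd k p.1 hp, ← mul_assoc, ← ee_add, neg_add_cancel, ee_zero, one_mul]
  rw [h, sub_eq_add_neg, ee_add]
  ring

/-- Stability of the Duhamel formulation. If `z n` solves the equation linearised around `w n` up to
its own cubic error, with zero data and a forcing `R n` whose Duhamel integral tends to zero, then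
`z n → 0` in `L⁴` and the Fourier coefficients of its nonlinear forcing vanish in the limit. -/
lemma stability {σ γ T : ℝ} (hσ : σ = 1 ∨ σ = -1) (hT : 0 ≤ T) {z w G R : ℕ → ℝ × ℝ → ℂ}
    (hz : ∀ n, MemLp (z n) 4 (sm 0 T)) (hw : ∀ n, MemLp (w n) 4 (sm 0 T))
    (hG : ∀ n, MemLp (G n) q43 (sm 0 T))
    (hGb : ∀ n p, ‖G n p‖ ≤ 5 * (‖w n p‖ ^ 2 * ‖z n p‖ + ‖z n p‖ ^ 3)) {W : ℝ → ℝ}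
    (hW : ContinuousOn W (Set.Icc 0 T))
    (hWw : ∀ n a b, 0 ≤ a → a ≤ b → b ≤ T → ∫ p, ‖w n p‖ ^ 4 ∂(sm a b) ≤ W b - W a)
    (hR : ∀ n, MemLp (R n) q43 (sm 0 T))
    (hRs : ∀ ε > 0, ∀ᶠ n in atTop, ∀ S : Finset ℤ, lpNorm (Ret σ S (R n) 0) 4 (sm 0 T) ≤ ε)
    (hd : ∀ n, ∀ k : ℤ, ∀ t ∈ Set.Icc 0 T, ee (σ * k ^ 2 * t) * fc k (fun x => z n (t, x)) =
      Complex.I * σ * γ * co σ k (fun p => G n p + R n p) 0 t) :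
    Tendsto (fun n => lpNorm (z n) 4 (sm 0 T)) atTop (nhds 0) ∧
      ∀ k, Tendsto (fun n => co σ k (G n) 0 T) atTop (nhds 0) := by
  obtain ⟨A, hA, hS⟩ := retarded_strichartz T
  set c : ℂ := ((2 * π : ℝ) : ℂ)⁻¹ * (Complex.I * σ * γ) with hc
  have hz0 : Tendsto (fun n => lpNorm (z n) 4 (sm 0 T)) atTop (nhds 0) := by
    refine bootstrap hT hz hw hG hGb hW hWw (B := ‖c‖ * A) (by positivity) ?_
    intro ε hε
    filter_upwards [hRs (ε / (‖c‖ + 1)) (by positivity)] with n hn t ht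
    have hle : sm 0 t ≤ sm 0 T := sm_mono le_rfl ht.2
    have key : ∀ N, MemLp (PN N (z n)) 4 (sm 0 t) ∧
        lpNorm (PN N (z n)) 4 (sm 0 t) ≤ ε + ‖c‖ * A * lpNorm (G n) q43 (sm 0 t) := by
      intro N
      set S := Finset.Icc (-N : ℤ) N
      have hGn := hS σ hσ (G n) (hG n) S t ht.1 ht.2
      have hRn := hS σ hσ (R n) (hR n) S t ht.1 ht.2
      have hRT := hS σ hσ (R n) (hR n) S T hT le_rfl
      have hae : (fun p => c * (Ret σ S (G n) 0 p + Ret σ S (R n) 0 p)) =ᵐ[sm 0 t]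
          PN N (z n) := by
        filter_upwards [ae_sm_mem 0 t] with p hp
        rw [PN_of_duhamel (hd n) N ⟨hp.1.1.le, hp.1.2.trans ht.2⟩,
          Ret_add (integrable_of_q43 (hG n)) (integrable_of_q43 (hR n)) σ _ (hp.1.2.trans ht.2)]
      have hsum : MemLp (Ret σ S (G n) 0 + Ret σ S (R n) 0) 4 (sm 0 t) := hGn.1.add hRn.1
      refine ⟨(hsum.const_mul c).ae_eq hae, ?_⟩
      have h1 : lpNorm (PN N (z n)) 4 (sm 0 t) =
          ‖c‖ * lpNorm (Ret σ S (G n) 0 + Ret σ S (R n) 0) 4 (sm 0 t) := by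
        rw [← toReal_eLpNorm ((hsum.const_mul c).ae_eq hae).1, ← eLpNorm_congr_ae hae]
        exact (toReal_eLpNorm (hsum.const_mul c).1).trans (lpNorm_const_smul c _ _)
      rw [h1]
      have h2 : lpNorm (Ret σ S (G n) 0 + Ret σ S (R n) 0) 4 (sm 0 t) ≤
          A * lpNorm (G n) q43 (sm 0 t) + ε / (‖c‖ + 1) :=
        (lpNorm_add_le hGn.1 (by norm_num)).trans
          (add_le_add hGn.2 ((lpNorm_mono_meas hRT.1 hle).trans (hn S)))
      have h3 : ‖c‖ * (ε / (‖c‖ + 1)) ≤ ε := by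
        rw [mul_div_assoc', div_le_iff₀ (by positivity)]
        nlinarith [norm_nonneg c]
      calc _ ≤ ‖c‖ * (A * lpNorm (G n) q43 (sm 0 t) + ε / (‖c‖ + 1)) := by gcongr
        _ ≤ _ := by linarith
    exact lpNorm_four_le_of_PN ((hz n).mono_measure hle) ((lpNorm_nonneg).trans (key 0).2) key
  refine ⟨hz0, fun k => ?_⟩
  set K := W T - W 0 with hK
  have hw2 : ∀ n, lpNorm (w n) 4 (sm 0 T) ^ 2 ≤ K + 1 := by
    intro n
    have h := hWw n 0 T le_rfl hT le_rfl
    rw [← lpNorm_four_pow (hw n)] at h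
    nlinarith [sq_nonneg (lpNorm (w n) 4 (sm 0 T) ^ 2 - 1 / 2), sq_nonneg (lpNorm (w n) 4 (sm 0 T))]
  set V := lpNorm (fun _ : ℝ × ℝ => (1 : ℂ)) 4 (sm 0 T)
  have hlim : Tendsto (fun n => 5 * ((K + 1) * lpNorm (z n) 4 (sm 0 T) +
      lpNorm (z n) 4 (sm 0 T) ^ 3) * V) atTop (nhds 0) := by
    have := (((hz0.const_mul (K + 1)).add (hz0.pow 3)).const_mul 5).mul_const V
    simpa using this
  refine squeeze_zero_norm (fun n => ?_) hlim
  have h1 : MemLp (fun p : ℝ × ℝ => ee (σ * k ^ 2 * p.1 - k * p.2)) 4 (sm 0 T) :=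
    MemLp.of_bound (C := 1) (Continuous.aestronglyMeasurable (by fun_prop))
      (ae_of_all _ fun p => by simp)
  have hV : lpNorm (fun p : ℝ × ℝ => ee (σ * k ^ 2 * p.1 - k * p.2)) 4 (sm 0 T) ≤ V :=
    lpNorm_mono_ae' h1.1 (memLp_const 1) (ae_of_all _ fun p => by simp)
  calc ‖co σ k (G n) 0 T‖ ≤ lpNorm (G n) q43 (sm 0 T) *
        lpNorm (fun p : ℝ × ℝ => ee (σ * k ^ 2 * p.1 - k * p.2)) 4 (sm 0 T) :=
        holder_q43_four (hG n) h1
    _ ≤ (5 * (lpNorm (w n) 4 (sm 0 T) ^ 2 * lpNorm (z n) 4 (sm 0 T) +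
          lpNorm (z n) 4 (sm 0 T) ^ 3)) * V :=
        mul_le_mul (lpNorm_cubic_le (hz n) (hw n) (hG n) (hGb n)) hV lpNorm_nonneg
          (by have := lpNorm_nonneg (f := z n) (p := 4) (μ := sm 0 T); positivity)
    _ ≤ _ := by
        have h0 := lpNorm_nonneg (f := z n) (p := 4) (μ := sm 0 T)
        have hV0 : 0 ≤ V := lpNorm_nonneg
        have := hw2 n
        gcongr

/-- Pointwise bound on the difference of two cubic nonlinearities, with background `w` and
perturbation `z`. -/
lemma norm_cubic_sub_le (w z : ℂ) :
    ‖((‖w + z‖ ^ 2 : ℝ) : ℂ) * (w + z) - ((‖w‖ ^ 2 : ℝ) : ℂ) * w‖ ≤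
      5 * (‖w‖ ^ 2 * ‖z‖ + ‖z‖ ^ 3) := by
  have e : ((‖w + z‖ ^ 2 : ℝ) : ℂ) * (w + z) - ((‖w‖ ^ 2 : ℝ) : ℂ) * w =
      ((‖w + z‖ ^ 2 : ℝ) : ℂ) * z + ((‖w + z‖ ^ 2 - ‖w‖ ^ 2 : ℝ) : ℂ) * w := by
    push_cast; ring
  rw [e]
  refine (norm_add_le _ _).trans ?_
  rw [norm_mul, norm_mul, Complex.norm_real, Complex.norm_real, Real.norm_eq_abs, Real.norm_eq_abs,
    abs_of_nonneg (by positivity : (0:ℝ) ≤ ‖w + z‖ ^ 2)]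
  have h1 := norm_add_le w z
  have h2 : |‖w + z‖ - ‖w‖| ≤ ‖z‖ := by
    have := abs_norm_sub_norm_le (w + z) w
    rwa [add_sub_cancel_left] at this
  have ha := norm_nonneg w
  have hb := norm_nonneg z
  have hc := norm_nonneg (w + z)
  have h3 : ‖w + z‖ ^ 2 ≤ (‖w‖ + ‖z‖) ^ 2 := pow_le_pow_left₀ hc h1 2
  have h4 : |‖w + z‖ ^ 2 - ‖w‖ ^ 2| ≤ ‖z‖ * (2 * ‖w‖ + ‖z‖) := by
    rw [sq_sub_sq, abs_mul, abs_of_nonneg (by positivity), mul_comm]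
    exact mul_le_mul h2 (by linarith) (by positivity) hb
  calc ‖w + z‖ ^ 2 * ‖z‖ + |‖w + z‖ ^ 2 - ‖w‖ ^ 2| * ‖w‖
      ≤ (‖w‖ + ‖z‖) ^ 2 * ‖z‖ + ‖z‖ * (2 * ‖w‖ + ‖z‖) * ‖w‖ := by gcongr
    _ ≤ _ := by nlinarith [mul_nonneg hb (sq_nonneg (‖w‖ - ‖z‖)),
        mul_nonneg hb (sq_nonneg ‖w‖), mul_nonneg hb (sq_nonneg ‖z‖)]

/-- A mild solution with zero data vanishes at every later time, stated on Fourier coefficients. -/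
lemma duhSol_zero {σ γ T : ℝ} (hσ : σ = 1 ∨ σ = -1) (hT : 0 ≤ T) {f : ℝ × ℝ → ℂ}
    (hf : DuhSol σ γ 0 T f) (h0 : ∀ k, fc k (fun x => f (0, x)) = 0) (k : ℤ) :
    fc k (fun x => f (T, x)) = 0 := by
  have e : ∀ k t, co σ k (fun p => nl γ 0 (f p)) 0 t =
      γ * co σ k (fun p => ((‖f p‖ ^ 2 : ℝ) : ℂ) * f p) 0 t := by
    intro k t
    unfold co
    rw [← integral_const_mul]
    refine integral_congr_ae (ae_of_all _ fun p => ?_)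
    simp only [nl]; push_cast; ring
  have hd : ∀ k : ℤ, ∀ t ∈ Set.Icc 0 T, ee (σ * k ^ 2 * t) * fc k (fun x => f (t, x)) =
      Complex.I * σ * γ * co σ k (fun p => ((‖f p‖ ^ 2 : ℝ) : ℂ) * f p) 0 t := by
    intro k t ht
    rw [hf.duh k t ht, h0, e]; ring
  have h := (stability hσ hT (γ := γ) (z := fun _ => f) (w := fun _ _ => 0)
    (G := fun _ p => ((‖f p‖ ^ 2 : ℝ) : ℂ) * f p) (R := fun _ _ => 0) (W := fun _ => 0)
    (fun _ => hf.memLp) (fun _ => MemLp.zero) (fun _ => memLp_cubic hf.memLp)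
    (fun _ p => ?_) continuousOn_const (fun n a b _ _ _ => by simp) (fun _ => MemLp.zero)
    (fun ε hε => ?_) (fun _ => by simpa using hd)).2 k
  · have h1 := tendsto_nhds_unique tendsto_const_nhds h
    have h2 := hd k T ⟨hT, le_rfl⟩
    rw [h1, mul_zero] at h2
    exact (mul_eq_zero.1 h2).resolve_left (ee_ne_zero _)
  · have := norm_cubic_sub_le 0 (f p)
    simpa using this
  · have : ∀ S, Ret σ S (fun _ : ℝ × ℝ => (0 : ℂ)) 0 = 0 := by
      intro S; funext p; simp [Ret, co]
    simp [this, hε.le]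

/-! ### The high-frequency carrier wave -/

/-- The plane wave of frequency `j` carrying the slow phase `Ω`, for time direction `σ`. -/
def carrier (σ : ℝ) (Ω : ℝ → ℝ) (j : ℤ) (p : ℝ × ℝ) : ℂ :=
  ee (j * p.2 - σ * (j ^ 2 : ℤ) * p.1 + Ω p.1)

lemma norm_carrier (σ : ℝ) (Ω : ℝ → ℝ) (j : ℤ) (p : ℝ × ℝ) : ‖carrier σ Ω j p‖ = 1 := norm_ee _

lemma continuous_carrier (σ : ℝ) {Ω : ℝ → ℝ} (hΩ : Continuous Ω) (j : ℤ) :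
    Continuous (carrier σ Ω j) := by
  unfold carrier; fun_prop

lemma fc_ee (k j : ℤ) : fc k (fun x => ee (j * x)) = if k = j then ((2 * π : ℝ) : ℂ) else 0 := by
  unfold fc
  have e : ∀ x : ℝ, ee (j * x) * ee (-(k * x)) = ee (((j - k : ℤ) : ℝ) * x) := by
    intro x; rw [← ee_add]; congr 1; push_cast; ring
  simp only [e]
  unfold mx
  rw [integral_ee_two_pi]
  simp only [sub_eq_zero, eq_comm]

lemma fc_carrier (σ : ℝ) (Ω : ℝ → ℝ) (k j : ℤ) (t : ℝ) :
    fc k (fun x => carrier σ Ω j (t, x)) =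
      ee (-(σ * (j ^ 2 : ℤ) * t) + Ω t) * if k = j then ((2 * π : ℝ) : ℂ) else 0 := by
  rw [← fc_ee, ← fc_const_mul]
  congr 1
  funext x
  rw [← ee_add]
  simp only [carrier]
  congr 1; ring

/-- The carrier satisfies the Duhamel formula with forcing `Ω' · carrier`. -/
lemma carrier_duhamel {σ : ℝ} {Ω Ω' : ℝ → ℝ} (hΩ0 : Ω 0 = 0) (hΩ : ∀ s, HasDerivAt Ω (Ω' s) s)
    (hΩ' : Continuous Ω') (k j : ℤ) {t : ℝ} (ht : 0 ≤ t) :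
    ee (σ * k ^ 2 * t) * fc k (fun x => carrier σ Ω j (t, x)) =
      fc k (fun x => carrier σ Ω j (0, x)) +
        Complex.I * co σ k (fun p => (Ω' p.1 : ℂ) * carrier σ Ω j p) 0 t := by
  have hΩc : Continuous Ω := continuous_iff_continuousAt.2 fun s => (hΩ s).continuousAt
  have e : (fun p : ℝ × ℝ => (Ω' p.1 : ℂ) * carrier σ Ω j p) = fun p =>
      (fun s => (Ω' s : ℂ) * ee (Ω s)) p.1 * ee (((0 : ℤ) : ℝ) * p.2) *
        ee (j * p.2 - σ * (j ^ 2 : ℤ) * p.1) := by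
    funext p
    simp only [carrier, Int.cast_zero, zero_mul, ee_zero, mul_one]
    rw [mul_assoc (Ω' p.1 : ℂ) (ee (Ω p.1)), ← ee_add]
    congr 2; ring
  rw [e, co_mode σ k 0 j (j ^ 2) (fun s => (Ω' s : ℂ) * ee (Ω s)), fc_carrier, fc_carrier]
  by_cases hkj : k = j
  · subst hkj
    have hft : ∫ s in (0:ℝ)..t, (Complex.I * (Ω' s : ℂ) * ee (Ω s)) = ee (Ω t) - ee (Ω 0) :=
      intervalIntegral.integral_eq_sub_of_hasDerivAt (fun s _ => hasDerivAt_ee_comp (hΩ s))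
        (Continuous.intervalIntegrable (by fun_prop) _ _)
    have e2 : ∀ s, (Ω' s : ℂ) * ee (Ω s) * ee (σ * ((((0 : ℤ) : ℝ) + k) ^ 2 - (k ^ 2 : ℤ)) * s) =
        (Ω' s : ℂ) * ee (Ω s) := by
      intro s
      have : σ * ((((0 : ℤ) : ℝ) + k) ^ 2 - (k ^ 2 : ℤ)) * s = 0 := by push_cast; ring
      rw [this, ee_zero, mul_one]
    rw [intervalIntegral.integral_of_le ht, hΩ0, ee_zero] at hft
    simp only [mul_assoc] at hft
    rw [integral_const_mul] at hft
    simp only [e2, zero_add, if_true, hΩ0, mul_zero, neg_zero, ee_zero, one_mul]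
    rw [← mul_assoc, ← ee_add]
    have e3 : σ * (k : ℝ) ^ 2 * t + (-(σ * (k ^ 2 : ℤ) * t) + Ω t) = Ω t := by push_cast; ring
    rw [e3]
    linear_combination -((2 * π : ℝ) : ℂ) * hft
  · simp [hkj]

lemma exists_phase {m : ℝ → ℝ} (hm : Continuous m) :
    ∃ Ω : ℝ → ℝ, Ω 0 = 0 ∧ ∀ s, HasDerivAt Ω (m s) s :=
  ⟨fun s => ∫ r in (0:ℝ)..s, m r, by simp, fun s => (hm.integral_hasStrictDerivAt 0 s).hasDerivAt⟩

/-- Carrier times a mode `m ≠ 0`: the phase `(m + n)² - n²` is unbounded. The mode `m = 0` is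
resonant. -/
lemma resonance_one {m : ℤ} (hm : m ≠ 0) :
    Tendsto (fun n : ℕ => |((m : ℝ) + ((n : ℤ) : ℝ)) ^ 2 - (((n : ℤ) ^ 2 : ℤ) : ℝ)|)
      atTop atTop := by
  have h : Tendsto (fun n : ℕ => (n : ℝ) + -(m : ℝ) ^ 2) atTop atTop :=
    tendsto_atTop_add_const_right _ _ tendsto_natCast_atTop_atTop
  refine tendsto_atTop_mono (fun n => ?_) h
  have h1 : (1 : ℝ) ≤ |(m : ℝ)| := by exact_mod_cast Int.one_le_abs hm
  have h2 : (0 : ℝ) ≤ n := n.cast_nonneg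
  push_cast
  have e : ((m : ℝ) + n) ^ 2 - (n : ℝ) ^ 2 = 2 * m * n - -(m : ℝ) ^ 2 := by ring
  rw [e]
  refine le_trans ?_ (abs_sub_abs_le_abs_sub _ _)
  rw [abs_neg, abs_of_nonneg (sq_nonneg (m : ℝ)), abs_mul, abs_mul, abs_of_nonneg h2,
    abs_of_pos two_pos]
  nlinarith [mul_le_mul_of_nonneg_right h1 h2]

/-- Conjugate carrier times any mode: the phase `(m - n)² + n²` is unbounded. -/
lemma resonance_two (m : ℤ) :
    Tendsto (fun n : ℕ => |((m : ℝ) + ((-(n : ℤ) : ℤ) : ℝ)) ^ 2 - ((-(n : ℤ) ^ 2 : ℤ) : ℝ)|)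
      atTop atTop := by
  refine tendsto_atTop_mono (fun n => ?_) tendsto_natCast_atTop_atTop
  refine le_trans ?_ (le_abs_self _)
  push_cast
  rcases Nat.eq_zero_or_pos n with rfl | hn
  · simpa using sq_nonneg (m : ℝ)
  · have h1 : (1 : ℝ) ≤ n := by exact_mod_cast hn
    nlinarith [sq_nonneg ((m : ℝ) + -n)]

/-- Squared carrier times any mode: the phase `(m + 2n)² - 2n²` is unbounded. -/
lemma resonance_three (m : ℤ) :
    Tendsto (fun n : ℕ => |((m : ℝ) + ((2 * (n : ℤ) : ℤ) : ℝ)) ^ 2 -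
      ((2 * (n : ℤ) ^ 2 : ℤ) : ℝ)|) atTop atTop := by
  have h : Tendsto (fun n : ℕ => (n : ℝ) + (4 * (m : ℝ) - 2 - (m : ℝ) ^ 2)) atTop atTop :=
    tendsto_atTop_add_const_right _ _ tendsto_natCast_atTop_atTop
  refine tendsto_atTop_mono (fun n => ?_) h
  refine le_trans ?_ (le_abs_self _)
  have h2 : (0 : ℝ) ≤ n := n.cast_nonneg
  push_cast
  nlinarith [sq_nonneg ((n : ℝ) + m - 1)]

/-! ### Interaction of a solution with the carrier wave -/

lemma memLp_continuous {F : ℝ × ℝ → ℂ} (hF : Continuous F) (q : ENNReal) (a b : ℝ) :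
    MemLp F q (sm a b) := by
  obtain ⟨C, hC⟩ := (isCompact_Icc.prod isCompact_Icc : IsCompact
    (Set.Icc a b ×ˢ Set.Icc (0:ℝ) (2 * π))).exists_bound_of_continuousOn hF.continuousOn
  refine MemLp.of_bound hF.aestronglyMeasurable C ?_
  filter_upwards [ae_sm_mem a b] with p hp
  exact hC p ⟨Set.Ioc_subset_Icc_self hp.1, Set.Ioc_subset_Icc_self hp.2⟩

/-- Expansion of the cubic nonlinearity at `f + κE` with `|E| = 1`; the terms `2κ²f` and
`κ(κ²+2μ)E` are the resonant ones. -/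
lemma cubic_expansion (f E : ℂ) (hE : ‖E‖ = 1) (κ μ : ℝ) :
    ((‖f + κ * E‖ ^ 2 : ℝ) : ℂ) * (f + κ * E) =
      ((‖f‖ ^ 2 : ℝ) : ℂ) * f + 2 * κ ^ 2 * f + κ * (κ ^ 2 + 2 * μ) * E +
      (2 * κ * (((‖f‖ ^ 2 : ℝ) : ℂ) - μ) * E + κ * (f * f) * (starRingEnd ℂ) E +
        κ ^ 2 * (starRingEnd ℂ) f * (E * E)) := by
  have n (z : ℂ) : ((‖z‖ ^ 2 : ℝ) : ℂ) = z * (starRingEnd ℂ) z := by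
    rw [Complex.mul_conj, Complex.normSq_eq_norm_sq]
  have h1 : E * (starRingEnd ℂ) E = 1 := by rw [← n, hE]; simp
  rw [n, n, map_add, map_mul, Complex.conj_ofReal]
  linear_combination (2 * (κ : ℂ) ^ 2 * f + (κ : ℂ) ^ 3 * E) * h1

/-- The part of the cubic interaction between `f` and the carrier that averages out. -/
def remainder (σ κ : ℝ) (Ω μ : ℝ → ℝ) (f : ℝ × ℝ → ℂ) (j : ℤ) (p : ℝ × ℝ) : ℂ :=
  2 * κ * (((‖f p‖ ^ 2 : ℝ) : ℂ) - μ p.1) * carrier σ Ω j p +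
    κ * (f p * f p) * (starRingEnd ℂ) (carrier σ Ω j p) +
    κ ^ 2 * (starRingEnd ℂ) (f p) * (carrier σ Ω j p * carrier σ Ω j p)

/-- The remainder as three fixed functions modulated by a plane wave, as needed to apply
`nonresonant` and `co_tendsto_zero`. -/
lemma remainder_eq (σ κ : ℝ) (Ω μ : ℝ → ℝ) (f : ℝ × ℝ → ℂ) (j : ℤ) (p : ℝ × ℝ) :
    remainder σ κ Ω μ f j p =
      (2 * κ * (((‖f p‖ ^ 2 : ℝ) : ℂ) - μ p.1) * ee (Ω p.1)) *
        ee (j * p.2 - σ * (j ^ 2 : ℤ) * p.1) +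
      (κ * (f p * f p) * ee (-Ω p.1)) *
        ee ((-j : ℤ) * p.2 - σ * (-j ^ 2 : ℤ) * p.1) +
      (κ ^ 2 * (starRingEnd ℂ) (f p) * ee (2 * Ω p.1)) *
        ee ((2 * j : ℤ) * p.2 - σ * (2 * j ^ 2 : ℤ) * p.1) := by
  have e1 : carrier σ Ω j p = ee (Ω p.1) * ee (j * p.2 - σ * (j ^ 2 : ℤ) * p.1) := by
    rw [← ee_add]; unfold carrier; congr 1; ring
  have e2 : (starRingEnd ℂ) (carrier σ Ω j p) =
      ee (-Ω p.1) * ee ((-j : ℤ) * p.2 - σ * (-j ^ 2 : ℤ) * p.1) := by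
    rw [← ee_add]; unfold carrier; rw [conj_ee]; congr 1; push_cast; ring
  have e3 : carrier σ Ω j p * carrier σ Ω j p =
      ee (2 * Ω p.1) * ee ((2 * j : ℤ) * p.2 - σ * (2 * j ^ 2 : ℤ) * p.1) := by
    rw [← ee_add]; unfold carrier; rw [← ee_add]; congr 1; push_cast; ring
  unfold remainder
  rw [e3, e2, e1]
  ring

lemma Ret_add_three {F G H K : ℝ × ℝ → ℂ} {a b : ℝ} (hK : ∀ p, K p = F p + G p + H p)
    (hF : Integrable F (sm a b)) (hG : Integrable G (sm a b)) (hH : Integrable H (sm a b))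
    (σ : ℝ) (S : Finset ℤ) {p : ℝ × ℝ} (hp : p.1 ≤ b) :
    Ret σ S K a p = Ret σ S F a p + Ret σ S G a p + Ret σ S H a p := by
  rw [show K = fun p => (fun p => F p + G p) p + H p from funext hK,
    Ret_add (F := fun p => F p + G p) (hF.add hG) hH σ S hp, Ret_add hF hG σ S hp]

lemma co_add_three {F G H K : ℝ × ℝ → ℂ} {a b : ℝ} (hK : ∀ p, K p = F p + G p + H p)
    (hF : Integrable F (sm a b)) (hG : Integrable G (sm a b)) (hH : Integrable H (sm a b))
    (σ : ℝ) (k : ℤ) : co σ k K a b = co σ k F a b + co σ k G a b + co σ k H a b := by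
  have h1 := integrable_mul_ee hF σ k
  have h2 := integrable_mul_ee hG σ k
  have h3 := integrable_mul_ee hH σ k
  unfold co
  rw [← integral_add' h1 h2, ← integral_add' (h1.add h2) h3]
  refine integral_congr_ae (ae_of_all _ fun p => ?_)
  simp only [Pi.add_apply]
  rw [hK]
  ring

section Remainder

variable {σ κ T : ℝ} {Ω μ : ℝ → ℝ} {f : ℝ × ℝ → ℂ}

lemma memLp_h1 (hΩ : Continuous Ω) (hμ : Continuous μ) (hf : MemLp f 4 (sm 0 T)) :
    MemLp (fun p => 2 * (κ : ℂ) * (((‖f p‖ ^ 2 : ℝ) : ℂ) - μ p.1) * ee (Ω p.1)) 2 (sm 0 T) := by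
  have h1 : MemLp (fun p => ((‖f p‖ ^ 2 : ℝ) : ℂ)) 2 (sm 0 T) := by
    have h := memLp_mul_two hf hf.star
    convert h using 2 with p
    rw [Pi.star_apply, RCLike.star_def, Complex.mul_conj, Complex.normSq_eq_norm_sq]
  have h2 : MemLp (fun p : ℝ × ℝ => ((μ p.1 : ℝ) : ℂ)) 2 (sm 0 T) :=
    memLp_continuous (by fun_prop) _ _ _
  exact memLp_mul_ee ((h1.sub h2).const_mul (2 * (κ : ℂ))) (φ := fun p => Ω p.1) (by fun_prop)

lemma memLp_h2 (hΩ : Continuous Ω) (hf : MemLp f 4 (sm 0 T)) :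
    MemLp (fun p => (κ : ℂ) * (f p * f p) * ee (-Ω p.1)) 2 (sm 0 T) :=
  memLp_mul_ee ((memLp_mul_two hf hf).const_mul (κ : ℂ)) (φ := fun p => -Ω p.1) (by fun_prop)

lemma memLp_h3 (hΩ : Continuous Ω) (hf : MemLp f 4 (sm 0 T)) :
    MemLp (fun p => (κ : ℂ) ^ 2 * (starRingEnd ℂ) (f p) * ee (2 * Ω p.1)) 2 (sm 0 T) :=
  memLp_mul_ee ((hf.star.mono_exponent (by norm_num : (2 : ENNReal) ≤ 4)).const_mul ((κ : ℂ) ^ 2))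
    (φ := fun p => 2 * Ω p.1) (by fun_prop)

lemma memLp_remainder (hΩ : Continuous Ω) (hμ : Continuous μ) (hf : MemLp f 4 (sm 0 T)) (j : ℤ) :
    MemLp (remainder σ κ Ω μ f j) q43 (sm 0 T) := by
  have h1 := memLp_mul_ee (memLp_h1 (κ := κ) hΩ hμ hf)
    (φ := fun p => j * p.2 - σ * (j ^ 2 : ℤ) * p.1) (by fun_prop)
  have h2 := memLp_mul_ee (memLp_h2 (κ := κ) hΩ hf)
    (φ := fun p => (-j : ℤ) * p.2 - σ * (-j ^ 2 : ℤ) * p.1) (by fun_prop)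
  have h3 := memLp_mul_ee (memLp_h3 (κ := κ) hΩ hf)
    (φ := fun p => (2 * j : ℤ) * p.2 - σ * (2 * j ^ 2 : ℤ) * p.1) (by fun_prop)
  refine memLp_q43_of_two (((h1.add h2).add h3).ae_eq (ae_of_all _ fun p => ?_))
  rw [remainder_eq]; rfl

/-- The remainder has a vanishing Duhamel integral in `L⁴`. Subtracting the mean `μ` of `|f|²` removes
the only resonant mode. -/
lemma remainder_small (hσ : σ = 1 ∨ σ = -1) (hT : 0 ≤ T) (hΩ : Continuous Ω) (hμ : Continuous μ)
    (hf : MemLp f 4 (sm 0 T)) (hs : ∀ s, MemLp (fun x => f (s, x)) 2 mx)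
    (hμf : ∀ s, ∫ x, ‖f (s, x)‖ ^ 2 ∂mx = 2 * π * μ s) {ε : ℝ} (hε : 0 < ε) :
    ∀ᶠ n : ℕ in atTop, ∀ S : Finset ℤ,
      lpNorm (Ret σ S (remainder σ κ Ω μ f n) 0) 4 (sm 0 T) ≤ ε := by
  obtain ⟨A, hA, hS⟩ := retarded_strichartz T
  have m1 := memLp_h1 (κ := κ) hΩ hμ hf
  have m2 := memLp_h2 (κ := κ) hΩ hf
  have m3 := memLp_h3 (κ := κ) hΩ hf
  have r1 := nonresonant hσ hT m1 (P := fun n => (n : ℤ)) (Q := fun n => (n : ℤ) ^ 2)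
    (fun m => ?_) (ε := ε / 3) (by positivity)
  · have r2 := nonresonant hσ hT m2 (P := fun n => -(n : ℤ)) (Q := fun n => -(n : ℤ) ^ 2)
      (fun m => Or.inr (resonance_two m)) (ε := ε / 3) (by positivity)
    have r3 := nonresonant hσ hT m3 (P := fun n => 2 * (n : ℤ)) (Q := fun n => 2 * (n : ℤ) ^ 2)
      (fun m => Or.inr (resonance_three m)) (ε := ε / 3) (by positivity)
    filter_upwards [r1, r2, r3] with n h1 h2 h3 S
    have q1 := memLp_q43_of_two (memLp_mul_ee m1
      (φ := fun p => (n : ℤ) * p.2 - σ * ((n : ℤ) ^ 2 : ℤ) * p.1) (by fun_prop))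
    have q2 := memLp_q43_of_two (memLp_mul_ee m2
      (φ := fun p => (-(n : ℤ) : ℤ) * p.2 - σ * (-(n : ℤ) ^ 2 : ℤ) * p.1) (by fun_prop))
    have q3 := memLp_q43_of_two (memLp_mul_ee m3
      (φ := fun p => (2 * (n : ℤ) : ℤ) * p.2 - σ * (2 * (n : ℤ) ^ 2 : ℤ) * p.1) (by fun_prop))
    have s1 := (hS σ hσ _ q1 S T hT le_rfl).1
    have s2 := (hS σ hσ _ q2 S T hT le_rfl).1
    have s3 := (hS σ hσ _ q3 S T hT le_rfl).1
    have sR := (hS σ hσ _ (memLp_remainder (σ := σ) (κ := κ) hΩ hμ hf n) S T hT le_rfl).1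
    have hae := lpNorm_mono_ae' sR.1 ((s1.add s2).add s3) (by
      filter_upwards [ae_sm_mem 0 T] with p hp
      refine le_of_eq (congrArg norm ?_)
      exact Ret_add_three (remainder_eq σ κ Ω μ f n) (integrable_of_q43 q1)
        (integrable_of_q43 q2) (integrable_of_q43 q3) σ S hp.1.2)
    have a1 := lpNorm_add_le (g := Ret σ S (fun p => ((κ : ℂ) ^ 2 * (starRingEnd ℂ) (f p) *
      ee (2 * Ω p.1)) * ee ((2 * (n : ℤ) : ℤ) * p.2 - σ * (2 * (n : ℤ) ^ 2 : ℤ) * p.1)) 0)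
      (s1.add s2) (by norm_num : (1 : ENNReal) ≤ 4)
    have a2 := lpNorm_add_le (g := Ret σ S (fun p => ((κ : ℂ) * (f p * f p) *
      ee (-Ω p.1)) * ee ((-(n : ℤ) : ℤ) * p.2 - σ * (-(n : ℤ) ^ 2 : ℤ) * p.1)) 0)
      s1 (by norm_num : (1 : ENNReal) ≤ 4)
    have := h1 S
    have := h2 S
    have := h3 S
    linarith
  · by_cases hm : m = 0
    · left
      refine ae_of_all _ fun s => ?_
      -- the zero mode vanishes because the mean of `|f|²` has been subtracted
      subst hm
      change fc 0 (fun x => 2 * (κ : ℂ) * (((‖f (s, x)‖ ^ 2 : ℝ) : ℂ) - μ s) * ee (Ω s)) = 0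
      rw [fc_mul_const, fc_const_mul]
      have hi : Integrable (fun x => ((‖f (s, x)‖ ^ 2 : ℝ) : ℂ)) mx :=
        ((memLp_two_iff_integrable_sq_norm (hs s).1).1 (hs s)).ofReal
      rw [fc_sub 0 hi (integrable_const _)]
      have e1 : fc 0 (fun x => ((‖f (s, x)‖ ^ 2 : ℝ) : ℂ)) = ((2 * π * μ s : ℝ) : ℂ) := by
        unfold fc
        simp only [Int.cast_zero, zero_mul, neg_zero, ee_zero, mul_one]
        rw [← hμf s]
        exact integral_ofReal
      have e2 : fc 0 (fun _ => ((μ s : ℝ) : ℂ)) = ((2 * π * μ s : ℝ) : ℂ) := by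
        have h := fc_const_mul (g := fun x => ee (((0 : ℤ) : ℝ) * x)) 0 ((μ s : ℝ) : ℂ)
        rw [fc_ee] at h
        simp only [Int.cast_zero, zero_mul, ee_zero, mul_one, if_true] at h
        rw [h]; push_cast; ring
      rw [e1, e2]; simp
    · exact Or.inr (resonance_one hm)

lemma remainder_co (hΩ : Continuous Ω) (hμ : Continuous μ) (hf : MemLp f 4 (sm 0 T)) (k : ℤ) :
    Tendsto (fun n : ℕ => co σ k (remainder σ κ Ω μ f n) 0 T) atTop (nhds 0) := by
  have m1 := memLp_h1 (κ := κ) hΩ hμ hf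
  have m2 := memLp_h2 (κ := κ) hΩ hf
  have m3 := memLp_h3 (κ := κ) hΩ hf
  have c1 := co_tendsto_zero (σ := σ) m1 (P := fun n => (n : ℤ)) (Q := fun n => (n : ℤ) ^ 2) (by
    simpa using tendsto_natCast_atTop_atTop) k
  have c2 := co_tendsto_zero (σ := σ) m2 (P := fun n => -(n : ℤ)) (Q := fun n => -(n : ℤ) ^ 2) (by
    simpa using tendsto_natCast_atTop_atTop) k
  have c3 := co_tendsto_zero (σ := σ) m3 (P := fun n => 2 * (n : ℤ))
    (Q := fun n => 2 * (n : ℤ) ^ 2) (by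
      simpa [abs_mul] using tendsto_natCast_atTop_atTop.const_mul_atTop two_pos) k
  have h := (c1.add c2).add c3
  rw [add_zero, add_zero] at h
  refine h.congr fun n => ?_
  exact (co_add_three (remainder_eq σ κ Ω μ f n)
    (integrable_of_q43 (memLp_q43_of_two (memLp_mul_ee m1
      (φ := fun p => (n : ℤ) * p.2 - σ * ((n : ℤ) ^ 2 : ℤ) * p.1) (by fun_prop))))
    (integrable_of_q43 (memLp_q43_of_two (memLp_mul_ee m2
      (φ := fun p => (-(n : ℤ) : ℤ) * p.2 - σ * (-(n : ℤ) ^ 2 : ℤ) * p.1) (by fun_prop))))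
    (integrable_of_q43 (memLp_q43_of_two (memLp_mul_ee m3
      (φ := fun p => (2 * (n : ℤ) : ℤ) * p.2 - σ * (2 * (n : ℤ) ^ 2 : ℤ) * p.1)
      (by fun_prop)))) σ k).symm

end Remainder

/-! ### Comparison of the perturbed solutions with the gauged solution -/

lemma co_const_mul (σ : ℝ) (k : ℤ) (c : ℂ) (F : ℝ × ℝ → ℂ) (a b : ℝ) :
    co σ k (fun p => c * F p) a b = c * co σ k F a b := by
  unfold co
  rw [← integral_const_mul]
  simp only [mul_assoc]

lemma norm_add_pow_four_le (f E : ℂ) (hE : ‖E‖ = 1) (κ : ℝ) :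
    ‖f + κ * E‖ ^ 4 ≤ 8 * (‖f‖ ^ 4 + κ ^ 4) := by
  have h : ‖f + κ * E‖ ≤ ‖f‖ + |κ| := by
    refine (norm_add_le _ _).trans_eq ?_
    rw [norm_mul, hE, mul_one, Complex.norm_real, Real.norm_eq_abs]
  have h4 := pow_le_pow_left₀ (norm_nonneg _) h 4
  have hk : |κ| ^ 4 = κ ^ 4 := by
    rw [show 4 = 2 * 2 from rfl, pow_mul, pow_mul, sq_abs]
  have := add_pow_le (norm_nonneg f) (abs_nonneg κ) 4
  rw [hk] at this
  norm_num at this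
  linarith

/-- Initial data that differ by `κ e^{inx}`, `n → ∞`, produce solutions whose Fourier coefficients
at a fixed time converge to those of the solution `f` of the equation with the additional linear
term `θf`, `θ = 2γκ²`. -/
lemma comparison {σ γ T κ θ : ℝ} (hσ : σ = 1 ∨ σ = -1) (hT : 0 ≤ T) (hθ : θ = 2 * γ * κ ^ 2)
    {f : ℝ × ℝ → ℂ} (hf : DuhSol σ γ θ T f) {g : ℕ → ℝ × ℝ → ℂ}
    (hg : ∀ n, DuhSol σ γ 0 T (g n))
    (hdata : ∀ (n : ℕ) (k : ℤ), fc k (fun x => g n (0, x)) =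
      fc k (fun x => f (0, x)) + κ * fc k (fun x => ee (((n : ℤ) : ℝ) * x))) (k : ℤ) :
    Tendsto (fun n => fc k (fun x => g n (T, x))) atTop (nhds (fc k (fun x => f (T, x)))) := by
  have hσ2 : (σ : ℂ) * σ = 1 := by rcases hσ with h | h <;> simp [h]
  have hσ0 : (σ : ℂ) ≠ 0 := left_ne_zero_of_mul_eq_one hσ2
  set μ : ℝ → ℝ := fun s => (2 * π)⁻¹ * ∫ x, ‖f (s, x)‖ ^ 2 ∂mx with hμd
  have hμ : Continuous μ := continuous_const.mul hf.mass
  have hμf : ∀ s, ∫ x, ‖f (s, x)‖ ^ 2 ∂mx = 2 * π * μ s := fun s => by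
    have := Real.pi_pos
    rw [hμd]; field_simp
  -- the phase that the carrier picks up from the resonant self-interactions
  set m : ℝ → ℝ := fun s => σ * γ * (κ ^ 2 + 2 * μ s) with hmd
  have hm : Continuous m := by fun_prop
  obtain ⟨Ω, hΩ0, hΩ⟩ := exists_phase hm
  have hΩc : Continuous Ω := continuous_iff_continuousAt.2 fun s => (hΩ s).continuousAt
  set E : ℕ → ℝ × ℝ → ℂ := fun n => carrier σ Ω (n : ℤ) with hE
  have hEc : ∀ n, Continuous (E n) := fun n => continuous_carrier σ hΩc n
  have hE1 : ∀ n p, ‖E n p‖ = 1 := fun n p => norm_carrier σ Ω n p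
  set w : ℕ → ℝ × ℝ → ℂ := fun n p => f p + κ * E n p with hw
  set z : ℕ → ℝ × ℝ → ℂ := fun n p => g n p - w n p with hz
  set G : ℕ → ℝ × ℝ → ℂ := fun n p =>
    ((‖g n p‖ ^ 2 : ℝ) : ℂ) * g n p - ((‖w n p‖ ^ 2 : ℝ) : ℂ) * w n p with hG
  set R : ℕ → ℝ × ℝ → ℂ := fun n => remainder σ κ Ω μ f n with hR
  have wm : ∀ n, MemLp (w n) 4 (sm 0 T) := fun n =>
    hf.memLp.add ((memLp_continuous (hEc n) 4 0 T).const_mul (κ : ℂ))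
  have zm : ∀ n, MemLp (z n) 4 (sm 0 T) := fun n => (hg n).memLp.sub (wm n)
  have Gm : ∀ n, MemLp (G n) q43 (sm 0 T) := fun n =>
    (memLp_cubic (hg n).memLp).sub (memLp_cubic (wm n))
  have Rm : ∀ n, MemLp (R n) q43 (sm 0 T) := fun n => memLp_remainder hΩc hμ hf.memLp n
  have hmE : ∀ n, Continuous (fun p : ℝ × ℝ => (m p.1 : ℂ) * E n p) := fun n => by
    have := hEc n
    fun_prop
  -- pointwise identity behind the Duhamel formula for the difference `z`
  have key : ∀ n p, nl γ 0 (g n p) = γ * (G n p + R n p) + nl γ θ (f p) +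
      (κ * σ : ℂ) * ((m p.1 : ℂ) * E n p) := fun n p => by
    have hc := cubic_expansion (f p) (E n p) (hE1 n p) κ (μ p.1)
    have hRe : R n p = 2 * κ * (((‖f p‖ ^ 2 : ℝ) : ℂ) - μ p.1) * E n p +
      κ * (f p * f p) * (starRingEnd ℂ) (E n p) +
      κ ^ 2 * (starRingEnd ℂ) (f p) * (E n p * E n p) := rfl
    rw [← hRe] at hc
    have hGe : G n p = ((‖g n p‖ ^ 2 : ℝ) : ℂ) * g n p -
      ((‖f p + κ * E n p‖ ^ 2 : ℝ) : ℂ) * (f p + κ * E n p) := rfl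
    have hme : (m p.1 : ℂ) = σ * γ * (κ ^ 2 + 2 * μ p.1) := by rw [hmd]; push_cast; rfl
    rw [hGe, hc, hme, hθ]
    unfold nl
    push_cast
    linear_combination (-(κ : ℂ) * γ * (κ ^ 2 + 2 * μ p.1) * E n p) * hσ2
  have slE : ∀ (n : ℕ) (s : ℝ), MemLp (fun x => E n (s, x)) 2 mx := fun n s =>
    MemLp.of_bound (by
      have := hEc n
      exact (by fun_prop : Continuous fun x => E n (s, x)).aestronglyMeasurable) 1
      (ae_of_all _ fun x => (hE1 n _).le)
  have fcz : ∀ n (k : ℤ) s, fc k (fun x => z n (s, x)) = fc k (fun x => g n (s, x)) -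
      (fc k (fun x => f (s, x)) + κ * fc k (fun x => E n (s, x))) := fun n k s => by
    have i1 := ((hg n).slice s).integrable (by norm_num)
    have i2 := (hf.slice s).integrable (by norm_num)
    have i3 := ((slE n s).integrable (by norm_num)).const_mul (κ : ℂ)
    have := fc_sub k i1 (i2.add i3)
    have h2 := fc_add k i2 i3
    rw [fc_const_mul] at h2
    rw [← h2]
    exact this
  have hd : ∀ n, ∀ k : ℤ, ∀ t ∈ Set.Icc 0 T,
      ee (σ * k ^ 2 * t) * fc k (fun x => z n (t, x)) =
        Complex.I * σ * γ * co σ k (fun p => G n p + R n p) 0 t := fun n k t ht => by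
    have hmono := sm_mono (le_refl (0:ℝ)) ht.2
    have i1 : Integrable (fun p => G n p + R n p) (sm 0 t) :=
      ((integrable_of_q43 (Gm n)).add (integrable_of_q43 (Rm n))).mono_measure hmono
    have i2 := (integrable_of_q43 (memLp_nl γ θ hf.memLp)).mono_measure hmono
    have i3 := (memLp_continuous (hmE n) 1 0 t).integrable le_rfl
    have hco := co_add_three (key n) (i1.const_mul (γ : ℂ)) i2
      (i3.const_mul (κ * σ : ℂ)) σ k
    rw [co_const_mul, co_const_mul] at hco
    have d1 := (hg n).duh k t ht
    have d2 := hf.duh k t ht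
    have d3 := carrier_duhamel (σ := σ) hΩ0 hΩ hm k (n : ℤ) ht.1
    have d0 := hdata n k
    have hE0 : fc k (fun x => carrier σ Ω (n : ℤ) (0, x)) =
        fc k (fun x => ee (((n : ℤ) : ℝ) * x)) := by
      congr 1; funext x; unfold carrier; rw [hΩ0]; simp
    rw [hE0] at d3
    rw [fcz]
    linear_combination d1 - d2 - κ * d3 + d0 + Complex.I * σ * hco +
      Complex.I * κ * co σ k (fun p => (m p.1 : ℂ) * E n p) 0 t * hσ2
  have hWi : Integrable (fun p => 8 * (‖f p‖ ^ 4 + κ ^ 4)) (sm 0 T) :=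
    ((integrable_norm_four hf.memLp).add (integrable_const _)).const_mul 8
  obtain ⟨-, hGk⟩ := stability (γ := γ) hσ hT zm wm Gm (fun n p => by
      have h := norm_cubic_sub_le (w n p) (z n p)
      rwa [show w n p + z n p = g n p by simp [hz]] at h)
    (continuousOn_integral_strip hWi) (fun n a b ha hab hb => by
      have hi := hWi.mono_measure (sm_mono le_rfl hb)
      have hi' := hi.mono_measure (sm_mono ha le_rfl)
      rw [integral_sm_add ha hab hi, add_sub_cancel_left]
      refine integral_mono_ae
        ((integrable_norm_four (wm n)).mono_measure (sm_mono ha hb)) hi' (ae_of_all _ fun p => ?_)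
      exact norm_add_pow_four_le _ _ (hE1 n p) κ)
    Rm (fun ε hε => remainder_small hσ hT hΩc hμ hf.memLp hf.slice hμf hε) hd
  have hRk := remainder_co (σ := σ) (κ := κ) hΩc hμ hf.memLp k
  have hT' : T ∈ Set.Icc 0 T := ⟨hT, le_rfl⟩
  have hz0 : Tendsto (fun n => fc k (fun x => z n (T, x))) atTop (nhds 0) := by
    have h := ((hGk k).add hRk).const_mul (ee (-(σ * k ^ 2 * T)) * (Complex.I * σ * γ))
    rw [add_zero, mul_zero] at h
    refine h.congr fun n => ?_
    have e : co σ k (fun p => G n p + R n p) 0 T = co σ k (G n) 0 T + co σ k (R n) 0 T := by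
      have h1 := integrable_mul_ee (integrable_of_q43 (Gm n)) σ k
      have h2 := integrable_mul_ee (integrable_of_q43 (Rm n)) σ k
      unfold co
      rw [← integral_add h1 h2]
      simp only [add_mul]
    have h2 := hd n k T hT'
    rw [e] at h2
    rw [mul_assoc]
    change _ * (_ * (co σ k (G n) 0 T + co σ k (R n) 0 T)) = _
    rw [← h2, ← mul_assoc, ee_neg_mul, one_mul]
  have hlim := hz0.add_const (fc k (fun x => f (T, x)))
  rw [zero_add] at hlim
  refine hlim.congr' ?_
  filter_upwards [eventually_gt_atTop k.natAbs] with n hn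
  have hkn : k ≠ (n : ℤ) := by omega
  have hE0 : fc k (fun x => E n (T, x)) = 0 := by
    have := fc_carrier σ Ω k n T
    rw [if_neg hkn, mul_zero] at this
    exact this
  rw [fcz, hE0]
  ring

/-! ### Discontinuity of the flow-map -/

lemma integral_eq_mx (h : ℝ → ℂ) : ∫ x in (0:ℝ)..(2 * π), h x = ∫ x, h x ∂mx := by
  rw [intervalIntegral.integral_of_le (by positivity)]; rfl

lemma isPeriodicL2_of_memLp {v : ℝ → ℂ} (hp : Function.Periodic v (2 * π)) (hv : MemLp v 2 mx) :
    IsPeriodicL2 v :=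
  ⟨hp, hv.1, (memLp_two_iff_integrable_sq_norm hv.1).1 hv⟩

lemma periodic_ee (j : ℤ) : Function.Periodic (fun x => ee (j * x)) (2 * π) := fun x => by
  change ee (j * (x + 2 * π)) = ee (j * x)
  rw [mul_add, ee_add, ee_int_mul_two_pi, mul_one]

lemma memLp_ee (j : ℤ) : MemLp (fun x : ℝ => ee (j * x)) 2 mx :=
  MemLp.of_bound (by fun_prop : Continuous fun x : ℝ => ee (j * x)).aestronglyMeasurable 1
    (ae_of_all _ fun x => (norm_ee _).le)

/-- Adding a fixed multiple of `e^{inx}`, `n → ∞`, does not change the weak limit. -/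
lemma weak_perturbation {u0 : ℝ → ℂ} (h0 : IsPeriodicL2 u0) (κ : ℝ) :
    WeakTendstoL2 (fun n x => u0 x + κ * ee (((n : ℤ) : ℝ) * x)) u0 := by
  intro φ hφ
  simp only [integral_eq_mx]
  have m0 := memLp_of_periodicL2 h0
  have mφ := (memLp_of_periodicL2 hφ).star
  have i0 : Integrable (fun x => u0 x * (starRingEnd ℂ) (φ x)) mx := m0.integrable_mul mφ
  have i1 : ∀ n : ℕ, Integrable (fun x => ((κ : ℂ) * (starRingEnd ℂ) (φ x)) *
      ee (((n : ℤ) : ℝ) * x)) mx := fun n =>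
    (mφ.const_mul (κ : ℂ)).integrable_mul (memLp_ee n)
  have hl : Tendsto (fun n : ℕ => |((n : ℤ) : ℝ)|) atTop atTop := by
    simpa using tendsto_natCast_atTop_atTop
  have h := (riemann_lebesgue measurableSet_Ioc (s := Set.Ioc 0 (2 * π))
    (fun x => (κ : ℂ) * (starRingEnd ℂ) (φ x)) hl).const_add
      (∫ x, u0 x * (starRingEnd ℂ) (φ x) ∂mx)
  rw [add_zero] at h
  refine h.congr fun n => ?_
  change _ + ∫ x, _ ∂mx = _
  rw [← integral_add i0 (i1 n)]
  refine integral_congr_ae (ae_of_all _ fun x => ?_)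
  dsimp only
  ring

/-- A solution with nonzero initial data has a nonzero Fourier coefficient at every time: the
flow can be run backwards. -/
lemma exists_fc_ne_zero {γ σ T : ℝ} (hσ : σ = 1 ∨ σ = -1) (hT : 0 ≤ T) {u0 : ℝ → ℂ}
    (h0ne : ¬ (∀ᵐ x ∂(volume.restrict (Set.Ioc (0:ℝ) (2 * π))), u0 x = 0))
    {u : ℝ → ℝ → ℂ} (hu : IsGlobalSolution γ u u0) : ∃ k, fc k (u (σ * T)) ≠ 0 := by
  by_contra! hall
  have hσ' : -σ = 1 ∨ -σ = -1 := by rcases hσ with h | h <;> simp [h]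
  have hd := duhSol_of_sol hu hσ' 0 (σ * T) T
  have hz := duhSol_zero hσ' hT hd (fun k => by simpa using hall k)
  have h00 : ∀ k, fc k (u 0) = 0 := fun k => by simpa using hz k
  have := ae_eq_zero_of_fc (sol_slice hu 0) h00
  apply h0ne
  filter_upwards [this, hu.2.2.2.1] with x h1 h2
  rw [← h2, h1]; rfl

/-- There is an amplitude `κ` for which the additional phase `e^{2iγκ²t}` equals `-1`. -/
lemma exists_amplitude {γ σ T : ℝ} (hγ : γ ≠ 0) (hσ : σ = 1 ∨ σ = -1) (hT : 0 < T) :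
    ∃ κ : ℝ, ee (2 * γ * κ ^ 2 * σ * T) = -1 := by
  have hpi := Real.pi_pos
  have hγ' := abs_pos.2 hγ
  refine ⟨√(π / (2 * |γ| * T)), ?_⟩
  rw [Real.sq_sqrt (by positivity)]
  have e1 : ee π = -1 := Complex.exp_pi_mul_I
  have e2 : ee (-π) = -1 := by
    have := ee_neg_mul π
    rw [e1] at this
    linear_combination -this
  have h : 2 * γ * (π / (2 * |γ| * T)) * σ * T = π ∨
      2 * γ * (π / (2 * |γ| * T)) * σ * T = -π := by
    rcases hσ with rfl | rfl <;> rcases abs_choice γ with h | h <;> rw [h] <;> field_simp <;> simp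
  rcases h with h | h <;> rw [h] <;> assumption

/-- **Corollary (discontinuity of the flow-map for the weak `L²(𝕋)` topology).**
For every `γ ≠ 0`, `t ≠ 0` and every `u₀ ∈ L²(𝕋)` with `u₀ ≠ 0`, there is a sequence
`u_{0,n} ⇀ u₀` weakly in `L²(𝕋)` such that the corresponding solutions `u_n` of the
periodic cubic Schrödinger equation do not satisfy `u_n(t) → u(t)` in the sense of
distributions: some smooth `2π`-periodic test function `φ` witnesses the failure of
convergence of the pairings. -/
theorem flow_map_discontinuous_weak_topology
    (γ : ℝ) (hγ : γ ≠ 0) (t : ℝ) (ht : t ≠ 0)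
    (u0 : ℝ → ℂ) (h0 : IsPeriodicL2 u0)
    (h0ne : ¬ (∀ᵐ x ∂(volume.restrict (Set.Ioc (0:ℝ) (2 * π))), u0 x = 0)) :
    ∃ u0n : ℕ → ℝ → ℂ,
      (∀ n, IsPeriodicL2 (u0n n)) ∧
      WeakTendstoL2 u0n u0 ∧
      ∀ un : ℕ → ℝ → ℝ → ℂ, (∀ n, IsGlobalSolution γ (un n) (u0n n)) →
      ∀ u : ℝ → ℝ → ℂ, IsGlobalSolution γ u u0 →
        ∃ φ : ℝ → ℂ, ContDiff ℝ (⊤ : ℕ∞) φ ∧ Function.Periodic φ (2 * π) ∧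
          ¬ Tendsto (fun n => ∫ x in (0:ℝ)..(2 * π), un n t x * (starRingEnd ℂ) (φ x)) atTop
              (nhds (∫ x in (0:ℝ)..(2 * π), u t x * (starRingEnd ℂ) (φ x))) := by
  obtain ⟨σ, T, hσ, hT, rfl⟩ : ∃ σ T : ℝ, (σ = 1 ∨ σ = -1) ∧ 0 < T ∧ σ * T = t := by
    rcases lt_or_gt_of_ne ht with h | h
    · exact ⟨-1, -t, Or.inr rfl, by linarith, by ring⟩
    · exact ⟨1, t, Or.inl rfl, h, by ring⟩
  obtain ⟨κ, hκ⟩ := exists_amplitude hγ hσ hT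
  have m0 := memLp_of_periodicL2 h0
  refine ⟨fun n x => u0 x + κ * ee (((n : ℤ) : ℝ) * x), fun n => ?_, weak_perturbation h0 κ,
    fun un hun u hu => ?_⟩
  · refine isPeriodicL2_of_memLp (fun x => ?_) (m0.add ((memLp_ee n).const_mul (κ : ℂ)))
    have h := periodic_ee n x
    dsimp only at h ⊢
    rw [h, h0.1 x]
  · obtain ⟨k, hk⟩ := exists_fc_ne_zero hσ hT.le h0ne hu
    refine ⟨fun x => ee (k * x), ?_, periodic_ee k, fun hlim => hk ?_⟩
    · unfold ee
      have : ContDiff ℝ (⊤ : ℕ∞) fun x : ℝ => ((k * x : ℝ) : ℂ) :=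
        Complex.ofRealCLM.contDiff.comp (contDiff_const.mul contDiff_id)
      exact (this.mul contDiff_const).cexp
    · simp only [integral_eq_mx, conj_ee] at hlim
      have hcmp := comparison hσ hT.le rfl (duhSol_of_sol hu hσ (2 * γ * κ ^ 2) 0 T)
        (fun n => duhSol_of_sol (hun n) hσ 0 0 T) (κ := κ) (fun n j => ?_) k
      · simp only [zero_mul, ee_zero, one_mul, zero_add, fc_const_mul, hκ] at hcmp
        have := tendsto_nhds_unique hcmp hlim
        change -1 * fc k (u (σ * T)) = fc k (u (σ * T)) at this
        linear_combination (-1 / 2 : ℂ) * this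
      · simp only [zero_mul, ee_zero, one_mul, zero_add, mul_zero]
        rw [← fc_const_mul, ← fc_add j ((sol_slice hu 0).integrable (by norm_num))
          (((memLp_ee n).integrable (by norm_num)).const_mul (κ : ℂ))]
        refine fc_congr j ?_
        filter_upwards [(hun n).2.2.2.1, hu.2.2.2.1] with x h1 h2
        rw [h1, h2]
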